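/- arXiv:1302.3859 — 2 statements merged into one kernel-verified Lean document; each statement's English description precedes it below -/
import Mathlib

section
/- Let (F_0, a) be initial data for the completion problem in ℂ^d, let λ = λ↑(S_0), and fix a non-increasing vector μ ∈ Γ_d(a). Let C_a(F_0, μ) = {F = (F_0, G) ∈ C_a(F_0) : λ(S_G) = μ}. Then: (1) the set Λ(C_a(F_0,μ)) = {λ(S_F) : F ∈ C_a(F_0,μ)} is a convex subset of ℝ^d; (2) setting ν = λ + μ (entrywise sum of the increasing vector λ and the decreasing vector μ), the decreasing rearrangement ν↓ belongs to Λ(C_a(F_0,μ)) and ν↓ ≺ λ(S_F) for every F ∈ C_a(F_0,μ); (3) if F = (F_0, G) ∈ C_a(F_0,μ) satisfies λ(S_F) = ν↓, then the matrices S_0 and S_G commute. -/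
open Finset
open scoped ComplexOrder

noncomputable def sortAsc {m : ℕ} (x : Fin m → ℝ) : Fin m → ℝ :=
  x ∘ Tuple.sort x

noncomputable def sortDesc {m : ℕ} (x : Fin m → ℝ) : Fin m → ℝ :=
  fun i => (x ∘ Tuple.sort x) i.rev

noncomputable def pad {k : ℕ} (x : Fin k → ℝ) (m : ℕ) : Fin m → ℝ :=
  fun i => if h : (i : ℕ) < k then x ⟨i, h⟩ else 0

/-- `MajorizedBy x y` means `x ≺ y`. -/
def MajorizedBy {m : ℕ} (x y : Fin m → ℝ) : Prop :=
  (∀ j : Fin m, ∑ i ∈ Finset.Iic j, sortDesc x i ≤ ∑ i ∈ Finset.Iic j, sortDesc y i) ∧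
    ∑ i, x i = ∑ i, y i

/-- Majorization of vectors of possibly different lengths, padding with zeros. -/
def MajorizedByPad {k m : ℕ} (x : Fin k → ℝ) (y : Fin m → ℝ) : Prop :=
  MajorizedBy (pad x (max k m)) (pad y (max k m))

/-- The frame operator `S_F = ∑ f_i f_i^*` of a finite sequence of vectors in `ℂ^d`. -/
noncomputable def frameOp {d n : ℕ} (F : Fin n → Fin d → ℂ) : Matrix (Fin d) (Fin d) ℂ :=
  ∑ l, Matrix.vecMulVec (F l) (star (F l))

/-- The squared norm `‖g‖²` of a vector in `ℂ^d`. -/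
noncomputable def normSqVec {d : ℕ} (g : Fin d → ℂ) : ℝ :=
  ∑ i, Complex.normSq (g i)

open scoped Classical in
/-- Eigenvalues of a (Hermitian) matrix arranged in decreasing order. -/
noncomputable def eigsDesc {d : ℕ} (S : Matrix (Fin d) (Fin d) ℂ) : Fin d → ℝ :=
  if h : S.IsHermitian then sortDesc h.eigenvalues else 0

open scoped Classical in
/-- Eigenvalues of a (Hermitian) matrix arranged in increasing order. -/
noncomputable def eigsAsc {d : ℕ} (S : Matrix (Fin d) (Fin d) ℂ) : Fin d → ℝ :=
  if h : S.IsHermitian then sortAsc h.eigenvalues else 0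

/-- `Γ_d(a)`: non-increasing nonnegative vectors in `ℝ^d` majorizing `a`. -/
def Gamma {k : ℕ} (d : ℕ) (a : Fin k → ℝ) : Set (Fin d → ℝ) :=
  {μ | Antitone μ ∧ (∀ i, 0 ≤ μ i) ∧ MajorizedByPad a μ}

/-- The convex potential `P_f = tr f(S) = ∑ f(λ_i(S))`. -/
noncomputable def potential {d : ℕ} (f : ℝ → ℝ) (S : Matrix (Fin d) (Fin d) ℂ) : ℝ :=
  ∑ i, f (eigsDesc S i)

/-- Final averages `Q_{j,r} = (1/(r-j)) (∑_{i=j+1}^k a_i + ∑_{i=j+1}^r λ_i)` (1-based). -/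
noncomputable def finalAvg {d k : ℕ} (lam : Fin d → ℝ) (a : Fin k → ℝ) (j r : ℕ) : ℝ :=
  ((∑ i : Fin k, if j ≤ (i : ℕ) then a i else 0) +
      (∑ i : Fin d, if j ≤ (i : ℕ) ∧ (i : ℕ) < r then lam i else 0)) / ((r : ℝ) - (j : ℝ))

/-- Initial averages: `initAvg lam a lo hi = P_{lo+1,hi}` (1-based), i.e. the average of
`h_i = λ_i + a_i` over the (0-based) index window `[lo, hi)`. -/
noncomputable def initAvg {d k : ℕ} (lam : Fin d → ℝ) (a : Fin k → ℝ) (lo hi : ℕ) : ℝ :=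
  ((∑ i : Fin d, if lo ≤ (i : ℕ) ∧ (i : ℕ) < hi then lam i else 0) +
      (∑ i : Fin k, if lo ≤ (i : ℕ) ∧ (i : ℕ) < hi then a i else 0)) / ((hi : ℝ) - (lo : ℝ))

/-- 1-based access to a vector indexed by `Fin d`. -/
noncomputable def get1 {d : ℕ} (lam : Fin d → ℝ) (i : ℕ) : ℝ :=
  if h : i - 1 < d then lam ⟨i - 1, h⟩ else 0

/-- The index `s` is feasible for the pair `(λ, a)`: the unique vector
`ν_s = (c·1_{r-s}, λ_{r+1},…,λ_d)` determined by the truncated data satisfies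
`a^s ≺ ν_s - λ^s`. -/
def FeasibleIdx {d k : ℕ} (lam : Fin d → ℝ) (a : Fin k → ℝ) (s : ℕ) : Prop :=
  ∃ r : ℕ, ∃ c : ℝ, s < r ∧ r ≤ d ∧ 0 < c ∧
    (∀ i : Fin d, s ≤ (i : ℕ) → (i : ℕ) < r → lam i ≤ c) ∧
    (∀ hrd : r < d, c ≤ lam ⟨r, hrd⟩) ∧
    ((r : ℝ) - (s : ℝ)) * c =
      (∑ i : Fin d, if s ≤ (i : ℕ) ∧ (i : ℕ) < r then lam i else 0) +
        (∑ i : Fin k, if s ≤ (i : ℕ) then a i else 0) ∧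
    MajorizedByPad (fun i : Fin (k - s) => a ⟨s + (i : ℕ), by have := i.isLt; omega⟩)
      (fun i : Fin (d - s) =>
        if s + (i : ℕ) < r then c - lam ⟨s + (i : ℕ), by have := i.isLt; omega⟩ else 0)

/-!
A positive semidefinite `S` is the frame operator of vectors of square norms `a` precisely when
`a ≺ λ(S)` (Schur–Horn), so for `μ ∈ Γ_d(a)` the spectra in question are those of `S₀ + B` with `B`
Hermitian of spectrum `μ`. That `λ↑(S₀) + μ` is attained and minimal for majorization is Lidskii's
theorem. Where it is attained, `tr (S₀ + B)²` and hence `tr S₀B` is minimal over the unitary orbit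
of `B`, and the first variation along skew-adjoint directions gives `S₀B = BS₀`.

For convexity, write `S₀ + B = C` as `S₀ + B + (-C) = 0` and shift the three spectra to be
nonnegative: the question is when Hermitian matrices with given nonnegative spectra have sum
`κ • 1`. By Abel summation each of them is a combination of the projections onto the members of a
flag, with the gaps of its spectrum as weights. Taking traces against projections, a solution makes
its family of flags semistable: a system of rank inequalities that is linear in the spectra. These
inequalities hold a fortiori for a single family `H` that does not depend on the spectra, since
ranks are lower semicontinuous and the images of `H` under the field endomorphisms of `ℂ`, which
preserve ranks, are dense. Conversely, if `H` is semistable then its Kempf–Ness functional on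
positive definite matrices is bounded below, so that descent steps must make its gradient small. In
a suitable basis the gradient is the deviation from `κ • 1` for a family of flags of the required
spectra, and compactness of the unitary group yields an exact solution.
-/

namespace FrameCompletion

open Matrix

/-! ### Rearrangements -/

section Sorting

variable {m : ℕ} {x y : Fin m → ℝ}

lemma sortDesc_antitone (x : Fin m → ℝ) : Antitone (sortDesc x) :=
  fun _ _ hij => Tuple.monotone_sort x (Fin.rev_le_rev.mpr hij)

lemma sortAsc_eq_sortDesc_rev (x : Fin m → ℝ) (i : Fin m) : sortAsc x i = sortDesc x i.rev := by
  simp [sortDesc, sortAsc]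

lemma exists_perm_sortDesc_eq (x : Fin m → ℝ) : ∃ σ : Equiv.Perm (Fin m), sortDesc x = x ∘ σ :=
  ⟨Fin.revPerm.trans (Tuple.sort x), by ext i; simp [sortDesc]⟩

lemma sum_sortDesc (x : Fin m → ℝ) : ∑ i, sortDesc x i = ∑ i, x i := by
  obtain ⟨σ, hσ⟩ := exists_perm_sortDesc_eq x
  rw [hσ]
  exact Equiv.sum_comp σ x

lemma map_sortDesc (x : Fin m → ℝ) :
    Multiset.map (sortDesc x) univ.val = Multiset.map x univ.val := by
  obtain ⟨σ, hσ⟩ := exists_perm_sortDesc_eq x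
  rw [hσ, ← Multiset.map_map]
  simp

lemma eq_of_antitone_of_map_eq (hx : Antitone x) (hy : Antitone y)
    (h : Multiset.map x univ.val = Multiset.map y univ.val) : x = y := by
  have hperm : (List.ofFn x).Perm (List.ofFn y) := by
    simpa [← Multiset.coe_eq_coe, Fin.univ_val_map] using h
  exact List.ofFn_injective <|
    hperm.eq_of_pairwise' hx.sortedGE_ofFn.pairwise hy.sortedGE_ofFn.pairwise

lemma sortDesc_congr (h : Multiset.map x univ.val = Multiset.map y univ.val) :
    sortDesc x = sortDesc y :=
  eq_of_antitone_of_map_eq (sortDesc_antitone x) (sortDesc_antitone y)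
    (by simp only [map_sortDesc, h])

lemma sortDesc_eq_self (hx : Antitone x) : sortDesc x = x :=
  eq_of_antitone_of_map_eq (sortDesc_antitone x) hx (map_sortDesc x)

lemma majorizedBy_sortDesc_left_iff :
    MajorizedBy (sortDesc x) y ↔ MajorizedBy x y := by
  simp only [MajorizedBy, sortDesc_eq_self (sortDesc_antitone x), sum_sortDesc]

end Sorting

/-! ### Unitary conjugates of real diagonal matrices -/

/-- The matrix `U diag(x) Uᴴ` with real `x`; for unitary `U` this is the general Hermitian matrix
with eigenvalues `x`. -/
noncomputable def conjDiag {m n : Type*} [Fintype n] [DecidableEq n] (U : Matrix m n ℂ)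
    (x : n → ℝ) : Matrix m m ℂ :=
  U * diagonal (fun i => (x i : ℂ)) * Uᴴ

section ConjDiag

variable {l m n : Type*} [Fintype n] [DecidableEq n]

lemma conjDiag_apply (U : Matrix m n ℂ) (x : n → ℝ) (p q : m) :
    conjDiag U x p q = ∑ i, U p i * x i * star (U q i) := by
  simp [conjDiag, Matrix.mul_apply, diagonal_apply]

lemma conjDiag_isHermitian (U : Matrix m n ℂ) (x : n → ℝ) : (conjDiag U x).IsHermitian := by
  refine isHermitian_mul_mul_conjTranspose U ?_
  simp [IsHermitian, diagonal_conjTranspose, Pi.star_def]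

lemma conjDiag_posSemidef [Finite m] (U : Matrix m n ℂ) {x : n → ℝ} (hx : 0 ≤ x) :
    (conjDiag U x).PosSemidef :=
  (PosSemidef.diagonal fun i => Complex.zero_le_real.mpr (hx i)).mul_mul_conjTranspose_same U

lemma conjDiag_add (U : Matrix m n ℂ) (x y : n → ℝ) :
    conjDiag U (x + y) = conjDiag U x + conjDiag U y := by
  simp [conjDiag, ← Matrix.mul_add, ← Matrix.add_mul, diagonal_add]

lemma conjDiag_smul (U : Matrix m n ℂ) (c : ℝ) (x : n → ℝ) :
    conjDiag U (c • x) = (c : ℂ) • conjDiag U x := by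
  rw [conjDiag, conjDiag, ← Matrix.smul_mul, ← Matrix.mul_smul, ← diagonal_smul]
  simp [Pi.smul_def]

lemma conjDiag_sub (U : Matrix m n ℂ) (x y : n → ℝ) :
    conjDiag U (x - y) = conjDiag U x - conjDiag U y := by
  simp [conjDiag, ← Matrix.mul_sub, ← Matrix.sub_mul, diagonal_sub]

lemma mul_conjDiag_mul [Fintype m] (V : Matrix l m ℂ) (U : Matrix m n ℂ) (x : n → ℝ) :
    V * conjDiag U x * Vᴴ = conjDiag (V * U) x := by
  simp only [conjDiag, conjTranspose_mul, Matrix.mul_assoc]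

lemma conjDiag_one (x : n → ℝ) : conjDiag 1 x = diagonal (fun i => (x i : ℂ)) := by
  simp [conjDiag]

lemma conjDiag_perm (σ : Equiv.Perm n) (x : n → ℝ) :
    conjDiag (σ.permMatrix ℂ) x = conjDiag 1 (x ∘ σ) := by
  ext i j
  obtain rfl | hij := eq_or_ne i j <;>
  simp [*, conjDiag, conjTranspose_permMatrix, Equiv.Perm.permMatrix, PEquiv.toMatrix_toPEquiv_mul,
    PEquiv.mul_toMatrix_toPEquiv, Equiv.Perm.inv_def]

lemma permMatrix_mem_unitaryGroup (σ : Equiv.Perm n) :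
    σ.permMatrix ℂ ∈ unitaryGroup n ℂ := by
  rw [mem_unitaryGroup_iff, star_eq_conjTranspose, conjTranspose_permMatrix, ← permMatrix_mul]
  simp

lemma exists_conjDiag_comp_perm {U : Matrix n n ℂ} (hU : U ∈ unitaryGroup n ℂ) (x : n → ℝ)
    (σ : Equiv.Perm n) : ∃ V ∈ unitaryGroup n ℂ, conjDiag V (x ∘ σ) = conjDiag U x := by
  refine ⟨U * σ⁻¹.permMatrix ℂ, mul_mem hU (permMatrix_mem_unitaryGroup _), ?_⟩
  rw [← mul_conjDiag_mul, conjDiag_perm, mul_conjDiag_mul, Matrix.mul_one]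
  congr 1
  ext i
  simp

variable {U : Matrix n n ℂ}

lemma conjDiag_const (hU : U ∈ unitaryGroup n ℂ) (c : ℝ) :
    conjDiag U (fun _ => c) = (c : ℂ) • 1 := by
  rw [conjDiag, ← smul_one_eq_diagonal, Matrix.mul_smul, Matrix.mul_one, Matrix.smul_mul,
    ← star_eq_conjTranspose, mem_unitaryGroup_iff.mp hU]

lemma trace_conjDiag (hU : U ∈ unitaryGroup n ℂ) (x : n → ℝ) :
    (conjDiag U x).trace = ∑ i, (x i : ℂ) := by
  rw [conjDiag, trace_mul_cycle, ← star_eq_conjTranspose, mem_unitaryGroup_iff'.mp hU,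
    Matrix.one_mul, trace_diagonal]

lemma det_conjDiag (hU : U ∈ unitaryGroup n ℂ) (x : n → ℝ) :
    (conjDiag U x).det = ∏ i, (x i : ℂ) := by
  rw [conjDiag, det_mul_comm, ← Matrix.mul_assoc, ← star_eq_conjTranspose,
    mem_unitaryGroup_iff'.mp hU, Matrix.one_mul, det_diagonal]

lemma exists_conjDiag_eq {S : Matrix n n ℂ} (hS : S.IsHermitian) :
    ∃ U ∈ unitaryGroup n ℂ, conjDiag U hS.eigenvalues = S := by
  refine ⟨hS.eigenvectorUnitary, hS.eigenvectorUnitary.2, ?_⟩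
  conv_rhs => rw [hS.spectral_theorem, Unitary.conjStarAlgAut_apply]
  rfl

end ConjDiag

/-! ### Ordered eigenvalues -/

section Eigs

variable {d : ℕ} {U S : Matrix (Fin d) (Fin d) ℂ}

lemma eigsDesc_antitone (S : Matrix (Fin d) (Fin d) ℂ) : Antitone (eigsDesc S) := by
  unfold eigsDesc
  split
  · exact sortDesc_antitone _
  · exact fun _ _ _ => le_rfl

lemma eigsAsc_eq_eigsDesc_rev (S : Matrix (Fin d) (Fin d) ℂ) (i : Fin d) :
    eigsAsc S i = eigsDesc S i.rev := by
  unfold eigsDesc eigsAsc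
  split
  · exact sortAsc_eq_sortDesc_rev _ _
  · rfl

lemma exists_conjDiag_eigsDesc_eq (hS : S.IsHermitian) :
    ∃ U ∈ unitaryGroup (Fin d) ℂ, conjDiag U (eigsDesc S) = S := by
  obtain ⟨V, hV, hVS⟩ := exists_conjDiag_eq hS
  obtain ⟨σ, hσ⟩ := exists_perm_sortDesc_eq hS.eigenvalues
  obtain ⟨U, hU, hUV⟩ := exists_conjDiag_comp_perm hV hS.eigenvalues σ
  exact ⟨U, hU, by rw [eigsDesc, dif_pos hS, hσ, hUV, hVS]⟩

lemma roots_charpoly_conjDiag {n : Type*} [Fintype n] [DecidableEq n] {U : Matrix n n ℂ}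
    (hU : U ∈ unitaryGroup n ℂ) (x : n → ℝ) :
    (conjDiag U x).charpoly.roots = Multiset.map (fun i => (x i : ℂ)) univ.val := by
  rw [conjDiag, charpoly_mul_comm, ← Matrix.mul_assoc, ← star_eq_conjTranspose,
    mem_unitaryGroup_iff'.mp hU, Matrix.one_mul, charpoly_diagonal, Polynomial.roots_prod]
  · simp
  · simp [Finset.prod_ne_zero_iff, Polynomial.X_sub_C_ne_zero]

lemma eigsDesc_conjDiag (hU : U ∈ unitaryGroup (Fin d) ℂ) (x : Fin d → ℝ) :
    eigsDesc (conjDiag U x) = sortDesc x := by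
  have hH := conjDiag_isHermitian U x
  rw [eigsDesc, dif_pos hH]
  refine sortDesc_congr (Multiset.map_injective Complex.ofReal_injective ?_)
  have hroots := hH.roots_charpoly_eq_eigenvalues
  rw [roots_charpoly_conjDiag hU] at hroots
  simpa [Multiset.map_map, Function.comp_def] using hroots.symm

lemma eigsDesc_nonneg (hS : S.PosSemidef) : 0 ≤ eigsDesc S := by
  obtain ⟨σ, hσ⟩ := exists_perm_sortDesc_eq hS.1.eigenvalues
  intro i
  rw [eigsDesc, dif_pos hS.1, hσ]
  exact hS.eigenvalues_nonneg _

lemma eigsDesc_pos (hS : S.PosDef) (i : Fin d) : 0 < eigsDesc S i := by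
  obtain ⟨σ, hσ⟩ := exists_perm_sortDesc_eq hS.isHermitian.eigenvalues
  rw [eigsDesc, dif_pos hS.isHermitian, hσ]
  exact hS.eigenvalues_pos _

lemma trace_eq_sum_eigsDesc (hS : S.IsHermitian) : S.trace = ∑ i, (eigsDesc S i : ℂ) := by
  obtain ⟨U, hU, hUS⟩ := exists_conjDiag_eigsDesc_eq hS
  conv_lhs => rw [← hUS, trace_conjDiag hU]

end Eigs

/-! ### The Schur–Horn theorem -/

section Transfer

variable {m : ℕ} {a b : Fin m → ℝ}

lemma exists_surplus_before_deficit (hne : a ≠ b)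
    (hle : ∀ j, ∑ i ∈ Iic j, a i ≤ ∑ i ∈ Iic j, b i) (hsum : ∑ i, a i = ∑ i, b i) :
    ∃ i j, i < j ∧ a i < b i ∧ b j < a j ∧ ∀ l < j, a l ≤ b l := by
  have hdeficit : ({j | b j < a j} : Set (Fin m)).Nonempty := by
    by_contra! hempty
    have hab : ∀ i, a i ≤ b i := fun i => not_lt.mp fun hi => hempty.subset hi
    exact hne <| funext fun i =>
      (sum_eq_sum_iff_of_le fun i _ => hab i).mp hsum i (mem_univ i)
  obtain ⟨j, hj, hmin⟩ := (Set.toFinite {j | b j < a j}).exists_minimal hdeficit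
  have hbefore : ∀ l < j, a l ≤ b l := fun l hl => not_lt.mp fun h => hl.not_ge (hmin h hl.le)
  obtain ⟨i, hi, hlt⟩ := exists_lt_of_sum_lt (s := Iio j) (f := a) (g := b) (by
    have h := hle j
    rw [← Iio_insert, sum_insert (by simp), sum_insert (by simp)] at h
    have : b j < a j := hj
    linarith)
  exact ⟨i, j, mem_Iio.mp hi, hlt, hj, hbefore⟩

lemma sum_transfer (b : Fin m → ℝ) (i j : Fin m) (δ : ℝ) (s : Finset (Fin m)) :
    ∑ l ∈ s, (b - Pi.single i δ + Pi.single j δ : Fin m → ℝ) l =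
      ∑ l ∈ s, b l - (if i ∈ s then δ else 0) + if j ∈ s then δ else 0 := by
  simp only [Pi.add_apply, Pi.sub_apply, sum_add_distrib, sum_sub_distrib]
  simp only [Pi.single_apply, sum_ite_eq']

lemma prefix_sum_le_transfer {i j : Fin m} {δ : ℝ} (hij : i < j) (hδ : δ ≤ b i - a i)
    (hle : ∀ l, ∑ p ∈ Iic l, a p ≤ ∑ p ∈ Iic l, b p) (hbefore : ∀ l < j, a l ≤ b l) (l : Fin m) :
    ∑ p ∈ Iic l, a p ≤ ∑ p ∈ Iic l, (b - Pi.single i δ + Pi.single j δ : Fin m → ℝ) p := by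
  rw [sum_transfer]
  by_cases hjl : j ≤ l
  · simpa [hjl, hij.le.trans hjl] using hle l
  by_cases hil : i ≤ l
  · have hgain : b i - a i ≤ ∑ p ∈ Iic l, (b p - a p) :=
      single_le_sum (f := fun p => b p - a p)
        (fun p hp => sub_nonneg.mpr (hbefore p ((mem_Iic.mp hp).trans_lt (not_le.mp hjl))))
        (mem_Iic.mpr hil)
    rw [sum_sub_distrib] at hgain
    simp only [mem_Iic, hil, hjl, if_true, if_false, add_zero]
    linarith
  · simpa [hil, hjl] using hle l

lemma card_ne_transfer_lt {i j : Fin m} (hij : i ≠ j) (hi : a i < b i) (hj : b j < a j) :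
    #{l | a l ≠ (b - Pi.single i (min (b i - a i) (a j - b j)) +
      Pi.single j (min (b i - a i) (a j - b j)) : Fin m → ℝ) l} < #{l | a l ≠ b l} := by
  refine card_lt_card ((ssubset_iff_of_subset fun l hl => ?_).mpr ?_)
  · simp only [mem_filter_univ] at hl ⊢
    obtain rfl | hli := eq_or_ne l i
    · exact hi.ne
    obtain rfl | hlj := eq_or_ne l j
    · exact hj.ne'
    · simpa [hli, hlj] using hl
  · obtain h | h := min_choice (b i - a i) (a j - b j) <;> rw [h]
    · exact ⟨i, by simpa using hi.ne, by simp [hij]⟩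
    · exact ⟨j, by simpa using hj.ne', by simp [hij.symm]⟩

/-- Muirhead's lemma: moving mass from larger to smaller coordinates reaches every antitone vector
with dominated partial sums, and each move can be chosen to make one more coordinate correct. -/
lemma mem_of_prefix_sum_le {s : Set (Fin m → ℝ)}
    (hs : ∀ b ∈ s, ∀ i j, i ≠ j → ∀ δ ∈ Set.Icc 0 (b i - b j),
      b - Pi.single i δ + Pi.single j δ ∈ s)
    (ha : Antitone a) (hb : b ∈ s) (hle : ∀ j, ∑ i ∈ Iic j, a i ≤ ∑ i ∈ Iic j, b i)
    (hsum : ∑ i, a i = ∑ i, b i) : a ∈ s := by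
  induction hN : #{i | a i ≠ b i} using Nat.strong_induction_on generalizing b with
  | _ N ih =>
  obtain rfl | hne := eq_or_ne a b
  · exact hb
  obtain ⟨i, j, hij, hi, hj, hbefore⟩ := exists_surplus_before_deficit hne hle hsum
  have hδ : min (b i - a i) (a j - b j) ∈ Set.Icc 0 (b i - b j) :=
    ⟨le_min (by linarith) (by linarith), (min_le_left _ _).trans (by linarith [ha hij.le])⟩
  refine ih _ (hN ▸ card_ne_transfer_lt hij.ne hi hj) (hs b hb i j hij.ne _ hδ)
    (prefix_sum_le_transfer hij (min_le_left _ _) hle hbefore) ?_ rfl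
  rw [sum_transfer]
  simpa using hsum

end Transfer

section SchurHorn

variable {n : Type*} [DecidableEq n]

/-- The reflection `1 - 2 v vᵀ` in the hyperplane orthogonal to a real unit vector `v`. -/
noncomputable def reflectionMatrix (v : n → ℝ) : Matrix n n ℂ :=
  (1 - (2 : ℝ) • vecMulVec v v).map Complex.ofReal

lemma reflectionMatrix_apply (v : n → ℝ) (p q : n) :
    reflectionMatrix v p q = (((1 : Matrix n n ℝ) p q - 2 * (v p * v q) : ℝ) : ℂ) := by
  simp [reflectionMatrix, vecMulVec_apply]

lemma reflectionMatrix_mem_unitaryGroup [Fintype n] {v : n → ℝ} (hv : v ⬝ᵥ v = 1) :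
    reflectionMatrix v ∈ unitaryGroup n ℂ := by
  have hself : star (reflectionMatrix v) = reflectionMatrix v := by
    ext p q
    simp [star_apply, reflectionMatrix_apply, one_apply, eq_comm, mul_comm]
  have hreal : (1 - (2 : ℝ) • vecMulVec v v) * (1 - (2 : ℝ) • vecMulVec v v) = 1 := by
    simp only [Matrix.sub_mul, Matrix.mul_sub, Matrix.one_mul, Matrix.mul_one,
      Matrix.smul_mul, Matrix.mul_smul, vecMulVec_mul_vecMulVec, hv, one_smul]
    module
  rw [mem_unitaryGroup_iff, hself]
  have := congrArg Complex.ofRealHom.mapMatrix hreal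
  rwa [map_mul, map_one] at this

/-- The reflections in this path join, up to a diagonal unitary, the identity (at `θ = 0`) to the
transposition of the `i`-th and `j`-th coordinates (at `θ = π / 4`). -/
noncomputable def swapPath (i j : n) (θ : ℝ) : Matrix n n ℂ :=
  reflectionMatrix (Pi.single i (Real.sin θ) - Pi.single j (Real.cos θ))

lemma swapPath_apply (i j : n) (θ : ℝ) (p q : n) :
    swapPath i j θ p q = (((1 : Matrix n n ℝ) p q -
      2 * ((Pi.single i (Real.sin θ) - Pi.single j (Real.cos θ) : n → ℝ) p *
        (Pi.single i (Real.sin θ) - Pi.single j (Real.cos θ) : n → ℝ) q) : ℝ) : ℂ) :=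
  reflectionMatrix_apply _ _ _

lemma continuous_swapPath (i j : n) : Continuous (swapPath i j) := by
  refine continuous_matrix fun p q => ?_
  simp only [swapPath_apply, Pi.sub_apply, Pi.single_apply]
  split_ifs <;> fun_prop

lemma swapPath_row_of_ne {i j a : n} (θ : ℝ) (hi : a ≠ i) (hj : a ≠ j) :
    swapPath i j θ a = Pi.single a 1 := by
  ext r
  simp [swapPath_apply, hi, hj, one_apply, Pi.single_apply, eq_comm, apply_ite Complex.ofReal]

lemma swapPath_zero_row {i j : n} (hij : i ≠ j) : swapPath i j 0 i = Pi.single i 1 := by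
  ext r
  simp [swapPath_apply, hij, one_apply, Pi.single_apply, eq_comm, apply_ite Complex.ofReal]

lemma swapPath_pi_div_four_row {i j : n} (hij : i ≠ j) :
    swapPath i j (Real.pi / 4) i = Pi.single j 1 := by
  have hsqrt : (Real.sqrt 2 : ℂ) * Real.sqrt 2 = 2 := by
    exact_mod_cast Real.mul_self_sqrt zero_le_two
  ext r
  obtain rfl | hri := eq_or_ne r i
  · simp [swapPath_apply, hij]
    linear_combination (-1 / 2 : ℂ) * hsqrt
  obtain rfl | hrj := eq_or_ne r j
  · simp [swapPath_apply, hij, hij.symm]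
    linear_combination (1 / 2 : ℂ) * hsqrt
  · simp [swapPath_apply, hij, hri, hrj, hri.symm]

variable [Fintype n]

lemma swapPath_mem_unitaryGroup {i j : n} (hij : i ≠ j) (θ : ℝ) :
    swapPath i j θ ∈ unitaryGroup n ℂ := by
  refine reflectionMatrix_mem_unitaryGroup ?_
  simp only [dotProduct_sub, dotProduct_single, Pi.sub_apply, Pi.single_eq_same,
    Pi.single_eq_of_ne hij, Pi.single_eq_of_ne hij.symm]
  linear_combination Real.sin_sq_add_cos_sq θ

lemma mul_mul_conjTranspose_apply_self {H Y : Matrix n n ℂ} {p q : n}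
    (hrow : H p = Pi.single q 1) : (H * Y * Hᴴ) p p = Y q q := by
  have : (H * Y * Hᴴ) p p = (H p ᵥ* Y) ⬝ᵥ star (H p) := rfl
  rw [this, hrow]
  simp [Pi.star_single]

lemma trace_unitary_conj {H : Matrix n n ℂ} (hH : H ∈ unitaryGroup n ℂ) (Y : Matrix n n ℂ) :
    (H * Y * Hᴴ).trace = Y.trace := by
  rw [trace_mul_cycle, ← star_eq_conjTranspose, mem_unitaryGroup_iff'.mp hH, Matrix.one_mul]

/-- Along `swapPath i j` only the `i`-th and `j`-th diagonal entries change, they keep their sum,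
and the `i`-th one moves continuously from `x i` to `x j`. -/
lemma exists_unitary_diag_transfer {Y : Matrix n n ℂ} {x : n → ℝ} (hY : ∀ a, Y a a = x a) {i j : n}
    (hij : i ≠ j) {δ : ℝ} (hδ : δ ∈ Set.Icc 0 (x i - x j)) :
    ∃ H ∈ unitaryGroup n ℂ, ∀ a, ((H * Y * Hᴴ) a a).re =
      (x - Pi.single i δ + Pi.single j δ : n → ℝ) a := by
  have hcont : Continuous fun θ => ((swapPath i j θ * Y * (swapPath i j θ)ᴴ) i i).re := by
    have := continuous_swapPath i j
    have hconj : Continuous fun θ => swapPath i j θ * Y * (swapPath i j θ)ᴴ := by fun_prop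
    exact Complex.continuous_re.comp (hconj.matrix_elem i i)
  obtain ⟨θ, -, hθ⟩ := intermediate_value_Icc' (by positivity : 0 ≤ Real.pi / 4)
    hcont.continuousOn (show x i - δ ∈ _ by
      simp only [mul_mul_conjTranspose_apply_self (swapPath_zero_row hij),
        mul_mul_conjTranspose_apply_self (swapPath_pi_div_four_row hij), hY, Complex.ofReal_re]
      exact ⟨by linarith [hδ.2], by linarith [hδ.1]⟩)
  have hother : ∀ a, a ≠ i → a ≠ j →
      ((swapPath i j θ * Y * (swapPath i j θ)ᴴ) a a).re = x a := fun a hai haj => by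
    rw [mul_mul_conjTranspose_apply_self (swapPath_row_of_ne θ hai haj), hY, Complex.ofReal_re]
  have htrace := congrArg Complex.re (trace_unitary_conj (swapPath_mem_unitaryGroup hij θ) Y)
  refine ⟨swapPath i j θ, swapPath_mem_unitaryGroup hij θ, fun a => ?_⟩
  obtain rfl | hai := eq_or_ne a i
  · simpa [hij] using hθ
  obtain rfl | haj := eq_or_ne a j
  · have hrest : ∀ f : n → ℝ, ∑ p, f p = f i + f a + ∑ p ∈ univ \ {i, a}, f p := fun f => by
      rw [← sum_sdiff (subset_univ {i, a}), sum_pair hij, add_comm]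
    simp only [trace, diag_apply, Complex.re_sum, hrest, hY, Complex.ofReal_re, hθ] at htrace
    rw [sum_congr rfl fun p hp => hother p (by grind) (by grind)] at htrace
    simp only [Pi.add_apply, Pi.sub_apply, Pi.single_eq_same, Pi.single_eq_of_ne hij.symm]
    linarith
  · simpa [hai, haj] using hother a hai haj

theorem exists_diag_conjDiag_eq_of_majorizedBy {m : ℕ} {a b : Fin m → ℝ} (h : MajorizedBy a b) :
    ∃ U ∈ unitaryGroup (Fin m) ℂ, ∀ i, conjDiag U b i i = a i := by
  let s : Set (Fin m → ℝ) := {x | ∃ U ∈ unitaryGroup (Fin m) ℂ, ∀ i, conjDiag U b i i = x i}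
  have hperm : ∀ (σ : Equiv.Perm (Fin m)) (x : Fin m → ℝ), x ∈ s → x ∘ σ ∈ s := by
    rintro σ x ⟨U, hU, hx⟩
    refine ⟨σ.permMatrix ℂ * U, mul_mem (permMatrix_mem_unitaryGroup σ) hU, fun i => ?_⟩
    rw [← mul_conjDiag_mul, mul_mul_conjTranspose_apply_self (q := σ i) _, hx, Function.comp]
    ext j
    simp [Equiv.Perm.permMatrix, PEquiv.toMatrix_apply, Pi.single_apply, eq_comm]
  have htransfer : ∀ x ∈ s, ∀ i j, i ≠ j → ∀ δ ∈ Set.Icc 0 (x i - x j),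
      x - Pi.single i δ + Pi.single j δ ∈ s := by
    rintro x ⟨U, hU, hx⟩ i j hij δ hδ
    obtain ⟨H, hH, hdiag⟩ := exists_unitary_diag_transfer hx hij hδ
    refine ⟨H * U, mul_mem hH hU, fun p => ?_⟩
    rw [← hdiag p, mul_conjDiag_mul]
    exact ((conjDiag_isHermitian _ b).coe_re_apply_self p).symm
  obtain ⟨σ, hσ⟩ := exists_perm_sortDesc_eq a
  obtain ⟨τ, hτ⟩ := exists_perm_sortDesc_eq b
  have hb : b ∈ s := ⟨1, one_mem _, fun i => by simp [conjDiag_one]⟩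
  have ha : sortDesc a ∈ s :=
    mem_of_prefix_sum_le htransfer (sortDesc_antitone a) (hτ ▸ hperm τ b hb) h.1
      (by rw [sum_sortDesc, sum_sortDesc, h.2])
  have := hperm σ⁻¹ _ ha
  rwa [hσ, Function.comp_assoc, ← Equiv.Perm.coe_mul, mul_inv_cancel, Equiv.Perm.coe_one,
    Function.comp_id] at this

end SchurHorn

/-! ### Frames with prescribed norms and frame operator -/

section Frames

variable {d k m : ℕ}

lemma posSemidef_frameOp (F : Fin k → Fin d → ℂ) : (frameOp F).PosSemidef :=
  posSemidef_sum _ fun _ _ => posSemidef_vecMulVec_self_star _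

lemma frameOp_columns (Z : Matrix (Fin d) (Fin m) ℂ) : frameOp Z.col = Z * Zᴴ := by
  ext i j
  simp [frameOp, Matrix.mul_apply, Matrix.sum_apply, vecMulVec_apply]

lemma normSqVec_column (Z : Matrix (Fin d) (Fin m) ℂ) (l : Fin m) :
    (normSqVec (Z.col l) : ℂ) = (Zᴴ * Z) l l := by
  simp [normSqVec, Matrix.mul_apply, Complex.normSq_eq_conj_mul_self]

lemma eq_zero_of_normSqVec_eq_zero {g : Fin d → ℂ} (hg : normSqVec g = 0) : g = 0 := by
  ext r
  simpa using (sum_eq_zero_iff_of_nonneg fun _ _ => Complex.normSq_nonneg _).mp hg r (mem_univ r)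

lemma exists_isometry_conjDiag_one_pad (hdm : d ≤ m) (μ : Fin d → ℝ) :
    ∃ J : Matrix (Fin m) (Fin d) ℂ, Jᴴ * J = 1 ∧ conjDiag J μ = conjDiag 1 (pad μ m) := by
  refine ⟨(1 : Matrix (Fin m) (Fin m) ℂ).submatrix id (Fin.castLE hdm), ?_, ?_⟩
  · rw [conjTranspose_submatrix, ← submatrix_mul _ _ _ _ _ Function.bijective_id,
      conjTranspose_one, Matrix.one_mul, submatrix_one _ (Fin.castLE_injective hdm)]
  · ext p q
    simp only [conjDiag_apply, submatrix_apply, id, one_apply, pad]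
    by_cases hp : (p : ℕ) < d
    · obtain ⟨i, rfl⟩ : ∃ i, p = Fin.castLE hdm i := ⟨⟨p, hp⟩, rfl⟩
      rw [sum_eq_single i (by simp +contextual [eq_comm])
          (by simp), sum_eq_single (Fin.castLE hdm i) (by simp +contextual [eq_comm]) (by simp)]
      simp
    · rw [sum_eq_zero, sum_eq_single p (by simp +contextual [eq_comm]) (by simp)]
      · simp [hp]
      · intro i _
        have : p ≠ Fin.castLE hdm i := fun h => hp (h ▸ i.2)
        simp [this]

lemma exists_isometry_diag_eq_of_majorizedBy_pad (hdm : d ≤ m) {μ : Fin d → ℝ} {a : Fin m → ℝ}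
    (h : MajorizedBy a (pad μ m)) :
    ∃ V : Matrix (Fin m) (Fin d) ℂ, Vᴴ * V = 1 ∧ ∀ i, conjDiag V μ i i = a i := by
  obtain ⟨W, hW, hdiag⟩ := exists_diag_conjDiag_eq_of_majorizedBy h
  obtain ⟨J, hJ, hJμ⟩ := exists_isometry_conjDiag_one_pad hdm μ
  refine ⟨W * J, ?_, fun i => ?_⟩
  · rw [conjTranspose_mul, Matrix.mul_assoc, ← Matrix.mul_assoc Wᴴ, ← star_eq_conjTranspose W,
      mem_unitaryGroup_iff'.mp hW, Matrix.one_mul, hJ]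
  · rw [← mul_conjDiag_mul, hJμ, mul_conjDiag_mul, Matrix.mul_one, hdiag]

lemma frameOp_comp_castLE (hkm : k ≤ m) (F : Fin m → Fin d → ℂ)
    (hF : ∀ l : Fin m, k ≤ l → F l = 0) :
    frameOp (F ∘ Fin.castLE hkm) = frameOp F := by
  refine Fintype.sum_of_injective (Fin.castLE hkm) (Fin.castLE_injective hkm) _ _ (fun l hl => ?_)
    fun i => rfl
  rw [hF l (not_lt.mp fun h => hl ⟨⟨l, h⟩, rfl⟩), zero_vecMulVec]

lemma exists_norms_frameOp_eq {a : Fin k → ℝ} {S : Matrix (Fin d) (Fin d) ℂ} (hS : S.PosSemidef)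
    (h : MajorizedByPad a (eigsDesc S)) :
    ∃ G : Fin k → Fin d → ℂ, (∀ i, normSqVec (G i) = a i) ∧ frameOp G = S := by
  obtain ⟨V, hV, hdiag⟩ := exists_isometry_diag_eq_of_majorizedBy_pad (le_max_right k d) h
  obtain ⟨U, hU, hUS⟩ := exists_conjDiag_eigsDesc_eq hS.1
  set r : Matrix (Fin d) (Fin d) ℂ := diagonal fun i => ((√(eigsDesc S i) : ℝ) : ℂ) with hr
  have hr_self : rᴴ = r := by
    simpa only [hr, conjDiag_one] using (conjDiag_isHermitian (1 : Matrix (Fin d) (Fin d) ℂ)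
      fun i => √(eigsDesc S i)).eq
  have hr_sq : r * r = diagonal fun i => (eigsDesc S i : ℂ) := by
    rw [hr, diagonal_mul_diagonal]
    congr with i
    exact_mod_cast Real.mul_self_sqrt (eigsDesc_nonneg hS i)
  set Z := U * r * Vᴴ with hZ
  have hZZ : Z * Zᴴ = S := calc
    Z * Zᴴ = U * (r * (Vᴴ * V) * r) * Uᴴ := by
      simp only [hZ, conjTranspose_mul, conjTranspose_conjTranspose, hr_self, Matrix.mul_assoc]
    _ = S := by rw [hV, Matrix.mul_one, hr_sq, ← conjDiag, hUS]
  have hZ_gram : Zᴴ * Z = conjDiag V (eigsDesc S) := calc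
    Zᴴ * Z = V * (r * (star U * U) * r) * Vᴴ := by
      simp only [hZ, conjTranspose_mul, conjTranspose_conjTranspose, hr_self, Matrix.mul_assoc,
        star_eq_conjTranspose]
    _ = _ := by rw [mem_unitaryGroup_iff'.mp hU, Matrix.mul_one, hr_sq, conjDiag]
  have hnorm : ∀ l, normSqVec (Z.col l) = pad a (max k d) l := fun l => by
    exact_mod_cast (normSqVec_column Z l).trans (hZ_gram ▸ hdiag l)
  refine ⟨Z.col ∘ Fin.castLE (le_max_left k d), fun i => ?_, ?_⟩
  · rw [Function.comp_apply, hnorm]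
    simp [pad]
  · rw [frameOp_comp_castLE, frameOp_columns, hZZ]
    exact fun l hl => eq_zero_of_normSqVec_eq_zero (by rw [hnorm, pad, dif_neg hl.not_gt])

end Frames

/-! ### Successive differences -/

/-- The successive differences `w i - w (i + 1)`, with `w d` read as `0`. They are the coefficients
of `w` in the basis of indicator vectors of initial segments (Abel summation). -/
noncomputable def gap {d : ℕ} (w : Fin d → ℝ) (i : Fin d) : ℝ :=
  w i - if h : (i : ℕ) + 1 < d then w ⟨i + 1, h⟩ else 0

section Gap

variable {d : ℕ} {w : Fin d → ℝ}

lemma gap_nonneg_of_lt (hw : Antitone w) {i : Fin d} (hi : (i : ℕ) + 1 < d) : 0 ≤ gap w i := by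
  rw [gap, dif_pos hi]
  exact sub_nonneg.mpr (hw (Fin.mk_le_mk.mpr (Nat.le_succ _)))

lemma gap_nonneg (hw : Antitone w) (h0 : 0 ≤ w) (i : Fin d) : 0 ≤ gap w i := by
  by_cases hi : (i : ℕ) + 1 < d
  · exact gap_nonneg_of_lt hw hi
  · simpa [gap, hi] using h0 i

lemma sum_Ici_gap (w : Fin d → ℝ) (c : Fin d) : ∑ i ∈ Ici c, gap w i = w c := by
  let w' : ℕ → ℝ := fun i => if h : i < d then w ⟨i, h⟩ else 0
  calc ∑ i ∈ Ici c, gap w i = ∑ i ∈ (Ici c).map Fin.valEmbedding, (w' i - w' (i + 1)) := by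
        rw [sum_map]
        exact sum_congr rfl fun i _ => by simp [gap, w']
    _ = -∑ i ∈ Ico (c : ℕ) d, (w' (i + 1) - w' i) := by
        rw [Fin.map_valEmbedding_Ici, ← sum_neg_distrib]
        simp only [neg_sub]
    _ = w c := by
        rw [sum_Ico_sub _ c.2.le]
        simp [w']

lemma sum_gap_smul {V : Type*} [AddCommGroup V] [Module ℝ V] (w : Fin d → ℝ) (φ : Fin d → V) :
    ∑ i, gap w i • ∑ c ∈ Iic i, φ c = ∑ c, w c • φ c := by
  simp only [smul_sum]
  rw [sum_comm' (t' := univ) (s' := fun c => Ici c) (by simp)]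
  exact sum_congr rfl fun c _ => by rw [← sum_smul, sum_Ici_gap]

lemma sum_mul_nonneg_of_antitone {u : Fin d → ℝ} (hw : Antitone w)
    (hu : ∀ j, 0 ≤ ∑ i ∈ Iic j, u i) (hu0 : ∑ i, u i = 0) : 0 ≤ ∑ i, w i * u i := by
  have habel := sum_gap_smul w u
  simp only [smul_eq_mul] at habel
  rw [← habel]
  refine sum_nonneg fun i _ => ?_
  by_cases hi : (i : ℕ) + 1 < d
  · exact mul_nonneg (gap_nonneg_of_lt hw hi) (hu i)
  · have hIic : Iic i = univ := by
      ext c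
      simp only [mem_Iic, mem_univ, iff_true, Fin.le_def]
      omega
    rw [hIic, hu0, mul_zero]

lemma sum_sq_le_of_majorizedBy {x y : Fin d → ℝ} (h : MajorizedBy x y) (hx : Antitone x)
    (hy : Antitone y) : ∑ i, x i ^ 2 ≤ ∑ i, y i ^ 2 := by
  obtain ⟨hprefix, hsum⟩ := h
  rw [sortDesc_eq_self hx, sortDesc_eq_self hy] at hprefix
  have hcross : 0 ≤ ∑ i, x i * (y i - x i) := by
    refine sum_mul_nonneg_of_antitone hx (fun j => ?_) ?_
    · rw [sum_sub_distrib]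
      exact sub_nonneg.mpr (hprefix j)
    · rw [sum_sub_distrib, hsum, sub_self]
  calc ∑ i, x i ^ 2 ≤ ∑ i, (x i ^ 2 + 2 * (x i * (y i - x i)) + (y i - x i) ^ 2) := by
        rw [sum_add_distrib, sum_add_distrib, ← mul_sum]
        have := sum_nonneg fun i (_ : i ∈ univ) => sq_nonneg (y i - x i)
        linarith
    _ = ∑ i, y i ^ 2 := sum_congr rfl fun i _ => by ring

end Gap

/-! ### Eigenvalue inequalities of Weyl and Lidskii -/

section Lidskii

variable {d : ℕ} {A B X Y P U : Matrix (Fin d) (Fin d) ℂ}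

lemma dotProduct_conjDiag_mulVec {m n : Type*} [Fintype m] [Fintype n] [DecidableEq n]
    (U : Matrix m n ℂ) (x : n → ℝ) (v : m → ℂ) :
    star v ⬝ᵥ (conjDiag U x *ᵥ v) =
      ((∑ c, x c * Complex.normSq ((Uᴴ *ᵥ v) c) : ℝ) : ℂ) := by
  have hstar : star v ᵥ* U = star (Uᴴ *ᵥ v) := by
    rw [star_mulVec, conjTranspose_conjTranspose]
  rw [conjDiag, ← mulVec_mulVec, ← mulVec_mulVec, Matrix.dotProduct_mulVec, hstar, dotProduct]
  push_cast
  refine sum_congr rfl fun c _ => ?_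
  rw [mulVec_diagonal, Complex.normSq_eq_conj_mul_self, Pi.star_apply, Complex.star_def]
  ring

lemma normSqVec_conjTranspose_mulVec (hU : U ∈ unitaryGroup (Fin d) ℂ) (v : Fin d → ℂ) :
    normSqVec (Uᴴ *ᵥ v) = normSqVec v := by
  have hquad := fun V : Matrix (Fin d) (Fin d) ℂ => dotProduct_conjDiag_mulVec V (fun _ => 1) v
  have hone := hquad 1
  rw [conjDiag_const (one_mem _), ← conjDiag_const hU, hquad] at hone
  simp only [conjTranspose_one, one_mulVec, one_mul] at hone
  exact_mod_cast hone

lemma normSqVec_pos {v : Fin d → ℂ} (hv : v ≠ 0) : 0 < normSqVec v :=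
  (sum_nonneg fun _ _ => Complex.normSq_nonneg _).lt_of_ne'
    fun h => hv (eq_zero_of_normSqVec_eq_zero h)

lemma exists_mulVec_eq_zero_lt_gt (V U : Matrix (Fin d) (Fin d) ℂ) (i : Fin d) :
    ∃ v ≠ 0, (∀ c < i, (V *ᵥ v) c = 0) ∧ ∀ c > i, (U *ᵥ v) c = 0 := by
  let M : Matrix (Fin d) (Fin d) ℂ := fun c => if c < i then V c else if i < c then U c else 0
  have hdet : M.det = 0 := det_eq_zero_of_row_eq_zero i fun c => by simp [M]
  obtain ⟨v, hv, hMv⟩ := exists_mulVec_eq_zero_iff.mpr hdet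
  refine ⟨v, hv, fun c hc => ?_, fun c hc => ?_⟩
  · simpa [M, mulVec, hc] using congrFun hMv c
  · simpa [M, mulVec, hc, hc.not_gt] using congrFun hMv c

/-- On a nonzero vector orthogonal to the leading eigenvectors of `Y` before `i` and to the
eigenvectors of `X` after `i`, the two quadratic forms are separated by the `i`-th eigenvalues. -/
lemma eigsDesc_le_of_sub_posSemidef (hX : X.IsHermitian) (hY : Y.IsHermitian)
    (h : (Y - X).PosSemidef) (i : Fin d) : eigsDesc X i ≤ eigsDesc Y i := by
  obtain ⟨U, hU, hUX⟩ := exists_conjDiag_eigsDesc_eq hX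
  obtain ⟨V, hV, hVY⟩ := exists_conjDiag_eigsDesc_eq hY
  obtain ⟨v, hv, hVv, hUv⟩ := exists_mulVec_eq_zero_lt_gt Vᴴ Uᴴ i
  have hform : ∑ c, eigsDesc X c * Complex.normSq ((Uᴴ *ᵥ v) c) ≤
      ∑ c, eigsDesc Y c * Complex.normSq ((Vᴴ *ᵥ v) c) := by
    have hnonneg := h.dotProduct_mulVec_nonneg v
    rw [Matrix.sub_mulVec, dotProduct_sub, ← hUX, ← hVY, dotProduct_conjDiag_mulVec,
      dotProduct_conjDiag_mulVec, ← Complex.ofReal_sub] at hnonneg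
    simpa only [hUX, hVY, sub_nonneg] using Complex.zero_le_real.mp hnonneg
  have hlower : eigsDesc X i * normSqVec v ≤
      ∑ c, eigsDesc X c * Complex.normSq ((Uᴴ *ᵥ v) c) := by
    rw [← normSqVec_conjTranspose_mulVec hU, normSqVec, mul_sum]
    refine sum_le_sum fun c _ => ?_
    obtain hc | hc := lt_or_ge i c
    · simp [hUv c hc]
    · exact mul_le_mul_of_nonneg_right (eigsDesc_antitone X hc) (Complex.normSq_nonneg _)
  have hupper : ∑ c, eigsDesc Y c * Complex.normSq ((Vᴴ *ᵥ v) c) ≤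
      eigsDesc Y i * normSqVec v := by
    rw [← normSqVec_conjTranspose_mulVec hV, normSqVec, mul_sum]
    refine sum_le_sum fun c _ => ?_
    obtain hc | hc := lt_or_ge c i
    · simp [hVv c hc]
    · exact mul_le_mul_of_nonneg_right (eigsDesc_antitone Y hc) (Complex.normSq_nonneg _)
  exact le_of_mul_le_mul_right (hlower.trans (hform.trans hupper)) (normSqVec_pos hv)

lemma re_trace_eq_sum_eigsDesc (hX : X.IsHermitian) : X.trace.re = ∑ i, eigsDesc X i := by
  rw [trace_eq_sum_eigsDesc hX]
  simp

lemma sum_eigsDesc_add_sub_le_trace (hX : X.IsHermitian) (hP : P.PosSemidef)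
    (I : Finset (Fin d)) :
    ∑ i ∈ I, (eigsDesc (X + P) i - eigsDesc X i) ≤ P.trace.re := by
  have hXP := hX.add hP.1
  have hmono := eigsDesc_le_of_sub_posSemidef hX hXP (by rwa [add_sub_cancel_left])
  calc ∑ i ∈ I, (eigsDesc (X + P) i - eigsDesc X i)
      ≤ ∑ i, (eigsDesc (X + P) i - eigsDesc X i) :=
        sum_le_sum_of_subset_of_nonneg (subset_univ _) fun i _ _ => sub_nonneg.mpr (hmono i)
    _ = P.trace.re := by
        rw [sum_sub_distrib, ← re_trace_eq_sum_eigsDesc hXP, ← re_trace_eq_sum_eigsDesc hX,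
          trace_add, Complex.add_re, add_sub_cancel_left]

lemma eigsDesc_smul_one_sub (hA : A.IsHermitian) (c : ℝ) (i : Fin d) :
    eigsDesc ((c : ℂ) • 1 - A) i = c - eigsDesc A i.rev := by
  obtain ⟨U, hU, hUA⟩ := exists_conjDiag_eigsDesc_eq hA
  have hanti : Antitone fun i : Fin d => c - eigsDesc A i.rev := fun i j hij =>
    sub_le_sub_left (eigsDesc_antitone A (Fin.rev_le_rev.mpr hij)) c
  obtain ⟨V, hV, hVU⟩ := exists_conjDiag_comp_perm hU ((fun _ => c) - eigsDesc A) Fin.revPerm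
  have hdiag : (c : ℂ) • 1 - A = conjDiag V (fun i => c - eigsDesc A i.rev) := by
    rw [show (fun i : Fin d => c - eigsDesc A i.rev) = ((fun _ => c) - eigsDesc A) ∘ Fin.revPerm
      from rfl, hVU, conjDiag_sub, hUA, conjDiag_const hU]
  rw [hdiag, eigsDesc_conjDiag hV, sortDesc_eq_self hanti]

lemma exists_posSemidef_dominating (hA : A.IsHermitian) (j : Fin d) :
    ∃ P : Matrix (Fin d) (Fin d) ℂ, P.PosSemidef ∧
      ((eigsDesc A j : ℂ) • 1 + P - A).PosSemidef ∧
      P.trace.re = ∑ i ∈ Iic j, (eigsDesc A i - eigsDesc A j) := by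
  obtain ⟨U, hU, hUA⟩ := exists_conjDiag_eigsDesc_eq hA
  set c := eigsDesc A j
  refine ⟨conjDiag U fun i => max (eigsDesc A i - c) 0,
    conjDiag_posSemidef U fun i => le_max_right _ _, ?_, ?_⟩
  · rw [← conjDiag_const hU, ← conjDiag_add]
    nth_rw 2 [← hUA]
    rw [← conjDiag_sub]
    refine conjDiag_posSemidef U fun i => ?_
    have := le_max_left (eigsDesc A i - c) 0
    simp only [Pi.zero_apply, Pi.sub_apply, Pi.add_apply]
    linarith
  · rw [trace_conjDiag hU, ← Complex.ofReal_sum, Complex.ofReal_re,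
      ← sum_subset (subset_univ (Iic j)) fun i _ hi => ?_]
    · exact sum_congr rfl fun i hi =>
        max_eq_left (sub_nonneg.mpr (eigsDesc_antitone A (mem_Iic.mp hi)))
    · exact max_eq_right (sub_nonpos.mpr
        (eigsDesc_antitone A (not_le.mp fun h => hi (mem_Iic.mpr h)).le))

/-- The argument of Li and Mathias: with `c` the `j`-th eigenvalue of `A + B` and `P` the positive
part of `A + B - c`, we have `B ≤ (c - A) + P`, and adding `P` to `c - A` raises the eigenvalues by
`tr P` in total. -/
lemma sum_eigsDesc_rev_add_le (hA : A.IsHermitian) (hB : B.IsHermitian) {I : Finset (Fin d)}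
    {j : Fin d} (hI : #I = j + 1) :
    ∑ i ∈ I, (eigsDesc A i.rev + eigsDesc B i) ≤ ∑ i ∈ Iic j, eigsDesc (A + B) i := by
  obtain ⟨P, hP, hdom, htrace⟩ := exists_posSemidef_dominating (hA.add hB) j
  set c := eigsDesc (A + B) j
  have hX : ((c : ℂ) • 1 - A).IsHermitian := by
    rw [← conjDiag_const (one_mem _)]
    exact (conjDiag_isHermitian _ _).sub hA
  have hB_le := eigsDesc_le_of_sub_posSemidef hB (hX.add hP.1) (by convert hdom using 1; abel)
  have hsum : ∑ i ∈ I, (eigsDesc B i - (c - eigsDesc A i.rev)) ≤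
      ∑ i ∈ Iic j, (eigsDesc (A + B) i - c) := calc
    _ ≤ ∑ i ∈ I, (eigsDesc ((c : ℂ) • 1 - A + P) i - eigsDesc ((c : ℂ) • 1 - A) i) :=
        sum_le_sum fun i _ => by
          rw [eigsDesc_smul_one_sub hA]
          exact sub_le_sub_right (hB_le i) _
    _ ≤ P.trace.re := sum_eigsDesc_add_sub_le_trace hX hP I
    _ = _ := htrace
  simp only [sum_sub_distrib, sum_const, hI, Fin.card_Iic] at hsum
  rw [sum_add_distrib]
  linarith

lemma majorizedBy_eigsDesc_add (hA : A.IsHermitian) (hB : B.IsHermitian) :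
    MajorizedBy (sortDesc fun i => eigsAsc A i + eigsDesc B i) (eigsDesc (A + B)) := by
  rw [majorizedBy_sortDesc_left_iff]
  simp only [eigsAsc_eq_eigsDesc_rev]
  refine ⟨fun j => ?_, ?_⟩
  · obtain ⟨σ, hσ⟩ := exists_perm_sortDesc_eq fun i => eigsDesc A i.rev + eigsDesc B i
    have h := sum_eigsDesc_rev_add_le hA hB (I := (Iic j).map σ.toEmbedding) (j := j) (by simp)
    rw [sum_map] at h
    rwa [hσ, sortDesc_eq_self (eigsDesc_antitone _)]
  · rw [sum_add_distrib, ← Equiv.sum_comp Fin.revPerm fun i => eigsDesc A i.rev]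
    simp only [Fin.revPerm_apply, Fin.rev_rev]
    rw [← re_trace_eq_sum_eigsDesc hA,
      ← re_trace_eq_sum_eigsDesc hB, ← re_trace_eq_sum_eigsDesc (hA.add hB), trace_add,
      Complex.add_re]

end Lidskii

/-! ### Commutation in the case of equality -/

section Commutation

variable {d : ℕ} {A B S W : Matrix (Fin d) (Fin d) ℂ}

lemma conjDiag_mul_self {U : Matrix (Fin d) (Fin d) ℂ} (hU : U ∈ unitaryGroup (Fin d) ℂ)
    (x : Fin d → ℝ) : conjDiag U x * conjDiag U x = conjDiag U (x ^ 2) := calc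
  _ = U * diagonal (fun i => (x i : ℂ)) * (star U * U) * diagonal (fun i => (x i : ℂ)) * Uᴴ := by
    simp only [conjDiag, Matrix.mul_assoc, star_eq_conjTranspose]
  _ = _ := by
    rw [mem_unitaryGroup_iff'.mp hU, Matrix.mul_one, Matrix.mul_assoc U, diagonal_mul_diagonal,
      conjDiag]
    simp [sq]

lemma re_trace_mul_self (hS : S.IsHermitian) : (S * S).trace.re = ∑ i, eigsDesc S i ^ 2 := by
  obtain ⟨U, hU, hUS⟩ := exists_conjDiag_eigsDesc_eq hS
  conv_lhs => rw [← hUS, conjDiag_mul_self hU, trace_conjDiag hU, ← Complex.ofReal_sum]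
  rfl

lemma eigsDesc_unitary_conj (hB : B.IsHermitian) (hW : W ∈ unitaryGroup (Fin d) ℂ) :
    eigsDesc (W * B * Wᴴ) = eigsDesc B := by
  obtain ⟨U, hU, hUB⟩ := exists_conjDiag_eigsDesc_eq hB
  conv_lhs => rw [← hUB, mul_conjDiag_mul, eigsDesc_conjDiag (mul_mem hW hU)]
  exact sortDesc_eq_self (eigsDesc_antitone B)

lemma re_trace_mul_le_of_eigsDesc_add_eq {B' : Matrix (Fin d) (Fin d) ℂ} (hA : A.IsHermitian)
    (hB : B.IsHermitian) (hB' : B'.IsHermitian) (hBB' : eigsDesc B' = eigsDesc B)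
    (h : eigsDesc (A + B) = sortDesc fun i => eigsAsc A i + eigsDesc B i) :
    (A * B).trace.re ≤ (A * B').trace.re := by
  have hsq : ((A + B) * (A + B)).trace.re ≤ ((A + B') * (A + B')).trace.re := by
    have hmaj := majorizedBy_eigsDesc_add hA hB'
    rw [hBB', ← h] at hmaj
    rw [re_trace_mul_self (hA.add hB), re_trace_mul_self (hA.add hB')]
    exact sum_sq_le_of_majorizedBy hmaj (eigsDesc_antitone _) (eigsDesc_antitone _)
  have hexpand (C : Matrix (Fin d) (Fin d) ℂ) : ((A + C) * (A + C)).trace.re =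
      (A * A).trace.re + 2 * (A * C).trace.re + (C * C).trace.re := by
    simp only [Matrix.add_mul, Matrix.mul_add, trace_add, Complex.add_re, trace_mul_comm C A]
    ring
  rw [hexpand, hexpand, re_trace_mul_self hB, re_trace_mul_self hB', hBB'] at hsq
  linarith

lemma hasDerivAt_exp_conj {E : Type*} [NormedRing E] [NormedAlgebra ℝ E] [CompleteSpace E]
    (K B : E) :
    HasDerivAt (fun t : ℝ => NormedSpace.exp (t • K) * B * NormedSpace.exp (t • -K))
      (K * B - B * K) 0 := by
  have hexp (K : E) : HasDerivAt (fun t : ℝ => NormedSpace.exp (t • K)) K 0 := by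
    simpa using hasDerivAt_exp_smul_const (𝕂 := ℝ) K (0 : ℝ)
  refine HasDerivAt.congr_deriv (((hexp K).mul_const B).mul (hexp (-K))) ?_
  simp [sub_eq_add_neg]

open scoped Matrix.Norms.L2Operator in
lemma re_trace_mul_commutator_eq_zero {K : Matrix (Fin d) (Fin d) ℂ}
    (hK : K ∈ skewAdjoint (Matrix (Fin d) (Fin d) ℂ))
    (hmin : ∀ W ∈ unitaryGroup (Fin d) ℂ, (A * B).trace.re ≤ (A * (W * B * Wᴴ)).trace.re) :
    (A * (K * B - B * K)).trace.re = 0 := by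
  let L : Matrix (Fin d) (Fin d) ℂ →ₗ[ℝ] ℝ := Complex.reLm ∘ₗ
    (traceLinearMap (Fin d) ℂ ℂ ∘ₗ LinearMap.mulLeft ℂ A).restrictScalars ℝ
  have hderiv := (LinearMap.toContinuousLinearMap L).hasFDerivAt.comp_hasDerivAt 0
    (hasDerivAt_exp_conj K B)
  refine IsLocalMin.hasDerivAt_eq_zero (Filter.Eventually.of_forall fun t => ?_) hderiv
  have hstar : (NormedSpace.exp (t • K))ᴴ = NormedSpace.exp (t • -K) := by
    rw [← exp_conjTranspose, conjTranspose_smul, ← star_eq_conjTranspose K,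
      skewAdjoint.mem_iff.mp hK, star_trivial]
  let _ : NormedAlgebra ℚ (Matrix (Fin d) (Fin d) ℂ) := .restrictScalars ℚ ℝ _
  have hunitary : NormedSpace.exp (t • K) ∈ unitaryGroup (Fin d) ℂ :=
    NormedSpace.exp_mem_unitary_of_mem_skewAdjoint (skewAdjoint.smul_mem t hK)
  have hle := hmin _ hunitary
  rw [hstar] at hle
  simpa [L] using hle

lemma trace_mul_commutator {n R : Type*} [Fintype n] [CommRing R] (A B K : Matrix n n R) :
    (A * (K * B - B * K)).trace = (K * (B * A - A * B)).trace := by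
  rw [Matrix.mul_sub, Matrix.mul_sub, trace_sub, trace_sub, trace_mul_comm A, Matrix.mul_assoc,
    ← Matrix.mul_assoc A, trace_mul_comm (A * B)]

lemma mul_comm_of_forall_re_trace_mul_le (hA : A.IsHermitian) (hB : B.IsHermitian)
    (hmin : ∀ W ∈ unitaryGroup (Fin d) ℂ, (A * B).trace.re ≤ (A * (W * B * Wᴴ)).trace.re) :
    A * B = B * A := by
  let K := A * B - B * A
  have hskew : Kᴴ = -K := by
    simp [K, conjTranspose_mul, hA.eq, hB.eq]
  have hzero := re_trace_mul_commutator_eq_zero (skewAdjoint.mem_iff.mpr hskew) hmin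
  rw [trace_mul_commutator, ← neg_sub (A * B), ← hskew] at hzero
  have hnonneg := (posSemidef_self_mul_conjTranspose K).trace_nonneg
  have hK0 := trace_mul_conjTranspose_self_eq_zero_iff.mp
    (Complex.ext hzero (Complex.nonneg_iff.mp hnonneg).2.symm)
  exact sub_eq_zero.mp hK0

theorem mul_comm_of_eigsDesc_add_eq (hA : A.IsHermitian) (hB : B.IsHermitian)
    (h : eigsDesc (A + B) = sortDesc fun i => eigsAsc A i + eigsDesc B i) : A * B = B * A :=
  mul_comm_of_forall_re_trace_mul_le hA hB fun W hW =>
    re_trace_mul_le_of_eigsDesc_add_eq hA hB (isHermitian_mul_mul_conjTranspose W hB)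
      (eigsDesc_unitary_conj hB hW) h

lemma exists_eigsDesc_add_eq_sortDesc (hA : A.IsHermitian) {μ : Fin d → ℝ} (hμ : Antitone μ) :
    ∃ B : Matrix (Fin d) (Fin d) ℂ, B.IsHermitian ∧ eigsDesc B = μ ∧
      eigsDesc (A + B) = sortDesc fun i => eigsAsc A i + μ i := by
  obtain ⟨U, hU, hUA⟩ := exists_conjDiag_eigsDesc_eq hA
  obtain ⟨V, hV, hVU⟩ := exists_conjDiag_comp_perm hU (eigsDesc A) Fin.revPerm
  refine ⟨conjDiag V μ, conjDiag_isHermitian V μ, ?_, ?_⟩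
  · rw [eigsDesc_conjDiag hV, sortDesc_eq_self hμ]
  · rw [← hUA, ← hVU, ← conjDiag_add, eigsDesc_conjDiag hV, hVU, hUA]
    congr 1
    ext i
    simp [eigsAsc_eq_eigsDesc_rev]

end Commutation

/-! ### Wild field endomorphisms -/

section FieldHom

lemma exists_ringHom_comp_algebraMap_eq {A K L : Type*} [CommRing A] [IsDomain A] [Field K]
    [Algebra A K] [FaithfulSMul A K] [Algebra.IsAlgebraic A K] [Field L] [IsAlgClosed L]
    {g : A →+* L} (hg : Function.Injective g) :
    ∃ τ : K →+* L, τ.comp (algebraMap A K) = g := by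
  let _ := g.toAlgebra
  have _ : FaithfulSMul A L := (faithfulSMul_iff_algebraMap_injective A L).mpr hg
  have _ : Module.IsTorsionFree A L := inferInstance
  exact ⟨(IsAlgClosed.lift : K →ₐ[A] L), AlgHom.comp_algebraMap _⟩

lemma exists_ringHom_apply_eq_aeval {R K s : Type*} [Field R] [Field K] [IsAlgClosed K]
    [Algebra R K] {x : s → K} (hx : IsTranscendenceBasis R x) {f : s → Polynomial R}
    (hf : ∀ i, Transcendental R (f i)) :
    ∃ τ : K →+* K, ∀ i, τ (x i) = Polynomial.aeval (x i) (f i) := by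
  have := hx.isAlgebraic
  let g : Algebra.adjoin R (Set.range x) →ₐ[R] K :=
    (MvPolynomial.aeval fun i => Polynomial.aeval (x i) (f i)).comp
      hx.1.aevalEquiv.symm.toAlgHom
  have hg : Function.Injective g :=
    (algebraicIndependent_iff_injective_aeval.mp
      (hx.1.polynomial_aeval_of_transcendental hf)).comp hx.1.aevalEquiv.symm.injective
  obtain ⟨τ, hτ⟩ := exists_ringHom_comp_algebraMap_eq (K := K) (g := g.toRingHom) hg
  refine ⟨τ, fun i => ?_⟩
  have h := RingHom.congr_fun hτ (hx.1.aevalEquiv (MvPolynomial.X i))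
  rw [RingHom.comp_apply, hx.1.algebraMap_aevalEquiv, MvPolynomial.aeval_X] at h
  simpa [g] using h

lemma exists_ringHom_apply_eq_smul {R K s : Type*} [Field R] [Field K] [IsAlgClosed K]
    [Algebra R K] {x : s → K} (hx : IsTranscendenceBasis R x) {c : s → R} (hc : ∀ i, c i ≠ 0) :
    ∃ τ : K →+* K, ∀ i, τ (x i) = c i • x i := by
  obtain ⟨τ, hτ⟩ := exists_ringHom_apply_eq_aeval hx (f := fun i => .C (c i) * .X) fun i =>
    Polynomial.transcendental _ (by simp [Polynomial.natDegree_C_mul_X _ (hc i)])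
      (by simpa using hc i)
  exact ⟨τ, fun i => by simp [hτ, Algebra.smul_def]⟩

lemma dense_algebraicClosure_rat : Dense (algebraicClosure ℚ ℂ : Set ℂ) := by
  have hI : Complex.I ∈ algebraicClosure ℚ ℂ := by
    refine mem_algebraicClosure_iff.mpr
      (IsIntegral.isAlgebraic ⟨Polynomial.X ^ 2 + 1, by monicity!, by simp⟩)
  have hdense : DenseRange (Complex.equivRealProdCLM.symm ∘
      Prod.map ((↑) : ℚ → ℝ) ((↑) : ℚ → ℝ)) :=
    Complex.equivRealProdCLM.symm.surjective.denseRange.comp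
      (Rat.denseRange_cast.prodMap Rat.denseRange_cast)
      Complex.equivRealProdCLM.symm.continuous
  refine Dense.mono ?_ hdense
  rintro _ ⟨⟨a, b⟩, rfl⟩
  have hcast (q : ℚ) : (q : ℂ) ∈ algebraicClosure ℚ ℂ :=
    (algebraicClosure ℚ ℂ).algebraMap_mem q
  have hab : Complex.equivRealProdCLM.symm (a, b) = a + b * Complex.I :=
    (ContinuousLinearEquiv.symm_apply_eq _).mpr (by simp)
  rw [Function.comp_apply, Prod.map_apply, hab]
  exact add_mem (hcast a) (mul_mem (hcast b) hI)

lemma infinite_of_isTranscendenceBasis {s : Set ℂ}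
    (hs : IsTranscendenceBasis (algebraicClosure ℚ ℂ) ((↑) : s → ℂ)) : Infinite s := by
  have : Algebra.IsAlgebraic ℚ (algebraicClosure ℚ ℂ) := algebraicClosure.isAlgebraic ℚ ℂ
  have hcountable : Cardinal.mk (algebraicClosure ℚ ℂ) ≤ Cardinal.aleph0 := by
    simpa using Algebra.IsAlgebraic.cardinalMk_le_max ℚ (algebraicClosure ℚ ℂ)
  have hcard := IsAlgClosed.cardinal_eq_cardinal_transcendence_basis_of_aleph0_lt' _ hs hcountable
    (by simpa using Cardinal.aleph0_lt_continuum)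
  rw [Cardinal.infinite_iff, ← hcard, Cardinal.mk_complex]
  exact Cardinal.aleph0_le_continuum

/-- The coordinates are algebraically independent over `R`, the algebraic closure of `ℚ`, so they
can be rescaled independently by nonzero elements of `R`, which is dense in `ℂ`. -/
lemma exists_denseRange_ringHom_apply (N : Type*) [Countable N] :
    ∃ x : N → ℂ, DenseRange fun (τ : ℂ →+* ℂ) n => τ (x n) := by
  let R := algebraicClosure ℚ ℂ
  obtain ⟨s, hs⟩ := exists_isTranscendenceBasis R ℂ
  have := infinite_of_isTranscendenceBasis hs
  obtain ⟨e, he⟩ : ∃ e : N → s, Function.Injective e :=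
    let ⟨g, hg⟩ := Countable.exists_injective_nat N
    ⟨Infinite.natEmbedding s ∘ g, (Infinite.natEmbedding s).injective.comp hg⟩
  refine ⟨fun n => e n, ?_⟩
  have hdense (n : N) : Dense ((· * (e n : ℂ)) '' ((R : Set ℂ) \ {0})) :=
    ((Homeomorph.mulRight₀ (e n : ℂ) (hs.1.ne_zero (e n))).surjective.denseRange).dense_image
      (continuous_mul_const _) (dense_algebraicClosure_rat.sdiff_singleton 0)
  refine Dense.mono (fun z hz => ?_) (dense_pi Set.univ fun n _ => hdense n)
  choose c hc hcz using fun n => hz n trivial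
  obtain ⟨τ, hτ⟩ := exists_ringHom_apply_eq_smul hs
    (c := Function.extend e (fun n => ⟨c n, (hc n).1⟩) 1) fun b => by
      by_cases hb : ∃ n, e n = b
      · obtain ⟨n, rfl⟩ := hb
        rw [he.extend_apply]
        exact fun h => (hc n).2 (congrArg Subtype.val h)
      · rw [Function.extend_apply' _ _ _ hb]
        exact one_ne_zero
  refine ⟨τ, funext fun n => ?_⟩
  dsimp only
  rw [hτ, he.extend_apply, ← hcz]
  rfl

end FieldHom

/-! ### Rank inequalities and generic flags -/

/-- The block of columns of `H` up to and including the `i`-th: its column span is the `i`-th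
member of the flag defined by `H`. -/
def leadingCols {m : Type*} {d : ℕ} (H : Matrix m (Fin d) ℂ) (i : Fin d) :
    Matrix m {c : Fin d // c ≤ i} ℂ :=
  H.submatrix id Subtype.val

/-- Semistability of the family of subspaces spanned by the columns of the `L k`, with weights `c k`
and slope `κ`. The inequality is imposed on quotients of dimension `r`, each presented as an
orthogonal projection `p` with orthonormal rows. -/
def IsSemistable {m ι : Type*} [Fintype m] [Fintype ι] {n : ι → Type*} [∀ k, Fintype (n k)]
    (L : ∀ k, Matrix m (n k) ℂ) (c : ι → ℝ) (κ : ℝ) : Prop :=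
  ∀ (r : ℕ) (p : Matrix (Fin r) m ℂ), p * pᴴ = 1 → κ * r ≤ ∑ k, c k * (p * L k).rank

/-- The members of the flags defined by the matrices `H j`, as a single family. -/
abbrev flags {J m : Type*} {d : ℕ} (H : J → Matrix m (Fin d) ℂ) (k : J × Fin d) :
    Matrix m {c : Fin d // c ≤ k.2} ℂ :=
  leadingCols (H k.1) k.2

section LeadingCols

variable {m : Type*} {d : ℕ}

lemma continuous_leadingCols (i : Fin d) :
    Continuous fun H : Matrix m (Fin d) ℂ => leadingCols H i :=
  continuous_id.matrix_submatrix id Subtype.val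

lemma leadingCols_mul_conjTranspose_apply (H : Matrix m (Fin d) ℂ) (i : Fin d) (p q : m) :
    (leadingCols H i * (leadingCols H i)ᴴ) p q = ∑ c ∈ Iic i, H p c * star (H q c) := by
  rw [Matrix.mul_apply]
  exact (sum_subtype (Iic i) (fun _ => mem_Iic) fun c => H p c * star (H q c)).symm

lemma sum_gap_smul_leadingCols (U : Matrix m (Fin d) ℂ) (w : Fin d → ℝ) :
    ∑ i, gap w i • (leadingCols U i * (leadingCols U i)ᴴ) = conjDiag U w := by
  ext p q
  simp only [Matrix.sum_apply, Matrix.smul_apply, leadingCols_mul_conjTranspose_apply,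
    sum_gap_smul w fun c => U p c * star (U q c), conjDiag_apply]
  exact sum_congr rfl fun c _ => by rw [Complex.real_smul]; ring

lemma conjTranspose_leadingCols_mul_self [Fintype m] {U : Matrix m (Fin d) ℂ} (hU : Uᴴ * U = 1)
    (i : Fin d) : (leadingCols U i)ᴴ * leadingCols U i = 1 :=
  (submatrix_mul Uᴴ U Subtype.val id Subtype.val Function.bijective_id).symm.trans
    (by rw [hU, submatrix_one _ Subtype.val_injective])

end LeadingCols

section Rank

variable {m n : Type*} [Fintype n]

lemma exists_eq_mul_of_rank {K : Type*} [Field K] (M : Matrix m n K) :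
    ∃ (A : Matrix m (Fin M.rank) K) (B : Matrix (Fin M.rank) n K), M = A * B := by
  have := FiniteDimensional.span_of_finite K (Set.finite_range M.col)
  let b := Module.finBasisOfFinrankEq K (Submodule.span K (Set.range M.col))
    (rank_eq_finrank_span_cols M).symm
  have hcol (j : n) : M.col j ∈ Submodule.span K (Set.range M.col) :=
    Submodule.subset_span ⟨j, rfl⟩
  refine ⟨of fun i l => (b l : m → K) i, of fun l j => b.repr ⟨M.col j, hcol j⟩ l, ?_⟩
  ext i j
  have hrepr := congrArg (fun x : Submodule.span K (Set.range M.col) => (x : m → K) i)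
    (b.sum_repr ⟨M.col j, hcol j⟩)
  simp only [Submodule.coe_sum, Submodule.coe_smul, Finset.sum_apply, Pi.smul_apply,
    smul_eq_mul, col_apply] at hrepr
  simp only [Matrix.mul_apply, of_apply, ← hrepr, mul_comm]

lemma rank_map_le {K K' : Type*} [Field K] [Field K'] (M : Matrix m n K) (τ : K →+* K') :
    (M.map τ).rank ≤ M.rank := by
  obtain ⟨A, B, hM⟩ := exists_eq_mul_of_rank M
  calc (M.map τ).rank = (A.map τ * B.map τ).rank := by rw [← Matrix.map_mul, ← hM]
    _ ≤ (A.map τ).rank := rank_mul_le_left _ _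
    _ ≤ M.rank := (rank_le_card_width _).trans_eq (Fintype.card_fin _)

open Filter Topology in
lemma eventually_rank_le [Finite m] (M₀ : Matrix m n ℂ) : ∀ᶠ M in 𝓝 M₀, M₀.rank ≤ M.rank := by
  classical
  have _ := Fintype.ofFinite m
  let L : Matrix m n ℂ →ₗ[ℂ] ((n → ℂ) →L[ℂ] (m → ℂ)) :=
    LinearMap.toContinuousLinearMap.toLinearMap ∘ₗ Matrix.toLin'.toLinearMap
  have hopen := (isOpen_setOfPred_nat_le_rank (𝕜 := ℂ) (E := n → ℂ) (F := m → ℂ) M₀.rank).preimage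
    (LinearMap.continuous_of_finiteDimensional L)
  have hrank (N : Matrix m n ℂ) : (M₀.rank : Cardinal) ≤ (L N : (n → ℂ) →ₗ[ℂ] (m → ℂ)).rank ↔
      M₀.rank ≤ N.rank := by
    have hL : (L N : (n → ℂ) →ₗ[ℂ] (m → ℂ)) = N.mulVecLin := by ext; simp [L]
    rw [hL, Matrix.rank, LinearMap.rank, ← Module.finrank_eq_rank]
    exact Nat.cast_le
  filter_upwards [hopen.mem_nhds ((hrank M₀).mpr le_rfl)] with N hN
  exact (hrank N).mp hN

variable [Fintype m]

lemma re_trace_mul_conjTranspose_le_rank [DecidableEq m] {Y : Matrix m n ℂ}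
    (h : (1 - Y * Yᴴ).PosSemidef) : (Y * Yᴴ).trace.re ≤ Y.rank := by
  have hH : (Y * Yᴴ).IsHermitian := isHermitian_mul_conjTranspose_self Y
  have hle (i : m) : hH.eigenvalues i ≤ 1 := by
    obtain ⟨U, hU, hUY⟩ := exists_conjDiag_eq hH
    have hU' : Uᴴ * U = 1 := mem_unitaryGroup_iff'.mp hU
    have hdiag : Uᴴ * (1 - Y * Yᴴ) * U = 1 - diagonal fun i => (hH.eigenvalues i : ℂ) := by
      conv_lhs => rw [← hUY]
      rw [Matrix.mul_sub, Matrix.sub_mul, Matrix.mul_one, hU', conjDiag]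
      simp only [← Matrix.mul_assoc, hU', Matrix.one_mul]
      rw [Matrix.mul_assoc, hU', Matrix.mul_one]
    have hnonneg := (h.conjTranspose_mul_mul_same U).diag_nonneg (i := i)
    rw [hdiag, Matrix.sub_apply, one_apply_eq, diagonal_apply_eq, sub_nonneg] at hnonneg
    exact_mod_cast hnonneg
  rw [← rank_self_mul_conjTranspose, hH.rank_eq_card_non_zero_eigs, hH.trace_eq_sum_eigenvalues,
    Fintype.card_subtype, card_filter, Complex.re_sum]
  push_cast
  refine sum_le_sum fun i _ => ?_
  split_ifs with h0
  · simpa using hle i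
  · simp [not_not.mp h0]

lemma isSemistable_of_sum_eq_smul_one [DecidableEq m] {ι : Type*} [Fintype ι] {n : ι → Type*}
    [∀ k, Fintype (n k)] [∀ k, DecidableEq (n k)] {Q : ∀ k, Matrix m (n k) ℂ} {c : ι → ℝ} {κ : ℝ}
    (hc : 0 ≤ c) (hQ : ∀ k, (Q k)ᴴ * Q k = 1) (h : ∑ k, c k • (Q k * (Q k)ᴴ) = (κ : ℂ) • 1) :
    IsSemistable Q c κ := by
  intro r p hp
  have hcontraction (k : ι) : (1 - p * Q k * (p * Q k)ᴴ).PosSemidef := by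
    have hproj : 1 - Q k * (Q k)ᴴ = (1 - Q k * (Q k)ᴴ) * (1 - Q k * (Q k)ᴴ)ᴴ := by
      have : Q k * (Q k)ᴴ * (Q k * (Q k)ᴴ) = Q k * (Q k)ᴴ := by
        rw [Matrix.mul_assoc, ← Matrix.mul_assoc _ (Q k), hQ, Matrix.one_mul]
      simp only [conjTranspose_sub, conjTranspose_one, conjTranspose_mul,
        conjTranspose_conjTranspose, Matrix.mul_sub, Matrix.sub_mul, Matrix.mul_one,
        Matrix.one_mul, this, sub_self, sub_zero]
    have hpsd : (1 - Q k * (Q k)ᴴ).PosSemidef := hproj ▸ posSemidef_self_mul_conjTranspose _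
    simpa only [Matrix.mul_sub, Matrix.sub_mul, Matrix.mul_one, hp, conjTranspose_mul,
      Matrix.mul_assoc] using hpsd.mul_mul_conjTranspose_same p
  have htrace : (κ * r : ℂ) = ∑ k, c k • (p * Q k * (p * Q k)ᴴ).trace := by
    have := congrArg (fun X => (p * X * pᴴ).trace) h
    simp only [Matrix.mul_sum, Matrix.sum_mul, Matrix.mul_smul, Matrix.smul_mul, trace_sum,
      trace_smul, Matrix.mul_one, hp, trace_one, Fintype.card_fin, smul_eq_mul] at this
    simpa only [conjTranspose_mul, Matrix.mul_assoc] using this.symm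
  calc κ * r = ∑ k, c k * (p * Q k * (p * Q k)ᴴ).trace.re := by
        simpa using congrArg Complex.re htrace
    _ ≤ _ := sum_le_sum fun k _ =>
        mul_le_mul_of_nonneg_left (re_trace_mul_conjTranspose_le_rank (hcontraction k)) (hc k)

end Rank

lemma isCompact_setOf_mul_conjTranspose_eq_one {m n : Type*} [Fintype m] [Finite n]
    [DecidableEq n] : IsCompact {p : Matrix n m ℂ | p * pᴴ = 1} := by
  refine IsCompact.of_isClosed_subset
    (isCompact_univ_pi fun _ => isCompact_univ_pi fun _ => isCompact_closedBall (0 : ℂ) 1)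
    (isClosed_eq (continuous_id.matrix_mul continuous_id.matrix_conjTranspose) continuous_const) ?_
  intro p hp i _ j _
  have hrow : ∑ j, ‖p i j‖ ^ 2 = 1 := by
    have h := congrFun (congrFun hp i) i
    simp only [Matrix.mul_apply, conjTranspose_apply, one_apply_eq, Complex.star_def,
      Complex.mul_conj'] at h
    exact_mod_cast h
  rw [mem_closedBall_zero_iff, ← sq_le_one_iff₀ (norm_nonneg _), ← hrow]
  exact single_le_sum (f := fun j => ‖p i j‖ ^ 2) (fun _ _ => by positivity) (mem_univ j)

open scoped MatrixOrder Matrix.Norms.L2Operator in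
lemma exists_conjTranspose_mul_self_eq {n : Type*} [Fintype n] [DecidableEq n] {X : Matrix n n ℂ}
    (hX : X.PosDef) : ∃ g : Matrix n n ℂ, g.det ≠ 0 ∧ gᴴ * g = X := by
  obtain ⟨g, hg⟩ := CStarAlgebra.nonneg_iff_eq_star_mul_self.mp hX.posSemidef.nonneg
  rw [star_eq_conjTranspose] at hg
  refine ⟨g, fun h0 => hX.det_pos.ne' ?_, hg.symm⟩
  rw [hg, det_mul, h0, mul_zero]

lemma exists_mul_mul_conjTranspose_eq_one {m n : Type*} [Fintype m] [Fintype n] [DecidableEq n]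
    {P : Matrix n m ℂ} {Q : Matrix m n ℂ} (h : P * Q = 1) :
    ∃ t : Matrix n n ℂ, (t * P) * (t * P)ᴴ = 1 := by
  have hpos : (P * Pᴴ).PosDef := by
    refine PosDef.mul_conjTranspose_self P (Function.LeftInverse.injective (g := Q.vecMul) ?_)
    intro x
    exact (vecMul_vecMul x P Q).trans (by rw [h, vecMul_one])
  obtain ⟨B, hdet, hB⟩ := exists_conjTranspose_mul_self_eq hpos
  refine ⟨(B⁻¹)ᴴ, ?_⟩
  calc (B⁻¹)ᴴ * P * ((B⁻¹)ᴴ * P)ᴴ = (B⁻¹)ᴴ * (P * Pᴴ) * B⁻¹ := by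
        simp only [conjTranspose_mul, conjTranspose_conjTranspose, Matrix.mul_assoc]
    _ = (B * B⁻¹)ᴴ * (B * B⁻¹) := by
        rw [← hB]
        simp only [conjTranspose_mul, Matrix.mul_assoc]
    _ = 1 := by rw [mul_nonsing_inv B hdet.isUnit, conjTranspose_one, Matrix.mul_one]

section Generic

variable {m ι : Type*} [Fintype m] {n : ι → Type*} [∀ k, Fintype (n k)]

open Filter Topology in
lemma eventually_forall_exists_rank_mul_le [Finite ι] (L₀ : ∀ k, Matrix m (n k) ℂ) (r : ℕ) :
    ∀ᶠ L in 𝓝 L₀, ∀ p ∈ {p : Matrix (Fin r) m ℂ | p * pᴴ = 1},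
      ∃ q : Matrix (Fin r) m ℂ, q * qᴴ = 1 ∧ ∀ k, (q * L₀ k).rank ≤ (p * L k).rank := by
  refine isCompact_setOf_mul_conjTranspose_eq_one.eventually_forall_of_forall_eventually
    fun q hq => ?_
  have hev (k : ι) : ∀ᶠ z : (∀ k, Matrix m (n k) ℂ) × Matrix (Fin r) m ℂ in 𝓝 (L₀, q),
      (q * L₀ k).rank ≤ (z.2 * z.1 k).rank := by
    have hcont : Continuous fun z : (∀ k, Matrix m (n k) ℂ) × Matrix (Fin r) m ℂ => z.2 * z.1 k :=
      continuous_snd.matrix_mul ((continuous_apply k).comp continuous_fst)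
    exact (hcont.tendsto (L₀, q)).eventually (eventually_rank_le (q * L₀ k))
  filter_upwards [eventually_all.mpr hev] with z hz
  exact ⟨q, hq, hz⟩

lemma exists_rank_mul_map_le (L : ∀ k, Matrix m (n k) ℂ) (τ : ℂ →+* ℂ) {r : ℕ}
    {p : Matrix (Fin r) m ℂ} (hp : p * pᴴ = 1) :
    ∃ q : Matrix (Fin r) m ℂ, q * qᴴ = 1 ∧ ∀ k, (q * (L k).map τ).rank ≤ (p * L k).rank := by
  classical
  obtain ⟨t, ht⟩ := exists_mul_mul_conjTranspose_eq_one (P := p.map τ) (Q := pᴴ.map τ)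
    (by rw [← Matrix.map_mul, hp, Matrix.map_one _ τ.map_zero τ.map_one])
  refine ⟨t * p.map τ, ht, fun k => ?_⟩
  rw [Matrix.mul_assoc, ← Matrix.map_mul]
  exact (rank_mul_le_right _ _).trans (rank_map_le _ τ)

lemma exists_denseRange_map (J m n : Type*) [Countable J] [Countable m] [Countable n] :
    ∃ H : J → Matrix m n ℂ, DenseRange fun (τ : ℂ →+* ℂ) j => (H j).map τ := by
  obtain ⟨x, hx⟩ := exists_denseRange_ringHom_apply (J × m × n)
  refine ⟨fun j => of fun a b => x (j, a, b), ?_⟩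
  have hcont : Continuous fun (y : J × m × n → ℂ) (j : J) => of fun a b => y (j, a, b) :=
    continuous_pi fun j => continuous_pi fun a => continuous_pi fun b => continuous_apply _
  exact DenseRange.comp
    (Function.Surjective.denseRange fun H => ⟨fun q => H q.1 q.2.1 q.2.2, rfl⟩) hx hcont

end Generic

/-- Semistability of a family of flags is an open condition and is reflected by endomorphisms of
the field `ℂ`, however discontinuous. A family `H` with algebraically independent entries is moved
by such endomorphisms arbitrarily close to every family. -/
lemma exists_generic_flags (J : Type*) [Fintype J] (d : ℕ) :
    ∃ H : J → Matrix (Fin d) (Fin d) ℂ, (∀ j, (H j).det ≠ 0) ∧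
      ∀ (U : J → Matrix (Fin d) (Fin d) ℂ) (c : J × Fin d → ℝ) (κ : ℝ), 0 ≤ c →
        IsSemistable (flags U) c κ → IsSemistable (flags H) c κ := by
  obtain ⟨H, hH⟩ := exists_denseRange_map J (Fin d) (Fin d)
  refine ⟨H, fun j hj => ?_, fun U c κ hc hU r p hp => ?_⟩
  · obtain ⟨τ, hτ⟩ := hH.exists_mem_open
      (s := (fun H : J → Matrix (Fin d) (Fin d) ℂ => (H j).det) ⁻¹' {0}ᶜ)
      (isOpen_compl_singleton.preimage (by fun_prop)) ⟨1, by simp⟩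
    exact hτ ((RingHom.map_det τ (H j)).symm.trans (by rw [hj, map_zero]))
  · have hcont : Continuous fun (H : J → Matrix (Fin d) (Fin d) ℂ) => flags H :=
      continuous_pi fun k => (continuous_leadingCols k.2).comp (continuous_apply k.1)
    obtain ⟨τ, hτ⟩ := hH.exists_mem_open isOpen_interior
      ⟨U, mem_interior_iff_mem_nhds.mpr <| hcont.continuousAt.eventually
        (eventually_forall_exists_rank_mul_le _ r)⟩
    obtain ⟨q, hq, hqp⟩ := exists_rank_mul_map_le (flags H) τ hp
    obtain ⟨q₀, hq₀, hq₀q⟩ := interior_subset hτ q hq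
    refine (hU r q₀ hq₀).trans (sum_le_sum fun k _ => mul_le_mul_of_nonneg_left ?_ (hc k))
    exact_mod_cast (hq₀q k).trans (hqp k)

/-! ### The Kempf–Ness functional -/

section Det

variable {n : Type*} [Fintype n] [DecidableEq n]

lemma one_le_re_det_one_add {B : Matrix n n ℂ} (hB : B.PosSemidef) : 1 ≤ (1 + B).det.re := by
  obtain ⟨U, hU, hUB⟩ := exists_conjDiag_eq hB.isHermitian
  have hdet : (1 + B).det = ((∏ i, (1 + hB.isHermitian.eigenvalues i) : ℝ) : ℂ) := by
    have hone : (1 : Matrix n n ℂ) = conjDiag U fun _ => 1 := by simp [conjDiag_const hU]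
    conv_lhs => rw [← hUB, hone, ← conjDiag_add, det_conjDiag hU]
    exact (Complex.ofReal_prod _ _).symm
  rw [hdet, Complex.ofReal_re]
  exact one_le_prod fun i _ => le_add_of_nonneg_right (hB.eigenvalues_nonneg i)

lemma re_det_conjTranspose_mul_mul (C B : Matrix n n ℂ) :
    (Cᴴ * B * C).det.re = ‖C.det‖ ^ 2 * B.det.re := by
  rw [det_mul, det_mul, det_conjTranspose, mul_right_comm, Complex.star_def, Complex.conj_mul',
    ← Complex.ofReal_pow, Complex.re_ofReal_mul]

lemma sq_norm_det_le_re_det_add (C : Matrix n n ℂ) {B : Matrix n n ℂ} (hB : B.PosSemidef) :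
    ‖C.det‖ ^ 2 ≤ (Cᴴ * C + B).det.re := by
  rcases eq_or_ne C.det 0 with hC | hC
  · rw [hC, norm_zero, zero_pow two_ne_zero]
    exact (Complex.le_def.mp ((posSemidef_conjTranspose_mul_self C).add hB).det_nonneg).1
  have hu : IsUnit C.det := isUnit_iff_ne_zero.mpr hC
  have hfactor : Cᴴ * C + B = Cᴴ * (1 + (C⁻¹)ᴴ * B * C⁻¹) * C := by
    have hinv : Cᴴ * (C⁻¹)ᴴ = 1 := by
      rw [← conjTranspose_mul, nonsing_inv_mul C hu, conjTranspose_one]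
    simp only [Matrix.mul_add, Matrix.add_mul, Matrix.mul_one, ← Matrix.mul_assoc, hinv,
      Matrix.one_mul, nonsing_inv_mul_cancel_right _ _ hu]
  rw [hfactor, re_det_conjTranspose_mul_mul]
  exact le_mul_of_one_le_right (sq_nonneg _)
    (one_le_re_det_one_add (hB.conjTranspose_mul_mul_same C⁻¹))

lemma prod_mul_sq_norm_det_submatrix_le {m : Type*} [Fintype m] [DecidableEq m] (L : Matrix m n ℂ)
    {y : m → ℝ} (hy : 0 ≤ y) {σ : n → m} (hσ : Function.Injective σ) :
    (∏ c, y (σ c)) * ‖(L.submatrix σ id).det‖ ^ 2 ≤ (conjDiag Lᴴ y).det.re := by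
  let C : Matrix n n ℂ := diagonal (fun c => ((√(y (σ c)) : ℝ) : ℂ)) * L.submatrix σ id
  have hdet : ‖C.det‖ ^ 2 = (∏ c, y (σ c)) * ‖(L.submatrix σ id).det‖ ^ 2 := by
    rw [det_mul, det_diagonal, norm_mul, mul_pow, norm_prod, ← prod_pow]
    simp only [Complex.norm_real, Real.norm_eq_abs, sq_abs, Real.sq_sqrt (hy _)]
  have hC : Cᴴ * C = conjDiag Lᴴ ((Set.range σ).indicator y) := by
    ext a b
    rw [conjDiag_apply, Matrix.mul_apply]
    refine Fintype.sum_of_injective σ hσ _ _ (fun r hr => ?_) fun c => ?_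
    · simp [Set.indicator_of_notMem hr]
    · have hsqrt : ((√(y (σ c)) : ℝ) : ℂ) * (√(y (σ c)) : ℝ) = y (σ c) := by
        rw [← Complex.ofReal_mul, Real.mul_self_sqrt (hy _)]
      simp only [C, conjTranspose_apply, diagonal_mul, submatrix_apply, id_eq, star_mul',
        Set.indicator_of_mem (Set.mem_range_self c), Complex.star_def,
        Complex.conj_ofReal, Complex.conj_conj, ← hsqrt]
      ring
  rw [← hdet, ← Set.indicator_self_add_compl (Set.range σ) y, conjDiag_add, ← hC]
  exact sq_norm_det_le_re_det_add C
    (conjDiag_posSemidef _ (Set.indicator_nonneg fun r _ => hy r))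

end Det

section Pivots

variable {K V I : Type*} [Field K] [AddCommGroup V] [Module K V] [LinearOrder I]

variable (K) in
/-- The indices at which a family of vectors, read in increasing order, leaves the span of its
preceding members. -/
def pivots (v : I → V) : Set I := {r | v r ∉ Submodule.span K (v '' Set.Iio r)}

lemma span_image_le_span_image_inter_pivots [WellFoundedLT I] (v : I → V) {S : Set I}
    (hS : IsLowerSet S) :
    Submodule.span K (v '' S) ≤ Submodule.span K (v '' (S ∩ pivots K v)) := by
  rw [Submodule.span_le, Set.image_subset_iff]
  intro r
  induction r using WellFoundedLT.induction with
  | ind r ih =>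
    intro hr
    by_cases hpivot : r ∈ pivots K v
    · exact Submodule.subset_span ⟨r, ⟨hr, hpivot⟩, rfl⟩
    · have hle : Submodule.span K (v '' Set.Iio r) ≤ Submodule.span K (v '' (S ∩ pivots K v)) :=
        Submodule.span_le.mpr (Set.image_subset_iff.mpr fun s hs => ih s hs (hS hs.le hr))
      exact hle (not_not.mp hpivot)

lemma linearIndepOn_pivots (v : I → V) : LinearIndepOn K v (pivots K v) := by
  refine linearIndepOn_iff_linearIndepOn_finset.mpr fun s hs => ?_
  induction s using Finset.induction_on_max with
  | empty => simp
  | insert r s hlt ih =>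
    rw [coe_insert, Set.insert_subset_iff] at hs
    rw [coe_insert]
    exact (ih hs.2).insert fun hr => hs.1 (Submodule.span_mono (Set.image_mono hlt) hr)

end Pivots

/-- The pivot rows span every initial segment of the rows. -/
lemma exists_submatrix_det_ne_zero_of_rank_eq_card {m n K : Type*} [Field K] [Finite m]
    [LinearOrder m] [Fintype n] [DecidableEq n] (M : Matrix m n K)
    (hM : M.rank = Fintype.card n) :
    ∃ σ : n → m, Function.Injective σ ∧ (M.submatrix σ id).det ≠ 0 ∧
      ∀ r, (M.submatrix (Subtype.val : {q // q ≤ r} → m) id).rank ≤ #{c | σ c ≤ r} := by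
  classical
  have _ := Fintype.ofFinite m
  have hindep : LinearIndependent K fun t : pivots K M.row => M.row t := linearIndepOn_pivots M.row
  have hcard : Fintype.card n = Fintype.card (pivots K M.row) := by
    have hspan : Submodule.span K (Set.range M.row) = Submodule.span K (M.row '' pivots K M.row) :=
      le_antisymm (by simpa using span_image_le_span_image_inter_pivots M.row isLowerSet_univ)
        (Submodule.span_mono (Set.image_subset_range _ _))
    rw [← hM, rank_eq_finrank_span_row, hspan, Set.image_eq_range, finrank_span_eq_card hindep]
  let e : n ≃ pivots K M.row := Fintype.equivOfCardEq hcard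
  refine ⟨fun c => e c, Subtype.val_injective.comp e.injective, ?_, fun r => ?_⟩
  · have hrows : LinearIndependent K (M.submatrix (fun c => (e c : m)) id).row :=
      hindep.comp e e.injective
    rwa [linearIndependent_rows_iff_isUnit, isUnit_iff_isUnit_det, isUnit_iff_ne_zero] at hrows
  · have hinit : M.row '' (Set.Iic r ∩ pivots K M.row) ⊆
        Set.range fun c : {c // (e c : m) ≤ r} => M.row (e c) := by
      rintro _ ⟨q, ⟨hqr, hq⟩, rfl⟩
      exact ⟨⟨e.symm ⟨q, hq⟩, by simpa using hqr⟩, by simp⟩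
    calc (M.submatrix (Subtype.val : {q // q ≤ r} → m) id).rank
        = Module.finrank K (Submodule.span K (M.row '' Set.Iic r)) := by
          rw [rank_eq_finrank_span_row, Set.image_eq_range]; rfl
      _ ≤ Module.finrank K (Submodule.span K
            (Set.range fun c : {c // (e c : m) ≤ r} => M.row (e c))) :=
          Submodule.finrank_mono
            ((span_image_le_span_image_inter_pivots M.row (isLowerSet_Iic r)).trans
              (Submodule.span_mono hinit))
      _ ≤ #{c | (e c : m) ≤ r} :=
          (finrank_range_le_card _).trans_eq (Fintype.card_subtype _)

lemma rank_leadingCols {d : ℕ} {N : Matrix (Fin d) (Fin d) ℂ} (hN : N.det ≠ 0) (i : Fin d) :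
    (leadingCols N i).rank = Fintype.card {c : Fin d // c ≤ i} := by
  have hcols : LinearIndependent ℂ N.col :=
    linearIndependent_cols_iff_isUnit.mpr ((isUnit_iff_isUnit_det N).mpr hN.isUnit)
  rw [← rank_transpose]
  exact LinearIndependent.rank_matrix (hcols.comp Subtype.val Subtype.val_injective)

namespace IsSemistable

variable {m ι : Type*} [Fintype m] [Fintype ι] {n : ι → Type*} [∀ k, Fintype (n k)]
  {L : ∀ k, Matrix m (n k) ℂ} {c : ι → ℝ} {κ : ℝ}

lemma mul_card_le (h : IsSemistable L c κ) {l : Type*} [Fintype l] [DecidableEq l]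
    {p : Matrix l m ℂ} (hp : p * pᴴ = 1) : κ * Fintype.card l ≤ ∑ k, c k * (p * L k).rank := by
  let e := (Fintype.equivFin l).symm
  have hrank (k : ι) : (p.submatrix e id * L k).rank = (p * L k).rank :=
    rank_submatrix (p * L k) e (Equiv.refl _)
  simpa only [hrank] using h _ (p.submatrix e id) <| by
    rw [conjTranspose_submatrix, ← submatrix_mul p pᴴ e id e Function.bijective_id, hp,
      submatrix_one_equiv]

lemma unitary_mul [DecidableEq m] (h : IsSemistable L c κ) {U : Matrix m m ℂ}
    (hU : U ∈ unitaryGroup m ℂ) : IsSemistable (fun k => U * L k) c κ := by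
  intro r p hp
  simp only [← Matrix.mul_assoc]
  refine h r (p * U) ?_
  rw [conjTranspose_mul, Matrix.mul_assoc, ← Matrix.mul_assoc U, ← star_eq_conjTranspose U,
    mem_unitaryGroup_iff.mp hU, Matrix.one_mul, hp]

end IsSemistable

section KempfNess

variable {d : ℕ} {ι : Type*} [Fintype ι] {n : ι → Type*} [∀ k, Fintype (n k)]
  [∀ k, DecidableEq (n k)] {L : ∀ k, Matrix (Fin d) (n k) ℂ} {c : ι → ℝ} {κ : ℝ}

lemma exists_selection (hc : 0 ≤ c) (hL : ∀ k, (L k).rank = Fintype.card (n k))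
    (hs : IsSemistable L c κ) (hbal : ∑ k, c k * Fintype.card (n k) = κ * d) :
    ∃ σ : ∀ k, n k → Fin d, (∀ k, Function.Injective (σ k)) ∧
      (∀ k, ((L k).submatrix (σ k) id).det ≠ 0) ∧
      ∀ x : Fin d → ℝ, Antitone x → κ * ∑ r, x r ≤ ∑ k, c k * ∑ a, x (σ k a) := by
  choose σ hσ hdet hrank using fun k => exists_submatrix_det_ne_zero_of_rank_eq_card (L k) (hL k)
  refine ⟨σ, hσ, hdet, fun x hx => ?_⟩
  let u : Fin d → ℝ := fun r => ∑ k, c k * #{a | σ k a = r} - κ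
  have hu (s : Finset (Fin d)) (z : Fin d → ℝ) : ∑ r ∈ s, z r * u r =
      ∑ k, c k * ∑ a with σ k a ∈ s, z (σ k a) - κ * ∑ r ∈ s, z r := by
    simp only [← sum_fiberwise_eq_sum_filter', u, mul_sub, sum_sub_distrib, sum_const, mul_sum,
      nsmul_eq_mul]
    rw [sum_comm]
    exact congrArg₂ _ (sum_congr rfl fun k _ => sum_congr rfl fun r _ => by ring)
      (sum_congr rfl fun r _ => mul_comm _ _)
  have hpartial (j : Fin d) : 0 ≤ ∑ r ∈ Iic j, u r := by
    let p : Matrix {r // r ≤ j} (Fin d) ℂ := submatrix 1 Subtype.val id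
    have hp : p * pᴴ = 1 := by
      rw [conjTranspose_submatrix, ← submatrix_mul _ _ _ _ _ Function.bijective_id,
        conjTranspose_one, Matrix.one_mul, submatrix_one _ Subtype.val_injective]
    have hpL (k : ι) : p * L k = (L k).submatrix Subtype.val id :=
      (submatrix_mul 1 (L k) _ _ _ Function.bijective_id).symm.trans (by rw [Matrix.one_mul]; rfl)
    have hsum := hu (Iic j) 1
    simp only [Pi.one_apply, one_mul, sum_const, nsmul_eq_mul, mul_one, mem_Iic] at hsum
    have hcard : Fintype.card {r // r ≤ j} = #(Iic j) := Fintype.card_of_subtype _ (by simp)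
    rw [hsum, sub_nonneg, ← hcard]
    refine (hs.mul_card_le hp).trans (sum_le_sum fun k _ => mul_le_mul_of_nonneg_left ?_ (hc k))
    exact_mod_cast hpL k ▸ hrank k j
  have htotal : ∑ r, u r = 0 := by
    simpa [hbal] using hu univ 1
  have := sum_mul_nonneg_of_antitone hx hpartial htotal
  rw [hu] at this
  simpa using this

/-- The functional on positive definite matrices whose critical points are the `X = gᴴ * g` for
which the weighted sum of the orthogonal projections onto the column spaces of the `g * L k` is
`κ • 1`. -/
noncomputable def kempfNess {m ι : Type*} [Fintype m] [DecidableEq m] [Fintype ι] {n : ι → Type*}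
    [∀ k, Fintype (n k)] [∀ k, DecidableEq (n k)] (L : ∀ k, Matrix m (n k) ℂ) (c : ι → ℝ) (κ : ℝ)
    (X : Matrix m m ℂ) : ℝ :=
  ∑ k, c k * Real.log ((L k)ᴴ * X * L k).det.re - κ * Real.log X.det.re

lemma sum_add_log_le_log_re_det {m n : Type*} [Fintype m] [DecidableEq m] [Fintype n]
    [DecidableEq n] {L : Matrix m n ℂ} {σ : n → m} (hσ : Function.Injective σ) {δ : ℝ} (hδ : 0 < δ)
    (hL : δ ≤ ‖(L.submatrix σ id).det‖) (x : m → ℝ) :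
    ∑ a, x (σ a) + Real.log (δ ^ 2) ≤
      Real.log (conjDiag Lᴴ fun r => Real.exp (x r)).det.re := by
  have hprod : ∑ a, x (σ a) = Real.log (∏ a, Real.exp (x (σ a))) := by
    rw [← Real.exp_sum, Real.log_exp]
  have hpos : 0 < ∏ a, Real.exp (x (σ a)) := prod_pos fun _ _ => Real.exp_pos _
  rw [hprod, ← Real.log_mul hpos.ne' (by positivity)]
  refine Real.log_le_log (by positivity) ?_
  calc (∏ a, Real.exp (x (σ a))) * δ ^ 2
      ≤ (∏ a, Real.exp (x (σ a))) * ‖(L.submatrix σ id).det‖ ^ 2 := by gcongr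
    _ ≤ _ := prod_mul_sq_norm_det_submatrix_le L (fun r => (Real.exp_pos (x r)).le) hσ

open Filter Topology in
lemma exists_eventually_le_kempfNess (hc : 0 ≤ c) (hL : ∀ k, (L k).rank = Fintype.card (n k))
    (hs : IsSemistable L c κ) (hbal : ∑ k, c k * Fintype.card (n k) = κ * d)
    {U₀ : Matrix (Fin d) (Fin d) ℂ} (hU₀ : U₀ ∈ unitaryGroup (Fin d) ℂ) :
    ∃ b : ℝ, ∀ᶠ U in 𝓝 U₀, U ∈ unitaryGroup (Fin d) ℂ → ∀ x : Fin d → ℝ, Antitone x →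
      b ≤ kempfNess L c κ (conjDiag U fun r => Real.exp (x r)) := by
  have hU₀' : U₀ᴴ ∈ unitaryGroup (Fin d) ℂ := Unitary.star_mem hU₀
  obtain ⟨σ, hσ, hdet, hle⟩ := exists_selection (L := fun k => U₀ᴴ * L k) hc
    (fun k => by rw [rank_mul_eq_right_of_isUnit_det _ _ (UnitaryGroup.det_isUnit ⟨_, hU₀'⟩), hL k])
    (hs.unitary_mul hU₀') hbal
  let D (U : Matrix (Fin d) (Fin d) ℂ) (k : ι) : ℝ := ‖((Uᴴ * L k).submatrix (σ k) id).det‖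
  have hev : ∀ᶠ U in 𝓝 U₀, ∀ k, D U₀ k / 2 < D U k := by
    refine eventually_all.mpr fun k => ?_
    have hcont : Continuous fun U => D U k :=
      ((continuous_id.matrix_conjTranspose.matrix_mul continuous_const).matrix_submatrix
        _ _).matrix_det.norm
    exact (hcont.tendsto U₀).eventually
      (lt_mem_nhds (half_lt_self (norm_pos_iff.mpr (hdet k))))
  refine ⟨∑ k, c k * Real.log ((D U₀ k / 2) ^ 2), hev.mono fun U hD hU x hx => ?_⟩
  have hterm (k : ι) : ∑ a, x (σ k a) + Real.log ((D U₀ k / 2) ^ 2) ≤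
      Real.log ((L k)ᴴ * conjDiag U (fun r => Real.exp (x r)) * L k).det.re := by
    have := sum_add_log_le_log_re_det (hσ k) (half_pos (norm_pos_iff.mpr (hdet k))) (hD k).le x
    rwa [conjTranspose_mul, conjTranspose_conjTranspose, ← mul_conjDiag_mul,
      conjTranspose_conjTranspose] at this
  have hlogdet : Real.log (conjDiag U fun r => Real.exp (x r)).det.re = ∑ r, x r := by
    rw [det_conjDiag hU, ← Complex.ofReal_prod, Complex.ofReal_re, ← Real.exp_sum, Real.log_exp]
  have hsum := sum_le_sum fun k (_ : k ∈ univ) => mul_le_mul_of_nonneg_left (hterm k) (hc k)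
  simp only [mul_add, sum_add_distrib] at hsum
  rw [kempfNess, hlogdet]
  linarith [hle x hx]

lemma exists_forall_le_kempfNess (hc : 0 ≤ c) (hL : ∀ k, (L k).rank = Fintype.card (n k))
    (hs : IsSemistable L c κ) (hbal : ∑ k, c k * Fintype.card (n k) = κ * d) :
    ∃ b : ℝ, ∀ X : Matrix (Fin d) (Fin d) ℂ, X.PosDef → b ≤ kempfNess L c κ X := by
  have hunitary : ∃ b : ℝ, ∀ U ∈ {U : Matrix (Fin d) (Fin d) ℂ | U * Uᴴ = 1},
      U ∈ unitaryGroup (Fin d) ℂ → ∀ x : Fin d → ℝ, Antitone x →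
        b ≤ kempfNess L c κ (conjDiag U fun r => Real.exp (x r)) := by
    refine isCompact_setOf_mul_conjTranspose_eq_one.induction_on
      (p := fun s => ∃ b : ℝ, ∀ U ∈ s, U ∈ unitaryGroup (Fin d) ℂ → ∀ x : Fin d → ℝ, Antitone x →
        b ≤ kempfNess L c κ (conjDiag U fun r => Real.exp (x r)))
      ⟨0, by simp⟩ (fun s t hst ⟨b, hb⟩ => ⟨b, fun U hU => hb U (hst hU)⟩) ?_ ?_
    · rintro s t ⟨b, hb⟩ ⟨b', hb'⟩
      exact ⟨min b b', fun U hU h x hx => hU.elim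
        (fun hU => (min_le_left _ _).trans (hb U hU h x hx))
        (fun hU => (min_le_right _ _).trans (hb' U hU h x hx))⟩
    · intro U₀ hU₀
      obtain ⟨b, hb⟩ := exists_eventually_le_kempfNess hc hL hs hbal (mem_unitaryGroup_iff.mpr hU₀)
      exact ⟨_, mem_nhdsWithin_of_mem_nhds hb, b, fun U hU => hU⟩
  obtain ⟨b, hb⟩ := hunitary
  refine ⟨b, fun X hX => ?_⟩
  obtain ⟨U, hU, hUX⟩ := exists_conjDiag_eigsDesc_eq hX.isHermitian
  have hpos : ∀ i, 0 < eigsDesc X i := eigsDesc_pos hX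
  have := hb U (mem_unitaryGroup_iff.mp hU) hU (fun i => Real.log (eigsDesc X i))
    fun i j hij => Real.log_le_log (hpos j) (eigsDesc_antitone X hij)
  simpa only [Real.exp_log (hpos _), hUX] using this

end KempfNess

/-! ### Descent to a tight family -/

section LogDet

lemma log_re_det_le {n : Type*} [Fintype n] [DecidableEq n] {Y : Matrix n n ℂ} (hY : Y.PosDef) :
    Real.log Y.det.re ≤ Y.trace.re - Fintype.card n := by
  have hdet : Y.det.re = ∏ i, hY.isHermitian.eigenvalues i := by
    rw [hY.isHermitian.det_eq_prod_eigenvalues]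
    norm_cast
  have htrace : Y.trace.re = ∑ i, hY.isHermitian.eigenvalues i := by
    rw [hY.isHermitian.trace_eq_sum_eigenvalues]
    norm_cast
  rw [hdet, htrace, Real.log_prod fun i _ => (hY.eigenvalues_pos i).ne']
  calc ∑ i, Real.log (hY.isHermitian.eigenvalues i)
      ≤ ∑ i, (hY.isHermitian.eigenvalues i - 1) :=
        sum_le_sum fun i _ => Real.log_le_sub_one_of_pos (hY.eigenvalues_pos i)
    _ = _ := by simp [sum_sub_distrib]

lemma neg_log_one_sub_le {u : ℝ} (hu : |u| ≤ 1 / 2) : -Real.log (1 - u) ≤ u + 2 * u ^ 2 := by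
  have hu' := abs_le.mp hu
  have hpos : 0 < 1 - u := by linarith
  have hinv : (1 - u)⁻¹ ≤ 1 + u + 2 * u ^ 2 := by
    rw [inv_le_iff_one_le_mul₀ hpos]
    nlinarith [mul_nonneg (sq_nonneg u) (by linarith : 0 ≤ 1 - 2 * u)]
  linarith [Real.one_sub_inv_le_log_of_pos hpos]

variable {d : ℕ} {M : Matrix (Fin d) (Fin d) ℂ} {t : ℝ}

lemma exists_conjDiag_eq_one_sub_smul (hM : M.IsHermitian) (t : ℝ) :
    ∃ U ∈ unitaryGroup (Fin d) ℂ, conjDiag U (fun i => 1 - t * eigsDesc M i) = 1 - (t : ℂ) • M := by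
  obtain ⟨U, hU, hUM⟩ := exists_conjDiag_eigsDesc_eq hM
  refine ⟨U, hU, ?_⟩
  conv_rhs => rw [← hUM, ← conjDiag_smul]
  rw [← one_smul ℂ (1 : Matrix _ _ ℂ), ← Complex.ofReal_one, ← conjDiag_const hU, ← conjDiag_sub]
  rfl

lemma abs_mul_eigsDesc_le (hM : M.IsHermitian) (ht : t ^ 2 * (M * M).trace.re ≤ 1 / 4)
    (i : Fin d) : |t * eigsDesc M i| ≤ 1 / 2 := by
  refine abs_le_of_sq_le_sq ?_ (by norm_num)
  calc (t * eigsDesc M i) ^ 2 = t ^ 2 * eigsDesc M i ^ 2 := mul_pow _ _ _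
    _ ≤ t ^ 2 * ∑ i, eigsDesc M i ^ 2 := by
        gcongr
        exact single_le_sum (f := fun i => eigsDesc M i ^ 2) (fun _ _ => sq_nonneg _) (mem_univ i)
    _ ≤ (1 / 2) ^ 2 := by
        rw [← re_trace_mul_self hM]
        exact ht.trans_eq (by norm_num)

lemma one_sub_mul_eigsDesc_pos (hM : M.IsHermitian) (ht : t ^ 2 * (M * M).trace.re ≤ 1 / 4)
    (i : Fin d) : 0 < 1 - t * eigsDesc M i := by
  linarith [(abs_le.mp (abs_mul_eigsDesc_le hM ht i)).2]

lemma posDef_one_sub_smul (hM : M.IsHermitian) (ht : t ^ 2 * (M * M).trace.re ≤ 1 / 4) :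
    (1 - (t : ℂ) • M).PosDef := by
  have hpos := one_sub_mul_eigsDesc_pos hM ht
  obtain ⟨U, hU, hUM⟩ := exists_conjDiag_eq_one_sub_smul hM t
  rw [← hUM, (conjDiag_posSemidef U fun i => (hpos i).le).posDef_iff_det_ne_zero, det_conjDiag hU]
  exact prod_ne_zero_iff.mpr fun i _ => Complex.ofReal_ne_zero.mpr (hpos i).ne'

lemma neg_log_re_det_one_sub_smul_le (hM : M.IsHermitian)
    (ht : t ^ 2 * (M * M).trace.re ≤ 1 / 4) :
    -Real.log (1 - (t : ℂ) • M).det.re ≤ t * M.trace.re + 2 * t ^ 2 * (M * M).trace.re := by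
  have hpos := one_sub_mul_eigsDesc_pos hM ht
  obtain ⟨U, hU, hUM⟩ := exists_conjDiag_eq_one_sub_smul hM t
  rw [← hUM, det_conjDiag hU, ← Complex.ofReal_prod, Complex.ofReal_re,
    Real.log_prod fun i _ => (hpos i).ne', ← sum_neg_distrib]
  calc ∑ i, -Real.log (1 - t * eigsDesc M i)
      ≤ ∑ i, (t * eigsDesc M i + 2 * (t * eigsDesc M i) ^ 2) :=
        sum_le_sum fun i _ => neg_log_one_sub_le (abs_mul_eigsDesc_le hM ht i)
    _ = _ := by
        rw [re_trace_mul_self hM, re_trace_eq_sum_eigsDesc hM, mul_sum, mul_sum,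
          ← sum_add_distrib]
        exact sum_congr rfl fun i _ => by ring

end LogDet

/-- The deviation of the weighted sum of the `Q k * (Q k)ᴴ` from `κ • 1`. For `Q k` with orthonormal
columns it is the gradient of `kempfNess Q c κ` at the identity. -/
noncomputable def tightnessDefect {m ι : Type*} [DecidableEq m] [Fintype ι] {n : ι → Type*}
    [∀ k, Fintype (n k)] (Q : ∀ k, Matrix m (n k) ℂ) (c : ι → ℝ) (κ : ℝ) : Matrix m m ℂ :=
  ∑ k, c k • (Q k * (Q k)ᴴ) - (κ : ℂ) • 1

lemma isHermitian_tightnessDefect {m ι : Type*} [DecidableEq m] [Fintype ι] {n : ι → Type*}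
    [∀ k, Fintype (n k)] (Q : ∀ k, Matrix m (n k) ℂ) (c : ι → ℝ) (κ : ℝ) :
    (tightnessDefect Q c κ).IsHermitian := by
  simp [tightnessDefect, IsHermitian, conjTranspose_sum]

section Descent

variable {d : ℕ} {ι : Type*} [Fintype ι] {n : ι → Type*} [∀ k, Fintype (n k)]
  {c : ι → ℝ} {κ : ℝ}

lemma sum_mul_re_trace_mul_eq (Q : ∀ k, Matrix (Fin d) (n k) ℂ) (c : ι → ℝ) (κ : ℝ)
    (M : Matrix (Fin d) (Fin d) ℂ) :
    ∑ k, c k * (M * (Q k * (Q k)ᴴ)).trace.re =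
      (M * tightnessDefect Q c κ).trace.re + κ * M.trace.re := by
  simp [tightnessDefect, Matrix.mul_sub, Matrix.mul_sum, trace_sum]

variable [∀ k, DecidableEq (n k)]

lemma kempfNess_conjTranspose_mul_mul (L : ∀ k, Matrix (Fin d) (n k) ℂ) (c : ι → ℝ) (κ : ℝ)
    {g X : Matrix (Fin d) (Fin d) ℂ} (hg : g.det ≠ 0) (hX : X.PosDef) :
    kempfNess L c κ (gᴴ * X * g) =
      kempfNess (fun k => g * L k) c κ X - κ * Real.log (‖g.det‖ ^ 2) := by
  have hterm (k : ι) : (L k)ᴴ * (gᴴ * X * g) * L k = (g * L k)ᴴ * X * (g * L k) := by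
    simp only [conjTranspose_mul, Matrix.mul_assoc]
  rw [kempfNess, kempfNess, re_det_conjTranspose_mul_mul, Real.log_mul
    (pow_ne_zero 2 (norm_ne_zero_iff.mpr hg)) (Complex.pos_iff.mp hX.det_pos).1.ne']
  simp only [hterm]
  ring

lemma log_re_det_conjTranspose_mul_one_sub_smul_mul_le {n : Type*} [Fintype n] [DecidableEq n]
    {Q : Matrix (Fin d) n ℂ} (hQ : Qᴴ * Q = 1) {T : Matrix n n ℂ} (hT : T.det ≠ 0)
    {M : Matrix (Fin d) (Fin d) ℂ} {t : ℝ} (hY : (1 - (t : ℂ) • M).PosDef) :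
    Real.log ((Q * T)ᴴ * (1 - (t : ℂ) • M) * (Q * T)).det.re ≤
      Real.log ((Q * T)ᴴ * (1 : Matrix (Fin d) (Fin d) ℂ) * (Q * T)).det.re -
        t * (M * (Q * Qᴴ)).trace.re := by
  have hfactor (B : Matrix (Fin d) (Fin d) ℂ) :
      (Q * T)ᴴ * B * (Q * T) = Tᴴ * (Qᴴ * B * Q) * T := by
    simp only [conjTranspose_mul, Matrix.mul_assoc]
  have hinj : Function.Injective Q.mulVec :=
    Function.LeftInverse.injective (g := Qᴴ.mulVec) fun x => by
      rw [mulVec_mulVec, hQ, one_mulVec]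
  have hZ := hY.conjTranspose_mul_mul_same hinj
  have htrace : (Qᴴ * (1 - (t : ℂ) • M) * Q).trace.re =
      Fintype.card n - t * (M * (Q * Qᴴ)).trace.re := by
    rw [Matrix.mul_sub, Matrix.sub_mul, Matrix.mul_one, hQ, Matrix.mul_smul, Matrix.smul_mul,
      trace_sub, trace_one, trace_smul, Matrix.mul_assoc, Matrix.trace_mul_comm, Matrix.mul_assoc]
    simp
  rw [hfactor, hfactor, Matrix.mul_one, hQ, re_det_conjTranspose_mul_mul,
    re_det_conjTranspose_mul_mul, det_one, Complex.one_re, mul_one, Real.log_mul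
      (pow_ne_zero 2 (norm_ne_zero_iff.mpr hT)) (Complex.pos_iff.mp hZ.det_pos).1.ne']
  linarith [log_re_det_le hZ]

lemma kempfNess_one_sub_smul_tightnessDefect_le (hc : 0 ≤ c) (hκ : 0 ≤ κ)
    {Q : ∀ k, Matrix (Fin d) (n k) ℂ} (hQ : ∀ k, (Q k)ᴴ * Q k = 1)
    {T : ∀ k, Matrix (n k) (n k) ℂ} (hT : ∀ k, (T k).det ≠ 0)
    {M : Matrix (Fin d) (Fin d) ℂ} (hM : M = tightnessDefect Q c κ)
    {t : ℝ} (ht : t ^ 2 * (M * M).trace.re ≤ 1 / 4) :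
    kempfNess (fun k => Q k * T k) c κ (1 - (t : ℂ) • M) ≤
      kempfNess (fun k => Q k * T k) c κ 1 - t * (1 - 2 * κ * t) * (M * M).trace.re := by
  have hherm : M.IsHermitian := hM ▸ isHermitian_tightnessDefect Q c κ
  have hY := posDef_one_sub_smul hherm ht
  have hterms := sum_le_sum fun k (_ : k ∈ univ) => mul_le_mul_of_nonneg_left
    (log_re_det_conjTranspose_mul_one_sub_smul_mul_le (hQ k) (hT k) hY) (hc k)
  have hsum := sum_mul_re_trace_mul_eq Q c κ M
  rw [← hM] at hsum
  simp only [mul_sub, sum_sub_distrib, mul_left_comm _ t, ← mul_sum, hsum] at hterms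
  have hlog := mul_le_mul_of_nonneg_left (neg_log_re_det_one_sub_smul_le hherm ht) hκ
  simp only [kempfNess, det_one, Complex.one_re, Real.log_one]
  linarith

end Descent

section Flags

variable {d : ℕ}

lemma exists_unitary_leadingCols_eq_mul (N : Matrix (Fin d) (Fin d) ℂ) :
    ∃ Q ∈ unitaryGroup (Fin d) ℂ, ∀ i, ∃ T : Matrix {c // c ≤ i} {c // c ≤ i} ℂ,
      leadingCols N i = leadingCols Q i * T := by
  let f (c : Fin d) : EuclideanSpace ℂ (Fin d) := WithLp.toLp 2 fun r => N r c
  have hfr : Module.finrank ℂ (EuclideanSpace ℂ (Fin d)) = Fintype.card (Fin d) := by simp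
  let b := InnerProductSpace.gramSchmidtOrthonormalBasis hfr f
  let Q : Matrix (Fin d) (Fin d) ℂ := of fun r c => b c r
  have hinner (x y : EuclideanSpace ℂ (Fin d)) : inner ℂ x y = ∑ r, star (x r) * y r := by
    simp [PiLp.inner_apply, mul_comm]
  have hQ : Qᴴ * Q = 1 := by
    ext a c
    rw [Matrix.mul_apply, Matrix.one_apply, ← orthonormal_iff_ite.mp b.orthonormal a c, hinner]
    rfl
  have htri (a c : Fin d) (hca : c < a) : (Qᴴ * N) a c = 0 := by
    rw [Matrix.mul_apply,
      ← InnerProductSpace.gramSchmidtOrthonormalBasis_inv_triangular hfr f hca, hinner]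
    rfl
  refine ⟨Q, mem_unitaryGroup_iff'.mpr hQ,
    fun i => ⟨(Qᴴ * N).submatrix Subtype.val Subtype.val, ?_⟩⟩
  have hN : Q * (Qᴴ * N) = N := by rw [← Matrix.mul_assoc, mul_eq_one_comm.mp hQ, Matrix.one_mul]
  ext r c
  calc N r c = ∑ a, Q r a * (Qᴴ * N) a c := by rw [← Matrix.mul_apply, hN]
    _ = ∑ a ∈ Iic i, Q r a * (Qᴴ * N) a c := by
        refine (sum_subset (subset_univ _) fun a _ ha => ?_).symm
        rw [htri a c (c.2.trans_lt (by simpa using ha)), mul_zero]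
    _ = _ := sum_subtype (Iic i) (fun _ => mem_Iic) fun a => Q r a * (Qᴴ * N) a c

lemma det_ne_zero_of_leadingCols_eq_mul {N : Matrix (Fin d) (Fin d) ℂ} (hN : N.det ≠ 0) {i : Fin d}
    {Q : Matrix (Fin d) {c : Fin d // c ≤ i} ℂ}
    {T : Matrix {c : Fin d // c ≤ i} {c : Fin d // c ≤ i} ℂ} (h : leadingCols N i = Q * T) :
    T.det ≠ 0 := by
  refine det_ne_zero_of_left_inverse (B := N⁻¹.submatrix Subtype.val id * Q) ?_
  rw [Matrix.mul_assoc, ← h, leadingCols,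
    ← submatrix_mul _ _ _ _ _ Function.bijective_id, nonsing_inv_mul N hN.isUnit,
    submatrix_one _ Subtype.val_injective]

variable {J : Type*} [Fintype J] {H : J → Matrix (Fin d) (Fin d) ℂ} {c : J × Fin d → ℝ} {κ : ℝ}

lemma exists_kempfNess_le_sub (hH : ∀ j, (H j).det ≠ 0) (hc : 0 ≤ c) (hκ : 0 ≤ κ)
    {X : Matrix (Fin d) (Fin d) ℂ} (hX : X.PosDef) :
    ∃ U : J → Matrix (Fin d) (Fin d) ℂ, (∀ j, U j ∈ unitaryGroup (Fin d) ℂ) ∧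
      ∀ (M : Matrix (Fin d) (Fin d) ℂ) (t : ℝ), M = tightnessDefect (flags U) c κ →
        t ^ 2 * (M * M).trace.re ≤ 1 / 4 → ∃ X' : Matrix (Fin d) (Fin d) ℂ, X'.PosDef ∧
          kempfNess (flags H) c κ X' ≤
            kempfNess (flags H) c κ X - t * (1 - 2 * κ * t) * (M * M).trace.re := by
  obtain ⟨g, hg, rfl⟩ := exists_conjTranspose_mul_self_eq hX
  choose U hU T hT using fun j => exists_unitary_leadingCols_eq_mul (g * H j)
  refine ⟨U, hU, fun M t hM ht => ⟨gᴴ * (1 - (t : ℂ) • M) * g, ?_, ?_⟩⟩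
  all_goals have hY := posDef_one_sub_smul (hM ▸ isHermitian_tightnessDefect (flags U) c κ) ht
  · refine hY.conjTranspose_mul_mul_same (mulVec_injective_of_isUnit ?_)
    exact (isUnit_iff_isUnit_det g).mpr hg.isUnit
  · have hQ (k : J × Fin d) : (flags U k)ᴴ * flags U k = 1 :=
      conjTranspose_leadingCols_mul_self (mem_unitaryGroup_iff'.mp (hU k.1)) k.2
    have hflags (k : J × Fin d) : g * flags H k = flags U k * T k.1 k.2 := hT k.1 k.2
    have hdetT (k : J × Fin d) : (T k.1 k.2).det ≠ 0 :=
      det_ne_zero_of_leadingCols_eq_mul (by rw [det_mul]; exact mul_ne_zero hg (hH k.1))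
        (hT k.1 k.2)
    have hone := kempfNess_conjTranspose_mul_mul (flags H) c κ hg PosDef.one
    rw [Matrix.mul_one] at hone
    rw [hone, kempfNess_conjTranspose_mul_mul _ _ _ hg hY]
    simp only [hflags]
    linarith [kempfNess_one_sub_smul_tightnessDefect_le hc hκ hQ hdetT hM ht]

lemma continuous_re_trace_tightnessDefect_flags_sq (c : J × Fin d → ℝ) (κ : ℝ) :
    Continuous fun U : J → Matrix (Fin d) (Fin d) ℂ =>
      (tightnessDefect (flags U) c κ * tightnessDefect (flags U) c κ).trace.re := by
  have hdefect : Continuous fun U : J → Matrix (Fin d) (Fin d) ℂ =>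
      tightnessDefect (flags U) c κ := by
    refine Continuous.sub (continuous_finsetSum _ fun k _ => ?_) continuous_const
    have hk : Continuous fun U : J → Matrix (Fin d) (Fin d) ℂ => flags U k :=
      (continuous_leadingCols k.2).comp (continuous_apply k.1)
    exact (hk.matrix_mul hk.matrix_conjTranspose).const_smul (c k)
  exact Complex.continuous_re.comp (hdefect.matrix_mul hdefect).matrix_trace

lemma isCompact_setOf_forall_mem_unitaryGroup (J : Type*) (d : ℕ) :
    IsCompact {U : J → Matrix (Fin d) (Fin d) ℂ | ∀ j, U j ∈ unitaryGroup (Fin d) ℂ} := by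
  have := isCompact_univ_pi fun _ : J => isCompact_setOf_mul_conjTranspose_eq_one (m := Fin d)
    (n := Fin d)
  simpa only [Set.pi, Set.mem_univ, forall_const, mem_unitaryGroup_iff, Set.mem_ofPred_eq,
    star_eq_conjTranspose] using this

/-- The functional is bounded below, but if the defect were bounded away from zero then steps of a
fixed length would decrease it by a fixed amount. -/
lemma exists_re_trace_tightnessDefect_sq_lt (hH : ∀ j, (H j).det ≠ 0) (hc : 0 ≤ c) (hκ : 0 ≤ κ)
    (hs : IsSemistable (flags H) c κ)
    (hbal : ∑ k : J × Fin d, c k * Fintype.card {i // i ≤ k.2} = κ * d) {δ : ℝ} (hδ : 0 < δ) :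
    ∃ U : J → Matrix (Fin d) (Fin d) ℂ, (∀ j, U j ∈ unitaryGroup (Fin d) ℂ) ∧
      (tightnessDefect (flags U) c κ * tightnessDefect (flags U) c κ).trace.re < δ := by
  by_contra! hfar
  obtain ⟨C, hC⟩ := (isCompact_setOf_forall_mem_unitaryGroup J d).bddAbove_image
    (continuous_re_trace_tightnessDefect_flags_sq c κ).continuousOn
  obtain ⟨t, ht, htC, htκ⟩ : ∃ t : ℝ, 0 < t ∧ t ^ 2 * C ≤ 1 / 4 ∧ 1 / 2 ≤ 1 - 2 * κ * t := by
    have hC₀ : 0 ≤ C := hδ.le.trans <| (hfar 1 fun _ => one_mem _).trans <|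
      hC ⟨1, fun _ => one_mem _, rfl⟩
    refine ⟨1 / (4 * (1 + C + κ)), by positivity, ?_, ?_⟩
    · rw [div_pow, div_mul_eq_mul_div, div_le_div_iff₀ (by positivity) (by norm_num)]
      nlinarith [mul_nonneg hC₀ hκ]
    · rw [mul_one_div, le_sub_comm, div_le_iff₀ (by positivity)]
      linarith
  obtain ⟨b, hb⟩ := exists_forall_le_kempfNess hc (fun k => rank_leadingCols (hH k.1) k.2) hs hbal
  let values : Set ℝ := kempfNess (flags H) c κ '' {X | X.PosDef}
  have hne : values.Nonempty := ⟨_, 1, PosDef.one, rfl⟩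
  have hbdd : BddBelow values := ⟨b, Set.forall_mem_image.mpr hb⟩
  obtain ⟨_, ⟨X, hX, rfl⟩, hXlt⟩ := Real.lt_sInf_add_pos hne
    (by positivity : 0 < t * (1 / 2) * δ)
  obtain ⟨U, hU, hstep⟩ := exists_kempfNess_le_sub hH hc hκ hX
  obtain ⟨X', hX', hle⟩ := hstep _ t rfl
    ((mul_le_mul_of_nonneg_left (hC ⟨U, hU, rfl⟩) (sq_nonneg t)).trans htC)
  have hinf := csInf_le hbdd ⟨X', hX', rfl⟩
  have hdecrease : t * (1 / 2) * δ ≤ t * (1 - 2 * κ * t) *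
      (tightnessDefect (flags U) c κ * tightnessDefect (flags U) c κ).trace.re := by
    have := hfar U hU
    gcongr
  linarith

lemma eq_zero_of_re_trace_mul_self_nonpos {m : Type*} [Fintype m] {M : Matrix m m ℂ}
    (hM : M.IsHermitian) (h : (M * M).trace.re ≤ 0) : M = 0 := by
  have hsq : Mᴴ * M = M * M := by rw [hM.eq]
  have hnonneg := Complex.nonneg_iff.mp (posSemidef_conjTranspose_mul_self M).trace_nonneg
  rw [hsq] at hnonneg
  rw [← trace_conjTranspose_mul_self_eq_zero_iff, hsq]
  exact Complex.ext (le_antisymm h hnonneg.1) hnonneg.2.symm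

lemma exists_tightnessDefect_eq_zero (hH : ∀ j, (H j).det ≠ 0) (hc : 0 ≤ c) (hκ : 0 ≤ κ)
    (hs : IsSemistable (flags H) c κ)
    (hbal : ∑ k : J × Fin d, c k * Fintype.card {i // i ≤ k.2} = κ * d) :
    ∃ U : J → Matrix (Fin d) (Fin d) ℂ, (∀ j, U j ∈ unitaryGroup (Fin d) ℂ) ∧
      tightnessDefect (flags U) c κ = 0 := by
  obtain ⟨U, hU, hmin⟩ := (isCompact_setOf_forall_mem_unitaryGroup J d).exists_isMinOn
    ⟨1, fun _ => one_mem _⟩ (continuous_re_trace_tightnessDefect_flags_sq c κ).continuousOn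
  refine ⟨U, hU, eq_zero_of_re_trace_mul_self_nonpos (isHermitian_tightnessDefect _ _ _) ?_⟩
  refine le_of_forall_pos_lt_add fun δ hδ => ?_
  obtain ⟨V, hV, hlt⟩ := exists_re_trace_tightnessDefect_sq_lt hH hc hκ hs hbal hδ
  rw [zero_add]
  exact (isMinOn_iff.mp hmin V hV).trans_lt hlt

end Flags

/-! ### Convexity of the spectra of sums -/

section Tight

variable {J : Type*} {d : ℕ}

/-- The weights on the members of the flags `U j` for which `∑ j, conjDiag (U j) (w j)` becomes a
weighted sum of projections. -/
noncomputable abbrev flagWeights (w : J → Fin d → ℝ) (k : J × Fin d) : ℝ :=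
  gap (w k.1) k.2

lemma isLinearMap_flagWeights :
    IsLinearMap ℝ (flagWeights : (J → Fin d → ℝ) → J × Fin d → ℝ) := by
  refine ⟨fun w w' => ?_, fun t w => ?_⟩ <;> ext k <;>
    simp only [gap, Pi.add_apply, Pi.smul_apply, smul_eq_mul] <;> split_ifs <;> ring

lemma convex_setOf_forall_antitone : Convex ℝ {w : J → Fin d → ℝ | ∀ j, Antitone (w j)} :=
  fun _ hw _ hw' _ _ ha hb _ j => ((hw j).const_smul ha).add ((hw' j).const_smul hb)

variable [Fintype J]

lemma tightnessDefect_flags (U : J → Matrix (Fin d) (Fin d) ℂ) (w : J → Fin d → ℝ) (κ : ℝ) :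
    tightnessDefect (flags U) (flagWeights w) κ = ∑ j, conjDiag (U j) (w j) - (κ : ℂ) • 1 := by
  rw [tightnessDefect, Fintype.sum_prod_type]
  exact congrArg (· - _) (sum_congr rfl fun j _ => sum_gap_smul_leadingCols (U j) (w j))

lemma sum_flagWeights_mul_card (w : J → Fin d → ℝ) :
    ∑ k : J × Fin d, flagWeights w k * Fintype.card {i // i ≤ k.2} = ∑ j, ∑ i, w j i := by
  rw [Fintype.sum_prod_type]
  refine sum_congr rfl fun j _ => ?_
  have hcard (i : Fin d) : Fintype.card {c // c ≤ i} = #(Iic i) :=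
    Fintype.card_of_subtype _ fun _ => mem_Iic
  simpa only [sum_const, smul_eq_mul, nsmul_eq_mul, mul_one, hcard] using
    sum_gap_smul (w j) fun _ => (1 : ℝ)

/-- Families of nonincreasing vectors that are the spectra of Hermitian matrices with sum
`κ • 1`. -/
def tightSpectra (J : Type*) [Fintype J] (d : ℕ) (κ : ℝ) : Set (J → Fin d → ℝ) :=
  {w | (∀ j, Antitone (w j)) ∧ ∃ U : J → Matrix (Fin d) (Fin d) ℂ,
    (∀ j, U j ∈ unitaryGroup (Fin d) ℂ) ∧ ∑ j, conjDiag (U j) (w j) = (κ : ℂ) • 1}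

lemma sum_eq_mul_of_mem_tightSpectra {w : J → Fin d → ℝ} {κ : ℝ} (hw : w ∈ tightSpectra J d κ) :
    ∑ j, ∑ i, w j i = κ * d := by
  obtain ⟨-, U, hU, hsum⟩ := hw
  have htrace := congrArg trace hsum
  simp only [trace_sum, trace_conjDiag (hU _), trace_smul, trace_one, Fintype.card_fin,
    smul_eq_mul] at htrace
  exact_mod_cast htrace

lemma exists_mem_tightSpectra_iff (J : Type*) [Fintype J] (d : ℕ) :
    ∃ H : J → Matrix (Fin d) (Fin d) ℂ, ∀ (w : J → Fin d → ℝ) (κ : ℝ),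
      (∀ j, Antitone (w j)) → 0 ≤ w → 0 ≤ κ →
        (w ∈ tightSpectra J d κ ↔
          IsSemistable (flags H) (flagWeights w) κ ∧ ∑ j, ∑ i, w j i = κ * d) := by
  obtain ⟨H, hdet, hgeneric⟩ := exists_generic_flags J d
  refine ⟨H, fun w κ hanti hw₀ hκ => ?_⟩
  have hc : 0 ≤ flagWeights w := fun k => gap_nonneg (hanti k.1) (hw₀ k.1) k.2
  constructor
  · intro hw
    obtain ⟨-, U, hU, hsum⟩ := id hw
    refine ⟨hgeneric U _ κ hc (isSemistable_of_sum_eq_smul_one hc (fun k => ?_) ?_),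
      sum_eq_mul_of_mem_tightSpectra hw⟩
    · exact conjTranspose_leadingCols_mul_self (mem_unitaryGroup_iff'.mp (hU k.1)) k.2
    · exact sub_eq_zero.mp ((tightnessDefect_flags U w κ).trans (sub_eq_zero.mpr hsum))
  · rintro ⟨hs, hbal⟩
    obtain ⟨U, hU, hzero⟩ := exists_tightnessDefect_eq_zero hdet hc hκ hs
      ((sum_flagWeights_mul_card w).trans hbal)
    exact ⟨hanti, U, hU, sub_eq_zero.mp ((tightnessDefect_flags U w κ).symm.trans hzero)⟩

lemma convex_setOf_isSemistable {m ι : Type*} [Fintype m] [Fintype ι] {n : ι → Type*}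
    [∀ k, Fintype (n k)] (L : ∀ k, Matrix m (n k) ℂ) (κ : ℝ) :
    Convex ℝ {c : ι → ℝ | IsSemistable L c κ} := by
  intro c hc c' hc' s t hs ht hst r p hp
  calc κ * r = s * (κ * r) + t * (κ * r) := by rw [← add_mul, hst, one_mul]
    _ ≤ s * ∑ k, c k * (p * L k).rank + t * ∑ k, c' k * (p * L k).rank := by
        gcongr
        exacts [hc r p hp, hc' r p hp]
    _ = ∑ k, (s • c + t • c') k * (p * L k).rank := by
        rw [mul_sum, mul_sum, ← sum_add_distrib]
        refine sum_congr rfl fun k _ => ?_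
        simp only [Pi.add_apply, Pi.smul_apply, smul_eq_mul]
        ring

lemma convex_tightSpectra_inter_nonneg {κ : ℝ} (hκ : 0 ≤ κ) :
    Convex ℝ (tightSpectra J d κ ∩ Set.Ici 0) := by
  obtain ⟨H, hH⟩ := exists_mem_tightSpectra_iff J d
  have hsum : IsLinearMap ℝ fun w : J → Fin d → ℝ => ∑ j, ∑ i, w j i :=
    ⟨fun _ _ => by simp [sum_add_distrib], fun _ _ => by simp [mul_sum]⟩
  have heq : tightSpectra J d κ ∩ Set.Ici 0 = {w | ∀ j, Antitone (w j)} ∩ Set.Ici 0 ∩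
      (flagWeights ⁻¹' {c | IsSemistable (flags H) c κ} ∩ {w | ∑ j, ∑ i, w j i = κ * d}) := by
    ext w
    constructor
    · exact fun ⟨hw, hw₀⟩ => ⟨⟨hw.1, hw₀⟩, (hH w κ hw.1 hw₀ hκ).mp hw⟩
    · exact fun ⟨⟨hanti, hw₀⟩, hw⟩ => ⟨(hH w κ hanti hw₀ hκ).mpr hw, hw₀⟩
  rw [heq]
  exact (convex_setOf_forall_antitone.inter (convex_Ici 0)).inter
    (((convex_setOf_isSemistable _ κ).is_linear_preimage isLinearMap_flagWeights).inter
      (convex_hyperplane hsum _))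

lemma add_const_mem_tightSpectra_iff {w : J → Fin d → ℝ} {κ : ℝ} (s : ℝ) :
    (fun j => w j + fun _ => s) ∈ tightSpectra J d (κ + Fintype.card J * s) ↔
      w ∈ tightSpectra J d κ := by
  have hanti : (∀ j, Antitone (w j + fun _ => s)) ↔ ∀ j, Antitone (w j) := by
    simp only [Antitone, Pi.add_apply, add_le_add_iff_right]
  refine and_congr hanti <| exists_congr fun U => and_congr_right fun hU => ?_
  have hsum : ∑ j, conjDiag (U j) (w j + fun _ => s) =
      ∑ j, conjDiag (U j) (w j) + ((Fintype.card J * s : ℝ) : ℂ) • 1 := by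
    simp only [conjDiag_add, conjDiag_const (hU _), sum_add_distrib, sum_const, card_univ,
      ← Nat.cast_smul_eq_nsmul ℂ, smul_smul]
    push_cast
    rfl
  rw [hsum, Complex.ofReal_add, add_smul, add_left_inj]

theorem convex_tightSpectra [Nonempty J] (κ : ℝ) : Convex ℝ (tightSpectra J d κ) := by
  intro w hw w' hw' a b ha hb hab
  obtain ⟨s, hκ, hws, hws'⟩ : ∃ s : ℝ, |κ| ≤ s ∧ ‖w‖ ≤ s ∧ ‖w'‖ ≤ s :=
    ⟨max |κ| (max ‖w‖ ‖w'‖), by simp⟩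
  have hnonneg {v : J → Fin d → ℝ} (hv : ‖v‖ ≤ s) : 0 ≤ fun j => v j + fun _ => s := fun j i => by
    have hvs : |v j i| ≤ s := ((norm_le_pi_norm (v j) i).trans (norm_le_pi_norm v j)).trans hv
    exact neg_le_iff_add_nonneg.mp (abs_le.mp hvs).1
  have hκs : 0 ≤ κ + Fintype.card J * s := by
    have hcard : (1 : ℝ) ≤ Fintype.card J := by exact_mod_cast Fintype.card_pos (α := J)
    nlinarith [(abs_nonneg κ).trans hκ, neg_abs_le κ]
  have hmem := convex_tightSpectra_inter_nonneg hκs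
    ⟨(add_const_mem_tightSpectra_iff s).mpr hw, hnonneg hws⟩
    ⟨(add_const_mem_tightSpectra_iff s).mpr hw', hnonneg hws'⟩ ha hb hab
  refine (add_const_mem_tightSpectra_iff s).mp ?_
  convert hmem.1 using 1
  ext j i
  simp only [Pi.add_apply, Pi.smul_apply, smul_eq_mul]
  linear_combination -s * hab

end Tight

section SumSpectra

variable {d : ℕ} {A : Matrix (Fin d) (Fin d) ℂ} {μ x : Fin d → ℝ}

/-- The spectra of the sums `A + B`, where `B` runs over the Hermitian matrices with spectrum `μ`;
all spectra are arranged in decreasing order. -/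
def sumSpectra (A : Matrix (Fin d) (Fin d) ℂ) (μ : Fin d → ℝ) : Set (Fin d → ℝ) :=
  {x | ∃ B : Matrix (Fin d) (Fin d) ℂ, B.IsHermitian ∧ eigsDesc B = μ ∧ x = eigsDesc (A + B)}

/-- Entry-wise negation with the order of the entries reversed: the spectrum of `-C` in decreasing
order, when `x` is that of `C`. -/
def negRev (x : Fin d → ℝ) : Fin d → ℝ :=
  -x ∘ Fin.rev

lemma negRev_antitone (hx : Antitone x) : Antitone (negRev x) :=
  fun _ _ hij => neg_le_neg (hx (Fin.rev_le_rev.mpr hij))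

lemma exists_conjDiag_negRev_eq {U : Matrix (Fin d) (Fin d) ℂ}
    (hU : U ∈ unitaryGroup (Fin d) ℂ) (x : Fin d → ℝ) :
    ∃ V ∈ unitaryGroup (Fin d) ℂ, conjDiag V (negRev x) = -conjDiag U x := by
  obtain ⟨V, hV, hVU⟩ := exists_conjDiag_comp_perm hU (-x) Fin.revPerm
  exact ⟨V, hV, hVU.trans (by simpa using conjDiag_smul U (-1) x)⟩

lemma negRev_negRev (x : Fin d → ℝ) : negRev (negRev x) = x := by
  ext i
  simp [negRev]

/-- `A + B = C` says that the Hermitian matrices `A`, `B` and `-C` have sum `0`. -/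
lemma mem_sumSpectra_iff (hA : A.IsHermitian) (hμ : Antitone μ) :
    x ∈ sumSpectra A μ ↔ ![eigsDesc A, μ, negRev x] ∈ tightSpectra (Fin 3) d 0 := by
  obtain ⟨V, hV, hVA⟩ := exists_conjDiag_eigsDesc_eq hA
  constructor
  · rintro ⟨B, hB, rfl, rfl⟩
    obtain ⟨W, hW, hWB⟩ := exists_conjDiag_eigsDesc_eq hB
    obtain ⟨Z, hZ, hZC⟩ := exists_conjDiag_eigsDesc_eq (hA.add hB)
    obtain ⟨Z', hZ', hneg⟩ := exists_conjDiag_negRev_eq hZ (eigsDesc (A + B))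
    refine ⟨?_, ![V, W, Z'], ?_, ?_⟩
    · simp [Fin.forall_fin_succ, eigsDesc_antitone, negRev_antitone]
    · simp [Fin.forall_fin_succ, hV, hW, hZ']
    · simp [Fin.sum_univ_three, hVA, hWB, hneg, hZC]
  · rintro ⟨hanti, U, hU, hsum⟩
    have hx : Antitone x := negRev_negRev x ▸ negRev_antitone (hanti 2)
    simp only [Fin.sum_univ_three, Complex.ofReal_zero, zero_smul] at hsum
    have hrot : V * (U 0)ᴴ * U 0 = V := by
      rw [Matrix.mul_assoc, ← star_eq_conjTranspose, mem_unitaryGroup_iff'.mp (hU 0),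
        Matrix.mul_one]
    have hR : V * (U 0)ᴴ ∈ unitaryGroup (Fin d) ℂ := mul_mem hV (Unitary.star_mem (hU 0))
    obtain ⟨Z, hZ, hZC⟩ := exists_conjDiag_negRev_eq (mul_mem hR (hU 2)) (negRev x)
    refine ⟨conjDiag (V * (U 0)ᴴ * U 1) μ, conjDiag_isHermitian _ _, ?_, ?_⟩
    · rw [eigsDesc_conjDiag (mul_mem hR (hU 1)), sortDesc_eq_self hμ]
    · have hadd : A + conjDiag (V * (U 0)ᴴ * U 1) μ = conjDiag Z x := by
        have := congrArg (fun X => V * (U 0)ᴴ * X * (V * (U 0)ᴴ)ᴴ) hsum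
        simp only [Matrix.mul_add, Matrix.add_mul, mul_conjDiag_mul, Matrix.mul_zero,
          Matrix.zero_mul, hrot] at this
        rw [← negRev_negRev x, hZC, eq_neg_iff_add_eq_zero, ← hVA]
        exact this
      rw [hadd, eigsDesc_conjDiag hZ, sortDesc_eq_self hx]

theorem convex_sumSpectra (hA : A.IsHermitian) (hμ : Antitone μ) : Convex ℝ (sumSpectra A μ) := by
  intro x hx y hy a b ha hb hab
  rw [mem_sumSpectra_iff hA hμ] at hx hy ⊢
  have hcomb : a • ![eigsDesc A, μ, negRev x] + b • ![eigsDesc A, μ, negRev y] =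
      ![eigsDesc A, μ, negRev (a • x + b • y)] := by
    have hneg : a • negRev x + b • negRev y = negRev (a • x + b • y) := by
      simp only [negRev, ← neg_add, smul_neg]
      rfl
    simp only [smul_cons, Matrix.smul_empty, add_cons, head_cons, tail_cons, empty_add_empty, hneg,
      ← add_smul, hab, one_smul]
  exact hcomb ▸ convex_tightSpectra 0 hx hy ha hb hab

lemma setOf_eigsDesc_add_frameOp_eq_sumSpectra {k : ℕ} {a : Fin k → ℝ}
    (S₀ : Matrix (Fin d) (Fin d) ℂ) (hμ : μ ∈ Gamma d a) :
    {x : Fin d → ℝ | ∃ G : Fin k → Fin d → ℂ, (∀ i, normSqVec (G i) = a i) ∧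
      eigsDesc (frameOp G) = μ ∧ x = eigsDesc (S₀ + frameOp G)} = sumSpectra S₀ μ := by
  ext x
  constructor
  · rintro ⟨G, -, hG, rfl⟩
    exact ⟨frameOp G, (posSemidef_frameOp G).isHermitian, hG, rfl⟩
  · rintro ⟨B, hB, rfl, rfl⟩
    obtain ⟨U, -, hUB⟩ := exists_conjDiag_eigsDesc_eq hB
    obtain ⟨G, hGa, rfl⟩ := exists_norms_frameOp_eq (hUB ▸ conjDiag_posSemidef U hμ.2.1) hμ.2.2
    exact ⟨G, hGa, rfl, rfl⟩

end SumSpectra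

end FrameCompletion

open FrameCompletion in
theorem stmt_2_general {d k : ℕ} {S₀ : Matrix (Fin d) (Fin d) ℂ} (hS₀ : S₀.IsHermitian)
    {a : Fin k → ℝ} {μ : Fin d → ℝ} (hμ : μ ∈ Gamma d a) :
    Convex ℝ {x : Fin d → ℝ | ∃ G : Fin k → Fin d → ℂ,
        (∀ i, normSqVec (G i) = a i) ∧ eigsDesc (frameOp G) = μ ∧
        x = eigsDesc (S₀ + frameOp G)} ∧
    (sortDesc (fun i => eigsAsc S₀ i + μ i) ∈
        {x : Fin d → ℝ | ∃ G : Fin k → Fin d → ℂ,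
          (∀ i, normSqVec (G i) = a i) ∧ eigsDesc (frameOp G) = μ ∧
          x = eigsDesc (S₀ + frameOp G)} ∧
      ∀ G : Fin k → Fin d → ℂ, (∀ i, normSqVec (G i) = a i) → eigsDesc (frameOp G) = μ →
        MajorizedBy (sortDesc (fun i => eigsAsc S₀ i + μ i))
          (eigsDesc (S₀ + frameOp G))) ∧
    (∀ G : Fin k → Fin d → ℂ, (∀ i, normSqVec (G i) = a i) → eigsDesc (frameOp G) = μ →
      eigsDesc (S₀ + frameOp G) = sortDesc (fun i => eigsAsc S₀ i + μ i) →
      S₀ * frameOp G = frameOp G * S₀) := by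
  rw [setOf_eigsDesc_add_frameOp_eq_sumSpectra S₀ hμ]
  have hG (G : Fin k → Fin d → ℂ) : (frameOp G).IsHermitian := (posSemidef_frameOp G).isHermitian
  refine ⟨convex_sumSpectra hS₀ hμ.1, ⟨?_, ?_⟩, ?_⟩
  · obtain ⟨B, hB, hBμ, hsum⟩ := exists_eigsDesc_add_eq_sortDesc hS₀ hμ.1
    exact ⟨B, hB, hBμ, hsum.symm⟩
  · rintro G - rfl
    exact majorizedBy_eigsDesc_add hS₀ (hG G)
  · rintro G - rfl hsum
    exact mul_comm_of_eigsDesc_add_eq hS₀ (hG G) hsum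

theorem stmt_2 {d n₀ k : ℕ} (F₀ : Fin n₀ → Fin d → ℂ) (a : Fin k → ℝ)
    (ha_pos : ∀ i, 0 < a i) (ha_mono : Antitone a)
    (hk : d - (frameOp F₀).rank ≤ k)
    (μ : Fin d → ℝ) (hμ : μ ∈ Gamma d a) :
    Convex ℝ {x : Fin d → ℝ | ∃ G : Fin k → Fin d → ℂ,
        (∀ i, normSqVec (G i) = a i) ∧ eigsDesc (frameOp G) = μ ∧
        x = eigsDesc (frameOp F₀ + frameOp G)} ∧
    (sortDesc (fun i => eigsAsc (frameOp F₀) i + μ i) ∈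
        {x : Fin d → ℝ | ∃ G : Fin k → Fin d → ℂ,
          (∀ i, normSqVec (G i) = a i) ∧ eigsDesc (frameOp G) = μ ∧
          x = eigsDesc (frameOp F₀ + frameOp G)} ∧
      ∀ G : Fin k → Fin d → ℂ, (∀ i, normSqVec (G i) = a i) → eigsDesc (frameOp G) = μ →
        MajorizedBy (sortDesc (fun i => eigsAsc (frameOp F₀) i + μ i))
          (eigsDesc (frameOp F₀ + frameOp G))) ∧
    (∀ G : Fin k → Fin d → ℂ, (∀ i, normSqVec (G i) = a i) → eigsDesc (frameOp G) = μ →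
      eigsDesc (frameOp F₀ + frameOp G) = sortDesc (fun i => eigsAsc (frameOp F₀) i + μ i) →
      frameOp F₀ * frameOp G = frameOp G * frameOp F₀) :=
  stmt_2_general (FrameCompletion.posSemidef_frameOp F₀).isHermitian hμ
end

section
/- Let (F_0, a) be initial data for the completion problem in ℂ^d and let λ = λ↑(S_0). Then: (1) the set Λ_a^op(λ) = {λ + μ : μ ∈ Γ_d(a)} is a compact convex subset of ℝ^d; (2) the spectral picture of optimal completions satisfies {λ(S_F) : F ∈ C_a^op(F_0)} = {ν↓ : ν ∈ Λ_a^op(λ)}, where ν↓ denotes the decreasing rearrangement of ν. -/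
open Finset
open scoped ComplexOrder

/-!
By the Schur–Horn theorem, the vectors `μ ∈ Γ_d(a)` are exactly the spectra of the frame operators
of sequences with squared norms `a`. In one direction, Bessel's inequality for an orthonormal basis
of the span of `G i`, `i ∈ s`, bounds `∑ i ∈ s, ‖G i‖²` by the `#s` largest eigenvalues. In the
other, an orthogonal eigenbasis has squared norms `μ`; a vector majorized by `μ` is reached from it
by finitely many Robin Hood transfers, and each of them is realized by rotating a pair of vectors,
which leaves the frame operator unchanged.

An optimal completion is then obtained by giving `frameOp G` an eigenbasis of `S₀` with the
eigenvalues in the opposite order, so that the sum has the eigenvalues `λ + μ`. Compactness and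
convexity hold because, for antitone nonnegative `μ`, majorization amounts to the linear constraints
`∑ i ∈ s, a i ≤ μ 0 + ⋯ + μ (#s - 1)`, together with the equality of the total sums.
-/

section Sorting

variable {m : ℕ} {x y : Fin m → ℝ}

lemma sortDesc_antitone (x : Fin m → ℝ) : Antitone (sortDesc x) :=
  fun _ _ hij => Tuple.monotone_sort x (Fin.rev_le_rev.mpr hij)

lemma exists_perm_sortDesc_eq (x : Fin m → ℝ) : ∃ σ : Equiv.Perm (Fin m), sortDesc x = x ∘ σ :=
  ⟨Fin.revPerm.trans (Tuple.sort x), rfl⟩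

lemma sortDesc_eq_sortDesc_of_perm (h : (List.ofFn x).Perm (List.ofFn y)) :
    sortDesc x = sortDesc y := by
  have ofFn_sortDesc_perm (z : Fin m → ℝ) : (List.ofFn (sortDesc z)).Perm (List.ofFn z) := by
    obtain ⟨σ, hσ⟩ := exists_perm_sortDesc_eq z
    exact hσ ▸ Equiv.Perm.ofFn_comp_perm σ z
  apply List.ofFn_injective
  exact List.Perm.eq_of_pairwise' (r := (· ≥ ·)) (sortDesc_antitone x).sortedGE_ofFn.pairwise
    (sortDesc_antitone y).sortedGE_ofFn.pairwise
    ((ofFn_sortDesc_perm x).trans (h.trans (ofFn_sortDesc_perm y).symm))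

lemma sortDesc_eq_self_of_antitone (hx : Antitone x) : sortDesc x = x := by
  obtain ⟨σ, hσ⟩ := exists_perm_sortDesc_eq x
  have sorted : Antitone (x ∘ σ) := hσ ▸ sortDesc_antitone x
  simpa [hσ] using Tuple.unique_antitone (τ := Equiv.refl _) sorted hx

end Sorting

section PrefixSum

variable {m n n' : ℕ} {x y : Fin m → ℝ}

/-- The sum of the first `n` coordinates of `x`, or of all of them when `n` exceeds the length. It
replaces the sums over `Finset.Iic j` in majorization, so that vectors of different lengths can be
compared without padding. -/
def prefixSum (x : Fin m → ℝ) (n : ℕ) : ℝ :=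
  ∑ i : Fin m with i.val < n, x i

lemma sum_Iic_eq_prefixSum (x : Fin m → ℝ) (j : Fin m) :
    ∑ i ∈ Iic j, x i = prefixSum x (j + 1) :=
  sum_congr (by ext i; rw [mem_Iic, mem_filter_univ, Fin.le_def, Nat.lt_succ_iff]) fun _ _ => rfl

lemma prefixSum_mono (hx : ∀ i, 0 ≤ x i) (h : n ≤ n') : prefixSum x n ≤ prefixSum x n' :=
  sum_le_sum_of_subset_of_nonneg (monotone_filter_right _ fun _ _ hi => hi.trans_le h)
    fun i _ _ => hx i

lemma prefixSum_le_of_forall_sum_Iic_le (h : ∀ j, ∑ i ∈ Iic j, x i ≤ ∑ i ∈ Iic j, y i)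
    (hn : n ≤ m) : prefixSum x n ≤ prefixSum y n := by
  cases n with
  | zero => simp [prefixSum]
  | succ j => simpa only [sum_Iic_eq_prefixSum] using h ⟨j, hn⟩

lemma isLinearMap_prefixSum (n : ℕ) : IsLinearMap ℝ fun x : Fin m → ℝ => prefixSum x n where
  map_add x y := by simp [prefixSum, sum_add_distrib]
  map_smul c x := by simp [prefixSum, mul_sum]

lemma continuous_prefixSum (n : ℕ) : Continuous fun x : Fin m → ℝ => prefixSum x n := by
  unfold prefixSum
  fun_prop

lemma sum_mul_le_prefixSum {c : Fin m → ℝ} (hx : Antitone x) (hc₀ : ∀ i, 0 ≤ c i)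
    (hc₁ : ∀ i, c i ≤ 1) (hc : ∑ i, c i = n) : ∑ i, c i * x i ≤ prefixSum x n := by
  obtain ⟨t, ht, ht'⟩ : ∃ t, (∀ i : Fin m, (i : ℕ) < n → t ≤ x i) ∧
      ∀ i : Fin m, n ≤ (i : ℕ) → x i ≤ t := by
    by_cases hnm : n < m
    · exact ⟨x ⟨n, hnm⟩, fun i hi => hx hi.le, fun i hi => hx hi⟩
    · obtain ⟨t, ht⟩ := (Set.finite_range x).bddBelow
      exact ⟨t, fun i _ => ht ⟨i, rfl⟩, fun i hi => by omega⟩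
  have hnm : n ≤ m := by
    have : ∑ i, c i ≤ ∑ _ : Fin m, 1 := sum_le_sum fun i _ => hc₁ i
    rw [hc] at this
    exact_mod_cast (by simpa using this : (n : ℝ) ≤ m)
  have sum_indicator : ∑ i : Fin m, (if (i : ℕ) < n then (1 : ℝ) else 0) = n := by
    rw [sum_boole, Fin.card_filter_val_lt, min_eq_right hnm]
  have pointwise (i : Fin m) : c i * x i ≤ (if (i : ℕ) < n then x i else 0)
      + t * (c i - if (i : ℕ) < n then 1 else 0) := by
    split_ifs with hi
    · nlinarith [ht i hi, hc₁ i]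
    · nlinarith [ht' i (not_lt.mp hi), hc₀ i]
  calc ∑ i, c i * x i
      ≤ ∑ i : Fin m, ((if (i : ℕ) < n then x i else 0)
          + t * (c i - if (i : ℕ) < n then 1 else 0)) := sum_le_sum fun i _ => pointwise i
    _ = prefixSum x n := by
      rw [sum_add_distrib, ← mul_sum, sum_sub_distrib, hc, sum_indicator, prefixSum, sum_filter]
      simp

lemma sum_le_prefixSum_of_antitone (hx : Antitone x) (s : Finset (Fin m)) :
    ∑ i ∈ s, x i ≤ prefixSum x #s := by
  have := sum_mul_le_prefixSum (n := #s) (c := fun i => if i ∈ s then 1 else 0) hx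
    (fun i => by positivity) (fun i => by split_ifs <;> norm_num) (by simp)
  simpa [ite_mul] using this

end PrefixSum

section Majorization

variable {m k N : ℕ} {x y : Fin m → ℝ}

lemma majorizedBy_iff_of_antitone (hy : Antitone y) :
    MajorizedBy x y ↔ (∀ s : Finset (Fin m), ∑ i ∈ s, x i ≤ prefixSum y #s) ∧
      ∑ i, x i = ∑ i, y i := by
  obtain ⟨σ, hσ⟩ := exists_perm_sortDesc_eq x
  have sum_map (s : Finset (Fin m)) : ∑ i ∈ s.map σ.toEmbedding, x i = ∑ i ∈ s, sortDesc x i := by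
    simp [hσ]
  rw [MajorizedBy, sortDesc_eq_self_of_antitone hy]
  refine and_congr_left fun _ => ⟨fun h s => ?_, fun h j => ?_⟩
  · calc ∑ i ∈ s, x i = ∑ i ∈ s.map σ.symm.toEmbedding, sortDesc x i := by simp [hσ]
      _ ≤ prefixSum (sortDesc x) #(s.map σ.symm.toEmbedding) :=
        sum_le_prefixSum_of_antitone (sortDesc_antitone x) _
      _ = prefixSum (sortDesc x) #s := by rw [card_map]
      _ ≤ prefixSum y #s := prefixSum_le_of_forall_sum_Iic_le h (card_finset_fin_le s)
  · rw [← sum_map, sum_Iic_eq_prefixSum]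
    simpa using h ((Iic j).map σ.toEmbedding)

lemma pad_antitone (hx : Antitone x) (hx₀ : ∀ i, 0 ≤ x i) (N : ℕ) : Antitone (pad x N) := by
  intro i j hij
  have hij' : (i : ℕ) ≤ j := hij
  by_cases hj : (j : ℕ) < m
  · simpa [pad, hj, hij'.trans_lt hj] using hx hij'
  · simp only [pad, hj, dite_false]
    split_ifs
    exacts [hx₀ _, le_rfl]

lemma sum_pad (hmN : m ≤ N) (x : Fin m → ℝ) (t : Finset (Fin N)) :
    ∑ i ∈ t, pad x N i = ∑ i with Fin.castLE hmN i ∈ t, x i := by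
  obtain ⟨c, rfl⟩ := Nat.exists_eq_add_of_le hmN
  calc ∑ i ∈ t, pad x (m + c) i
      = ∑ i, if i ∈ t then pad x (m + c) i else 0 := by rw [← sum_filter, filter_univ_mem]
    _ = ∑ i, if Fin.castLE hmN i ∈ t then x i else 0 := by
      rw [Fin.sum_univ_add]
      simp [pad, Fin.castAdd]
    _ = ∑ i with Fin.castLE hmN i ∈ t, x i := by rw [sum_filter]

lemma prefixSum_pad (hmN : m ≤ N) (x : Fin m → ℝ) (n : ℕ) :
    prefixSum (pad x N) n = prefixSum x n := by
  simp [prefixSum, sum_pad hmN]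

lemma majorizedByPad_iff {a : Fin k → ℝ} (hy : Antitone y) (hy₀ : ∀ i, 0 ≤ y i) :
    MajorizedByPad a y ↔ (∀ s : Finset (Fin k), ∑ i ∈ s, a i ≤ prefixSum y #s) ∧
      ∑ i, a i = ∑ i, y i := by
  have hk : k ≤ max k m := le_max_left k m
  have hm : m ≤ max k m := le_max_right k m
  rw [MajorizedByPad, majorizedBy_iff_of_antitone (pad_antitone hy hy₀ _), sum_pad hk, sum_pad hm]
  simp only [sum_pad hk, prefixSum_pad hm, mem_univ, filter_true]
  refine and_congr_left fun _ => ⟨fun h s => ?_, fun h t => ?_⟩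
  · simpa using h (s.map (Fin.castLEEmb hk))
  · refine (h _).trans (prefixSum_mono hy₀ ?_)
    exact card_le_card_of_injOn (Fin.castLE hk) (fun i hi => by simpa using hi)
      (Fin.castLE_injective hk).injOn

end Majorization

section Gamma

variable {d k : ℕ}

lemma mem_Gamma_iff {a : Fin k → ℝ} {μ : Fin d → ℝ} :
    μ ∈ Gamma d a ↔ Antitone μ ∧ 0 ≤ μ ∧ (∀ s : Finset (Fin k), ∑ i ∈ s, a i ≤ prefixSum μ #s) ∧
      ∑ i, a i = ∑ i, μ i :=
  and_congr_right fun hμ => and_congr_right fun hμ₀ => majorizedByPad_iff hμ hμ₀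

lemma Gamma_eq_inter (a : Fin k → ℝ) :
    Gamma d a = {μ | Antitone μ} ∩ (Set.Ici 0 ∩
      ((⋂ s : Finset (Fin k), {μ | ∑ i ∈ s, a i ≤ prefixSum μ #s}) ∩
        {μ | ∑ i, μ i = ∑ i, a i})) := by
  ext μ
  simp [mem_Gamma_iff, eq_comm]

lemma isClosed_Gamma (a : Fin k → ℝ) : IsClosed (Gamma d a) := by
  rw [Gamma_eq_inter]
  refine .inter isClosed_antitone (.inter isClosed_Ici (.inter (isClosed_iInter fun s => ?_) ?_))
  · exact isClosed_le continuous_const (continuous_prefixSum _)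
  · exact isClosed_eq (by fun_prop) continuous_const

lemma isCompact_Gamma (a : Fin k → ℝ) : IsCompact (Gamma d a) := by
  refine isCompact_Icc.of_isClosed_subset (isClosed_Gamma a)
    (fun μ hμ => ?_ : _ ⊆ Set.Icc 0 fun _ => ∑ i, a i)
  obtain ⟨-, hμ₀, -, hsum⟩ := mem_Gamma_iff.mp hμ
  exact ⟨hμ₀, fun i => hsum ▸ single_le_sum (fun j _ => hμ₀ j) (mem_univ i)⟩

lemma convex_setOf_antitone : Convex ℝ {μ : Fin d → ℝ | Antitone μ} :=
  fun _ hx _ hy _ _ hs ht _ => (hx.const_smul hs).add (hy.const_smul ht)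

lemma convex_Gamma (a : Fin k → ℝ) : Convex ℝ (Gamma d a) := by
  rw [Gamma_eq_inter]
  refine convex_setOf_antitone.inter ((convex_Ici 0).inter ((convex_iInter fun s => ?_).inter ?_))
  · exact convex_halfSpace_ge (isLinearMap_prefixSum _) _
  · refine convex_hyperplane (f := fun μ : Fin d → ℝ => ∑ i, μ i) ⟨fun x y => ?_, fun c x => ?_⟩ _
    exacts [sum_add_distrib, by simp [mul_sum]]

end Gamma

section RobinHood

variable {ι : Type*}

/-- `RobinHoodTransfer b b'` means that `b'` arises from `b` by moving an amount `δ` from a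
coordinate `p` to a coordinate `q`, where `δ` is at most the difference `b p - b q`. -/
def RobinHoodTransfer [DecidableEq ι] (b b' : ι → ℝ) : Prop :=
  ∃ p q, p ≠ q ∧ ∃ δ ≥ 0, b q ≤ b p - δ ∧ b' = b - Pi.single p δ + Pi.single q δ

lemma sum_sub_single_add_single [DecidableEq ι] (b : ι → ℝ) (p q : ι) (δ : ℝ) (s : Finset ι) :
    ∑ i ∈ s, (b - Pi.single p δ + Pi.single q δ : ι → ℝ) i =
      ∑ i ∈ s, b i - (if p ∈ s then δ else 0) + if q ∈ s then δ else 0 := by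
  simp [sum_add_distrib, sum_sub_distrib]

variable [Fintype ι] [LinearOrder ι] [LocallyFiniteOrderBot ι] {a b : ι → ℝ}

lemma exists_lt_and_gt_of_sum_Iic_le (h : ∀ j, ∑ i ∈ Iic j, a i ≤ ∑ i ∈ Iic j, b i)
    (hsum : ∑ i, a i = ∑ i, b i) (hab : a ≠ b) :
    ∃ p q, p < q ∧ a p < b p ∧ b q < a q ∧ ∀ i < q, a i ≤ b i := by
  obtain ⟨q₀, hq₀⟩ : ∃ q, b q < a q := by
    by_contra! hle
    exact hab (funext fun i => (sum_eq_sum_iff_of_le fun i _ => hle i).mp hsum i (mem_univ i))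
  obtain ⟨q, hq, hmin⟩ := WellFounded.has_min (wellFounded_lt (α := ι)) {q | b q < a q} ⟨q₀, hq₀⟩
  have before (i : ι) (hi : i < q) : a i ≤ b i := not_lt.mp fun hlt => hmin i hlt hi
  obtain ⟨p, hp, hap⟩ : ∃ p < q, a p < b p := by
    by_contra! hle
    refine (h q).not_gt (sum_lt_sum (fun i hi => ?_) ⟨q, mem_Iic.mpr le_rfl, hq⟩)
    rcases (mem_Iic.mp hi).lt_or_eq with hiq | rfl
    exacts [hle i hiq, le_of_lt hq]
  exact ⟨p, q, hp, hap, hq, before⟩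

/-- The amount moved is the largest one that overshoots neither `a p` nor `a q`, so that one of
these two coordinates agrees with `a` afterwards. -/
lemma exists_robinHoodTransfer (ha : Antitone a)
    (h : ∀ j, ∑ i ∈ Iic j, a i ≤ ∑ i ∈ Iic j, b i) (hsum : ∑ i, a i = ∑ i, b i) (hab : a ≠ b) :
    ∃ b', RobinHoodTransfer b b' ∧ (∀ j, ∑ i ∈ Iic j, a i ≤ ∑ i ∈ Iic j, b' i) ∧
      ∑ i, a i = ∑ i, b' i ∧ #{i | a i ≠ b' i} < #{i | a i ≠ b i} := by
  obtain ⟨p, q, hpq, hp, hq, before⟩ := exists_lt_and_gt_of_sum_Iic_le h hsum hab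
  set δ := min (b p - a p) (a q - b q) with hδ
  have hδp : δ ≤ b p - a p := min_le_left _ _
  have hδq : δ ≤ a q - b q := min_le_right _ _
  have hδ₀ : 0 < δ := lt_min (sub_pos.mpr hp) (sub_pos.mpr hq)
  refine ⟨b - Pi.single p δ + Pi.single q δ,
    ⟨p, q, hpq.ne, δ, hδ₀.le, by linarith [ha hpq.le], rfl⟩, fun j => ?_, ?_, ?_⟩
  · rw [sum_sub_single_add_single]
    simp only [mem_Iic]
    by_cases hqj : q ≤ j
    · simpa [hqj, hpq.le.trans hqj] using h j
    by_cases hpj : p ≤ j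
    · have hle : b p - a p ≤ ∑ i ∈ Iic j, (b i - a i) :=
        single_le_sum (f := fun i => b i - a i)
          (fun i hi => sub_nonneg.mpr (before i ((mem_Iic.mp hi).trans_lt (not_le.mp hqj))))
          (mem_Iic.mpr hpj)
      rw [sum_sub_distrib] at hle
      simp only [hpj, hqj, if_true, if_false]
      linarith
    · simpa [hpj, hqj] using h j
  · rw [sum_sub_single_add_single, hsum]
    simp
  · refine card_lt_card (ssubset_iff_of_subset (fun i hi => ?_) |>.mpr ?_)
    · rcases eq_or_ne i p with rfl | hip
      · simpa using hp.ne
      rcases eq_or_ne i q with rfl | hiq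
      · simpa using hq.ne'
      simpa [hip, hiq] using hi
    · rcases min_choice (b p - a p) (a q - b q) with hmin | hmin
      · exact ⟨p, by simpa using hp.ne, by simp [hδ, hmin, hpq.ne]⟩
      · exact ⟨q, by simpa using hq.ne', by simp [hδ, hmin, hpq.ne']⟩

theorem reflTransGen_robinHoodTransfer (ha : Antitone a)
    (h : ∀ j, ∑ i ∈ Iic j, a i ≤ ∑ i ∈ Iic j, b i) (hsum : ∑ i, a i = ∑ i, b i) :
    Relation.ReflTransGen RobinHoodTransfer b a := by
  induction hn : #{i | a i ≠ b i} using Nat.strong_induction_on generalizing b with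
  | _ n ih =>
    rcases eq_or_ne a b with rfl | hab
    · exact .refl
    obtain ⟨b', hbb', h', hsum', hlt⟩ := exists_robinHoodTransfer ha h hsum hab
    exact .head hbb' (ih _ (hn ▸ hlt) h' hsum' rfl)

end RobinHood

section Frame

open Matrix

variable {d k N : ℕ} {S : Matrix (Fin d) (Fin d) ℂ}

lemma frameOp_posSemidef (G : Fin k → Fin d → ℂ) : (frameOp G).PosSemidef :=
  posSemidef_sum _ fun i _ => posSemidef_vecMulVec_self_star (G i)

lemma normSqVec_eq_norm_sq (g : Fin d → ℂ) : normSqVec g = ‖WithLp.toLp 2 g‖ ^ 2 := by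
  simp [normSqVec, EuclideanSpace.norm_sq_eq, Complex.sq_norm]

lemma trace_vecMulVec_star (g : Fin d → ℂ) : (vecMulVec g (star g)).trace = normSqVec g := by
  simp [trace_vecMulVec, dotProduct, normSqVec, Complex.mul_conj]

lemma trace_frameOp (G : Fin k → Fin d → ℂ) :
    (frameOp G).trace = ((∑ i, normSqVec (G i) : ℝ) : ℂ) := by
  rw [frameOp, trace_sum, Complex.ofReal_sum]
  exact sum_congr rfl fun i _ => trace_vecMulVec_star (G i)

/-- Rotating the pair `(u, v)` by an angle `θ` does not change its frame operator, and the norm of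
the first vector runs from `‖u‖` to `‖v‖` as `θ` runs through `[0, π / 2]`. -/
lemma exists_rotation_normSqVec_eq {u v : Fin d → ℂ} {δ : ℝ} (hδ : 0 ≤ δ)
    (huv : normSqVec v ≤ normSqVec u - δ) :
    ∃ u' v' : Fin d → ℂ,
      vecMulVec u' (star u') + vecMulVec v' (star v') =
        vecMulVec u (star u) + vecMulVec v (star v) ∧
      normSqVec u' = normSqVec u - δ ∧ normSqVec v' = normSqVec v + δ := by
  let rot (θ : ℝ) : Fin d → ℂ := Real.cos θ • u + Real.sin θ • v
  have continuous_rot : Continuous fun θ => normSqVec (rot θ) :=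
    continuous_finsetSum _ fun l _ => Complex.continuous_normSq.comp (by fun_prop)
  obtain ⟨θ, -, hθ⟩ := intermediate_value_Icc' (a := 0) (b := Real.pi / 2) (by positivity)
    continuous_rot.continuousOn
    (show normSqVec u - δ ∈ _ from ⟨by simpa [rot] using huv, by simpa [rot] using hδ⟩)
  have sin_cos : (Real.sin θ : ℂ) ^ 2 + (Real.cos θ : ℂ) ^ 2 = 1 := by
    exact_mod_cast Real.sin_sq_add_cos_sq θ
  let v' : Fin d → ℂ := -Real.sin θ • u + Real.cos θ • v
  have frameOp_eq : vecMulVec (rot θ) (star (rot θ)) + vecMulVec v' (star v') =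
      vecMulVec u (star u) + vecMulVec v (star v) := by
    ext x y
    simp only [rot, v', Matrix.add_apply, vecMulVec_apply, Pi.star_apply, Pi.add_apply,
      Pi.smul_apply, Complex.real_smul, star_add, star_mul', Complex.star_def,
      Complex.conj_ofReal, Complex.ofReal_neg, map_neg]
    linear_combination (u x * starRingEnd ℂ (u y) + v x * starRingEnd ℂ (v y)) * sin_cos
  have trace_eq := congrArg trace frameOp_eq
  simp only [trace_add, trace_vecMulVec_star] at trace_eq
  norm_cast at trace_eq
  exact ⟨rot θ, v', frameOp_eq, hθ, by linarith [show normSqVec (rot θ) = _ from hθ]⟩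

/-- The vectors of squared norms of the frames of `k` vectors with frame operator `S`, described by
the Schur–Horn theorem `mem_frameNorms_iff`. -/
def frameNorms (k : ℕ) (S : Matrix (Fin d) (Fin d) ℂ) : Set (Fin k → ℝ) :=
  {a | ∃ G : Fin k → Fin d → ℂ, frameOp G = S ∧ ∀ i, normSqVec (G i) = a i}

lemma comp_perm_mem_frameNorms {a : Fin k → ℝ} (σ : Equiv.Perm (Fin k)) (ha : a ∈ frameNorms k S) :
    a ∘ σ ∈ frameNorms k S := by
  obtain ⟨G, hG, hGa⟩ := ha
  exact ⟨G ∘ σ, hG ▸ Equiv.sum_comp σ fun l => vecMulVec (G l) (star (G l)), fun i => hGa (σ i)⟩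

lemma pad_mem_frameNorms_iff (hkN : k ≤ N) {a : Fin k → ℝ} :
    pad a N ∈ frameNorms N S ↔ a ∈ frameNorms k S := by
  obtain ⟨c, rfl⟩ := Nat.exists_eq_add_of_le hkN
  constructor
  · rintro ⟨G, rfl, hGa⟩
    have zero_tail (i : Fin c) : G (Fin.natAdd k i) = 0 := by
      have := hGa (Fin.natAdd k i)
      simpa [pad, normSqVec_eq_norm_sq] using this
    exact ⟨fun i => G (Fin.castAdd c i), by simp [frameOp, Fin.sum_univ_add, zero_tail],
      fun i => by simp [hGa, pad]⟩
  · rintro ⟨G, rfl, hGa⟩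
    refine ⟨Fin.append G 0, by simp [frameOp, Fin.sum_univ_add], fun i => ?_⟩
    refine Fin.addCases (fun i => ?_) (fun i => ?_) i
    · simp [pad, hGa]
    · simp [pad, normSqVec]

lemma RobinHoodTransfer.mem_frameNorms {b b' : Fin k → ℝ} (h : RobinHoodTransfer b b')
    (hb : b ∈ frameNorms k S) : b' ∈ frameNorms k S := by
  obtain ⟨G, rfl, hGb⟩ := hb
  obtain ⟨p, q, hpq, δ, hδ, hle, rfl⟩ := h
  rw [← hGb, ← hGb] at hle
  obtain ⟨u, v, hsum, hu, hv⟩ := exists_rotation_normSqVec_eq hδ hle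
  refine ⟨Function.update (Function.update G p u) q v, ?_, fun i => ?_⟩
  · rw [← sub_eq_zero, frameOp, frameOp, ← sum_sub_distrib, Fintype.sum_eq_add p q hpq]
    · simp only [Function.update_self, Function.update_of_ne hpq]
      rw [sub_add_sub_comm, hsum, sub_self]
    · rintro i ⟨hip, hiq⟩
      simp [hip, hiq]
  · rcases eq_or_ne i q with rfl | hiq
    · simp [hv, hGb, hpq.symm]
    rcases eq_or_ne i p with rfl | hip
    · simp [hu, hGb, hpq]
    · simp [hip, hiq, hGb]

lemma MajorizedBy.mem_frameNorms {a b : Fin k → ℝ} (h : MajorizedBy a b)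
    (hb : b ∈ frameNorms k S) : a ∈ frameNorms k S := by
  obtain ⟨σ, hσ⟩ := exists_perm_sortDesc_eq a
  obtain ⟨τ, hτ⟩ := exists_perm_sortDesc_eq b
  have sum_eq : ∑ i, sortDesc a i = ∑ i, sortDesc b i := by
    rw [hσ, hτ]
    exact (Equiv.sum_comp σ a).trans (h.2.trans (Equiv.sum_comp τ b).symm)
  have mem_of_transfers {c : Fin k → ℝ}
      (hc : Relation.ReflTransGen RobinHoodTransfer (sortDesc b) c) : c ∈ frameNorms k S := by
    induction hc with
    | refl => exact hτ ▸ comp_perm_mem_frameNorms τ hb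
    | tail _ transfer ih => exact transfer.mem_frameNorms ih
  have sorted_mem := mem_of_transfers
    (reflTransGen_robinHoodTransfer (sortDesc_antitone a) h.1 sum_eq)
  simpa [hσ, Function.comp_assoc] using comp_perm_mem_frameNorms σ.symm sorted_mem

lemma MajorizedByPad.mem_frameNorms {a : Fin k → ℝ} {b : Fin N → ℝ} (h : MajorizedByPad a b)
    (hb : b ∈ frameNorms N S) : a ∈ frameNorms k S :=
  (pad_mem_frameNorms_iff (le_max_left k N)).mp <|
    MajorizedBy.mem_frameNorms h ((pad_mem_frameNorms_iff (le_max_right k N)).mpr hb)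

end Frame

section Spectral

open Matrix

variable {d k : ℕ} {S : Matrix (Fin d) (Fin d) ℂ}

/-- The matrix with eigenvectors `e i` and eigenvalues `v i`. -/
noncomputable def diagonalIn (e : OrthonormalBasis (Fin d) ℂ (EuclideanSpace ℂ (Fin d)))
    (v : Fin d → ℝ) : Matrix (Fin d) (Fin d) ℂ :=
  ∑ i, (v i : ℂ) • vecMulVec ⇑(e i) (star ⇑(e i))

variable (e : OrthonormalBasis (Fin d) ℂ (EuclideanSpace ℂ (Fin d)))

lemma diagonalIn_add (v w : Fin d → ℝ) :
    diagonalIn e (v + w) = diagonalIn e v + diagonalIn e w := by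
  simp [diagonalIn, add_smul, sum_add_distrib]

lemma diagonalIn_reindex (σ : Equiv.Perm (Fin d)) (v : Fin d → ℝ) :
    diagonalIn (e.reindex σ.symm) (v ∘ σ) = diagonalIn e v := by
  simpa [diagonalIn] using Equiv.sum_comp σ fun i => (v i : ℂ) • vecMulVec ⇑(e i) (star ⇑(e i))

lemma isHermitian_diagonalIn (v : Fin d → ℝ) : (diagonalIn e v).IsHermitian :=
  isSelfAdjoint_sum _ fun i _ => .smul (Complex.conj_ofReal (v i))
    (posSemidef_vecMulVec_self_star ⇑(e i)).isHermitian

lemma diagonalIn_eq_frameOp {v : Fin d → ℝ} (hv : 0 ≤ v) :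
    diagonalIn e v = frameOp fun i => √(v i) • ⇑(e i) := by
  refine sum_congr rfl fun i _ => ?_
  ext x y
  have sq_sqrt : ((√(v i) : ℝ) : ℂ) ^ 2 = v i := by
    exact_mod_cast Real.sq_sqrt (hv i)
  simp only [Matrix.smul_apply, vecMulVec_apply, Pi.smul_apply, Pi.star_apply, Complex.real_smul,
    smul_eq_mul, star_mul', Complex.star_def, Complex.conj_ofReal]
  linear_combination -(e i x * starRingEnd ℂ (e i y)) * sq_sqrt

lemma diagonalIn_eq_mul (v : Fin d → ℝ) :
    diagonalIn e v = (EuclideanSpace.basisFun (Fin d) ℂ).toBasis.toMatrix e *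
      diagonal (fun i => (v i : ℂ)) *
      star ((EuclideanSpace.basisFun (Fin d) ℂ).toBasis.toMatrix e) := by
  ext x y
  rw [diagonalIn, Matrix.sum_apply, mul_apply]
  refine sum_congr rfl fun i _ => ?_
  simp [vecMulVec_apply, Module.Basis.toMatrix_apply, mul_diagonal, mul_assoc, mul_left_comm]

lemma charpoly_diagonalIn (v : Fin d → ℝ) :
    (diagonalIn e v).charpoly = ∏ i, (Polynomial.X - Polynomial.C (v i : ℂ)) := by
  rw [diagonalIn_eq_mul, charpoly_mul_comm, ← mul_assoc,
    Unitary.star_mul_self_of_mem (OrthonormalBasis.toMatrix_orthonormalBasis_mem_unitary _ _),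
    one_mul, charpoly_diagonal]

lemma eigsDesc_diagonalIn (v : Fin d → ℝ) : eigsDesc (diagonalIn e v) = sortDesc v := by
  have hS := isHermitian_diagonalIn e v
  have roots_eq := hS.roots_charpoly_eq_eigenvalues
  rw [charpoly_diagonalIn, Polynomial.roots_prod _ _ (by
    simp [prod_ne_zero_iff, Polynomial.X_sub_C_ne_zero])] at roots_eq
  have map_eq : univ.val.map v = univ.val.map hS.eigenvalues := by
    simpa [Function.comp_def] using congrArg (Multiset.map Complex.re) roots_eq
  rw [eigsDesc, dif_pos hS]
  apply sortDesc_eq_sortDesc_of_perm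
  simpa [Fin.univ_val_map] using map_eq.symm

lemma exists_eq_diagonalIn (hS : S.IsHermitian) (σ : Equiv.Perm (Fin d)) :
    ∃ e, S = diagonalIn e (hS.eigenvalues ∘ σ) := by
  refine ⟨hS.eigenvectorBasis.reindex σ.symm, ?_⟩
  rw [diagonalIn_reindex, diagonalIn_eq_mul]
  exact hS.spectral_theorem.trans (Unitary.conjStarAlgAut_apply _ _)

lemma exists_eq_diagonalIn_eigsAsc (hS : S.IsHermitian) : ∃ e, S = diagonalIn e (eigsAsc S) := by
  rw [eigsAsc, dif_pos hS]
  exact exists_eq_diagonalIn hS _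

lemma exists_eq_diagonalIn_eigsDesc (hS : S.IsHermitian) : ∃ e, S = diagonalIn e (eigsDesc S) := by
  rw [eigsDesc, dif_pos hS]
  exact exists_eq_diagonalIn hS (Fin.revPerm.trans (Tuple.sort _))

lemma eigsDesc_antitone (hS : S.IsHermitian) : Antitone (eigsDesc S) := by
  rw [eigsDesc, dif_pos hS]
  exact sortDesc_antitone _

lemma eigsDesc_nonneg (hS : S.PosSemidef) : 0 ≤ eigsDesc S := by
  rw [eigsDesc, dif_pos hS.isHermitian]
  exact fun i => hS.eigenvalues_nonneg _

end Spectral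

section SchurHorn

open Matrix
open scoped InnerProductSpace

variable {d k : ℕ} {S : Matrix (Fin d) (Fin d) ℂ} {G : Fin k → Fin d → ℂ} {v : Fin d → ℝ}
  {e : OrthonormalBasis (Fin d) ℂ (EuclideanSpace ℂ (Fin d))}

lemma sum_norm_inner_sq_eq_dotProduct_frameOp (G : Fin k → Fin d → ℂ)
    (b : EuclideanSpace ℂ (Fin d)) :
    ((∑ i, ‖⟪b, WithLp.toLp 2 (G i)⟫_ℂ‖ ^ 2 : ℝ) : ℂ) = star ⇑b ⬝ᵥ frameOp G *ᵥ ⇑b := by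
  rw [frameOp, sum_mulVec, dotProduct_sum, Complex.ofReal_sum]
  refine sum_congr rfl fun i _ => ?_
  rw [vecMulVec_mulVec, dotProduct_smul, star_dotProduct (G i), dotProduct_comm _ (G i)]
  simp [EuclideanSpace.inner_eq_star_dotProduct, Complex.mul_conj']

lemma sum_norm_inner_sq_of_frameOp_eq (hG : frameOp G = diagonalIn e v) (hv : 0 ≤ v)
    (b : EuclideanSpace ℂ (Fin d)) :
    ∑ i, ‖⟪b, WithLp.toLp 2 (G i)⟫_ℂ‖ ^ 2 = ∑ l, ‖⟪b, e l⟫_ℂ‖ ^ 2 * v l := by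
  have inner_sq (l : Fin d) : ‖⟪b, WithLp.toLp 2 (√(v l) • ⇑(e l))⟫_ℂ‖ ^ 2 =
      ‖⟪b, e l⟫_ℂ‖ ^ 2 * v l := by
    rw [WithLp.toLp_smul, inner_smul_right_eq_smul, norm_smul, mul_pow, Real.norm_eq_abs, sq_abs,
      Real.sq_sqrt (hv l), mul_comm]
  rw [diagonalIn_eq_frameOp e hv] at hG
  have := sum_norm_inner_sq_eq_dotProduct_frameOp G b
  rw [hG, ← sum_norm_inner_sq_eq_dotProduct_frameOp] at this
  simpa only [inner_sq] using Complex.ofReal_injective this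

/-- In the sum over `e`, the weights `∑ j, ‖⟪b j, e l⟫‖ ^ 2` are at most `1` by Bessel's inequality
and add up to `n`. -/
lemma sum_sum_norm_inner_sq_le_prefixSum {n : ℕ} {b : Fin n → EuclideanSpace ℂ (Fin d)}
    (hb : Orthonormal ℂ b) (hG : frameOp G = diagonalIn e v) (hv : 0 ≤ v) (hv' : Antitone v) :
    ∑ i, ∑ j, ‖⟪b j, WithLp.toLp 2 (G i)⟫_ℂ‖ ^ 2 ≤ prefixSum v n := by
  calc ∑ i, ∑ j, ‖⟪b j, WithLp.toLp 2 (G i)⟫_ℂ‖ ^ 2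
      = ∑ l, (∑ j, ‖⟪b j, e l⟫_ℂ‖ ^ 2) * v l := by
        simp_rw [sum_mul]
        rw [sum_comm, sum_comm (s := univ (α := Fin d))]
        exact sum_congr rfl fun j _ => sum_norm_inner_sq_of_frameOp_eq hG hv (b j)
    _ ≤ prefixSum v n := by
        refine sum_mul_le_prefixSum hv' (fun l => by positivity) (fun l => ?_) ?_
        · simpa using hb.sum_inner_products_le (e l) (s := univ)
        · rw [sum_comm]
          simp [e.sum_sq_norm_inner_left, hb.1]

lemma sum_normSqVec_le_prefixSum (hG : frameOp G = diagonalIn e v) (hv : 0 ≤ v)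
    (hv' : Antitone v) (s : Finset (Fin k)) : ∑ i ∈ s, normSqVec (G i) ≤ prefixSum v #s := by
  classical
  let g (i : Fin k) : EuclideanSpace ℂ (Fin d) := WithLp.toLp 2 (G i)
  let W := Submodule.span ℂ (s.image g : Set (EuclideanSpace ℂ (Fin d)))
  let b := stdOrthonormalBasis ℂ W
  let b' (j) : EuclideanSpace ℂ (Fin d) := b j
  have parseval (i : Fin k) (hi : i ∈ s) : normSqVec (G i) = ∑ j, ‖⟪b' j, g i⟫_ℂ‖ ^ 2 := by
    have hgW : g i ∈ W := Submodule.subset_span (mem_coe.mpr (mem_image_of_mem g hi))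
    rw [normSqVec_eq_norm_sq]
    exact (b.sum_sq_norm_inner_right ⟨g i, hgW⟩).symm
  calc ∑ i ∈ s, normSqVec (G i)
      = ∑ i ∈ s, ∑ j, ‖⟪b' j, g i⟫_ℂ‖ ^ 2 := sum_congr rfl parseval
    _ ≤ ∑ i, ∑ j, ‖⟪b' j, g i⟫_ℂ‖ ^ 2 :=
      sum_le_univ_sum_of_nonneg fun i => by positivity
    _ ≤ prefixSum v (Module.finrank ℂ W) :=
      sum_sum_norm_inner_sq_le_prefixSum (b.orthonormal.comp_linearIsometry W.subtypeₗᵢ) hG hv hv'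
    _ ≤ prefixSum v #s :=
      prefixSum_mono hv ((finrank_span_finset_le_card _).trans card_image_le)

lemma self_mem_frameNorms_diagonalIn (hv : 0 ≤ v) : v ∈ frameNorms d (diagonalIn e v) := by
  refine ⟨_, (diagonalIn_eq_frameOp e hv).symm, fun i => ?_⟩
  rw [normSqVec_eq_norm_sq]
  simp [norm_smul, Real.sq_sqrt (hv i)]

/-- The **Schur–Horn theorem** for the squared norms of a frame with a given frame operator. -/
theorem mem_frameNorms_iff (hS : S.PosSemidef) {a : Fin k → ℝ} :
    a ∈ frameNorms k S ↔ eigsDesc S ∈ Gamma d a := by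
  have hv := eigsDesc_nonneg hS
  have hv' := eigsDesc_antitone hS.isHermitian
  obtain ⟨e, he⟩ := exists_eq_diagonalIn_eigsDesc hS.isHermitian
  have eigs_mem : eigsDesc S ∈ frameNorms d S := by
    simpa [← he] using self_mem_frameNorms_diagonalIn (e := e) hv
  have sum_eq_trace {n : ℕ} {c : Fin n → ℝ} (hc : c ∈ frameNorms n S) :
      ((∑ i, c i : ℝ) : ℂ) = S.trace := by
    obtain ⟨G, rfl, hGc⟩ := hc
    simp_rw [trace_frameOp, hGc]
  refine ⟨fun ha => mem_Gamma_iff.mpr ⟨hv', hv, fun s => ?_, ?_⟩,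
    fun h => h.2.2.mem_frameNorms eigs_mem⟩
  · obtain ⟨G, hG, hGa⟩ := ha
    simpa only [hGa] using sum_normSqVec_le_prefixSum (hG.trans he) hv hv' s
  · exact_mod_cast (sum_eq_trace ha).trans (sum_eq_trace eigs_mem).symm

end SchurHorn

lemma exists_posSemidef_eigsDesc_eq {d : ℕ} {S : Matrix (Fin d) (Fin d) ℂ} (hS : S.IsHermitian)
    {μ : Fin d → ℝ} (hμ : Antitone μ) (hμ₀ : 0 ≤ μ) :
    ∃ T : Matrix (Fin d) (Fin d) ℂ, T.PosSemidef ∧ eigsDesc T = μ ∧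
      eigsDesc (S + T) = sortDesc (eigsAsc S + μ) := by
  obtain ⟨e, he⟩ := exists_eq_diagonalIn_eigsAsc hS
  refine ⟨diagonalIn e μ, ?_, ?_, ?_⟩
  · exact diagonalIn_eq_frameOp e hμ₀ ▸ frameOp_posSemidef _
  · rw [eigsDesc_diagonalIn, sortDesc_eq_self_of_antitone hμ]
  · rw [← eigsDesc_diagonalIn e, diagonalIn_add, ← he]

theorem stmt_3_general {d k : ℕ} {S₀ : Matrix (Fin d) (Fin d) ℂ} (hS₀ : S₀.IsHermitian)
    (a : Fin k → ℝ) :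
    (IsCompact {ν : Fin d → ℝ | ∃ μ ∈ Gamma d a, ν = fun i => eigsAsc S₀ i + μ i} ∧
      Convex ℝ {ν : Fin d → ℝ | ∃ μ ∈ Gamma d a, ν = fun i => eigsAsc S₀ i + μ i}) ∧
    {x : Fin d → ℝ | ∃ G : Fin k → Fin d → ℂ,
        (∀ i, normSqVec (G i) = a i) ∧
        eigsDesc (S₀ + frameOp G) = sortDesc (fun i => eigsAsc S₀ i + eigsDesc (frameOp G) i) ∧
        x = eigsDesc (S₀ + frameOp G)} =
      {x : Fin d → ℝ | ∃ ν ∈ {ν : Fin d → ℝ | ∃ μ ∈ Gamma d a,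
          ν = fun i => eigsAsc S₀ i + μ i}, x = sortDesc ν} := by
  have translate : {ν : Fin d → ℝ | ∃ μ ∈ Gamma d a, ν = fun i => eigsAsc S₀ i + μ i} =
      (eigsAsc S₀ + ·) '' Gamma d a :=
    Set.ext fun ν => exists_congr fun μ => and_congr_right fun _ => eq_comm
  refine ⟨⟨?_, ?_⟩, Set.ext fun x => ⟨?_, ?_⟩⟩
  · exact translate ▸ (isCompact_Gamma a).image (by fun_prop)
  · exact translate ▸ (convex_Gamma a).translate (eigsAsc S₀)
  · rintro ⟨G, hGa, hopt, rfl⟩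
    exact ⟨_, ⟨_, (mem_frameNorms_iff (frameOp_posSemidef G)).mp ⟨G, rfl, hGa⟩, rfl⟩, hopt⟩
  · rintro ⟨_, ⟨μ, hμ, rfl⟩, rfl⟩
    obtain ⟨T, hT, rfl, hST⟩ := exists_posSemidef_eigsDesc_eq hS₀ hμ.1 hμ.2.1
    obtain ⟨G, rfl, hGa⟩ := (mem_frameNorms_iff hT).mpr hμ
    exact ⟨G, hGa, hST, hST.symm⟩

theorem stmt_3 {d n₀ k : ℕ} (F₀ : Fin n₀ → Fin d → ℂ) (a : Fin k → ℝ)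
    (ha_pos : ∀ i, 0 < a i) (ha_mono : Antitone a)
    (hk : d - (frameOp F₀).rank ≤ k) :
    (IsCompact {ν : Fin d → ℝ | ∃ μ ∈ Gamma d a, ν = fun i => eigsAsc (frameOp F₀) i + μ i} ∧
      Convex ℝ {ν : Fin d → ℝ | ∃ μ ∈ Gamma d a, ν = fun i => eigsAsc (frameOp F₀) i + μ i}) ∧
    {x : Fin d → ℝ | ∃ G : Fin k → Fin d → ℂ,
        (∀ i, normSqVec (G i) = a i) ∧
        eigsDesc (frameOp F₀ + frameOp G) =
          sortDesc (fun i => eigsAsc (frameOp F₀) i + eigsDesc (frameOp G) i) ∧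
        x = eigsDesc (frameOp F₀ + frameOp G)} =
      {x : Fin d → ℝ | ∃ ν ∈ {ν : Fin d → ℝ | ∃ μ ∈ Gamma d a,
          ν = fun i => eigsAsc (frameOp F₀) i + μ i}, x = sortDesc ν} :=
  stmt_3_general (frameOp_posSemidef F₀).isHermitian a
end
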